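/- Let d ≥ 2, let Σ ⊂ GL_d(ℝ) be a compact subset, and let μ₀, μ₁ be Borel probability measures supported in Σ. Assume supp(μ₀) = Σ and L_1(μ₀) > L_2(μ₀). Then the map t ↦ L_1((1−t)μ₀ + tμ₁) is given by a convergent power series near 0: there exist ε > 0 and real coefficients (a_k)_{k≥0} with Σ_k |a_k| ε^k < ∞ such that L_1((1−t)μ₀ + tμ₁) = Σ_{k≥0} a_k t^k for all t ∈ [0, ε). -/

import Mathlib

/-!
Let `W` be the largest almost surely invariant subspace on which products of `μ₀`-random matrices
grow at a rate strictly below `L₁(μ₀)`. Since `μ₁` is carried by the support of `μ₀`, which acts by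
maps preserving `W`, every mixture preserves `W` as well. On the quotient, realised as `Wᗮ`, every
vector grows in mean at the rate `L₁(μ₀)`, uniformly, so the gap `L₂(μ₀) < L₁(μ₀)` makes the
projective action contract on average: `E d(A x, A y) ^ α` decays geometrically for small `α > 0`.
The Markov operator of the quotient therefore has a spectral gap on Hölder functions, and the
Poisson equation for `x ↦ E log ‖A x‖` can be solved order by order in the mixing parameter `t`.
The resulting power series gives the growth rate of the mixture on the quotient. Finally, growth on
`W` stays strictly slower for small `t`, so the rate on the quotient is the rate on the whole space.
-/

open MeasureTheory Filter
open scoped LinearAlgebra.Projectivization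

noncomputable section

abbrev GLd (d : ℕ) := GL (Fin d) ℝ
abbrev Ed (d : ℕ) := EuclideanSpace ℝ (Fin d)
abbrev Pd (d : ℕ) := ℙ ℝ (Ed d)

variable {d : ℕ}

instance : MeasurableSpace (GLd d) := borel _
instance : BorelSpace (GLd d) := ⟨rfl⟩

instance : TopologicalSpace (Pd d) :=
  (instTopologicalSpaceQuotient : TopologicalSpace (Quotient (projectivizationSetoid ℝ (Ed d))))
instance : MeasurableSpace (Pd d) := borel _
instance : BorelSpace (Pd d) := ⟨rfl⟩

/-- The continuous linear map on Euclidean space induced by `g ∈ GL_d(ℝ)`. -/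
def glCLM (g : GLd d) : Ed d →L[ℝ] Ed d :=
  Matrix.toEuclideanCLM (𝕜 := ℝ) (g : Matrix (Fin d) (Fin d) ℝ)

/-- The operator norm of `g ∈ GL_d(ℝ)`. -/
def gnorm (g : GLd d) : ℝ := ‖glCLM g‖

lemma glCLM_leftInv (g : GLd d) (v : Ed d) : glCLM g⁻¹ (glCLM g v) = v := by
  have h : glCLM (d := d) g⁻¹ * glCLM g = 1 := by
    rw [glCLM, glCLM, ← map_mul]
    norm_cast
    rw [inv_mul_cancel g]
    exact map_one _
  calc glCLM g⁻¹ (glCLM g v) = (glCLM g⁻¹ * glCLM g) v := rfl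
    _ = v := by rw [h]; rfl

lemma glLinear_injective (g : GLd d) : Function.Injective (glCLM g).toLinearMap :=
  Function.LeftInverse.injective (g := (glCLM g⁻¹)) (fun v => glCLM_leftInv g v)

/-- The projective action of `g ∈ GL_d(ℝ)` on `ℙ(ℝ^d)`. -/
def pact (g : GLd d) : Pd d → Pd d :=
  Projectivization.map (glCLM g).toLinearMap (glLinear_injective g)

/-- The projective distance `δ` on `ℙ(ℝ^d)`, computed on representatives. -/
def pdelta (x y : Pd d) : ℝ :=
  Real.sqrt (‖x.rep‖ ^ 2 * ‖y.rep‖ ^ 2 - (inner ℝ x.rep y.rep : ℝ) ^ 2) /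
    (‖x.rep‖ * ‖y.rep‖)

/-- Convolution of two measures on `GL_d(ℝ)`. -/
def mconv (μ ν : Measure (GLd d)) : Measure (GLd d) :=
  (μ.prod ν).map (fun p => p.1 * p.2)

/-- `n`-fold convolution power of a measure on `GL_d(ℝ)`. -/
def mconvN (μ : Measure (GLd d)) : ℕ → Measure (GLd d)
  | 0 => Measure.dirac 1
  | n + 1 => if n = 0 then μ else mconv (mconvN μ n) μ

/-- The top Lyapunov exponent of a (compactly supported) measure on `GL_d(ℝ)`. -/
def L1 (μ : Measure (GLd d)) : ℝ :=
  limUnder atTop (fun n : ℕ => (n : ℝ)⁻¹ * ∫ g, Real.log (gnorm g) ∂(mconvN μ n))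

/-- `N₂ g = s₁(g)s₂(g)`, the product of the two largest singular values. -/
def N2 (g : GLd d) : ℝ :=
  sSup { x | ∃ p q : Ed d, ‖p‖ = 1 ∧ ‖q‖ = 1 ∧ (inner ℝ p q : ℝ) = 0 ∧
    x = Real.sqrt (‖glCLM g p‖ ^ 2 * ‖glCLM g q‖ ^ 2 -
      (inner ℝ (glCLM g p) (glCLM g q) : ℝ) ^ 2) }

/-- `L₁(μ) + L₂(μ)`. -/
def L12 (μ : Measure (GLd d)) : ℝ :=
  limUnder atTop (fun n : ℕ => (n : ℝ)⁻¹ * ∫ g, Real.log (N2 g) ∂(mconvN μ n))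

/-- The second Lyapunov exponent. -/
def L2 (μ : Measure (GLd d)) : ℝ := L12 μ - L1 μ

/-- The top Lyapunov exponent of the restriction of `μ` to an (invariant) subspace `V`. -/
def L1rest (μ : Measure (GLd d)) (V : Submodule ℝ (Ed d)) : ℝ :=
  limUnder atTop (fun n : ℕ => (n : ℝ)⁻¹ *
    ∫ g, Real.log ‖LinearMap.toContinuousLinearMap ((glCLM g).toLinearMap.domRestrict V)‖
      ∂(mconvN μ n))

/-- Quasi-irreducibility of a measure on `GL_d(ℝ)`. -/
def QuasiIrreducible (μ : Measure (GLd d)) : Prop :=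
  ¬ ∃ V : Submodule ℝ (Ed d), V ≠ ⊥ ∧ V ≠ ⊤ ∧
    (∀ᵐ g ∂μ, V.map (glCLM g).toLinearMap = V) ∧ L1rest μ V < L1 μ

/-- Irreducibility of a measure on `GL_d(ℝ)`. -/
def Irred (μ : Measure (GLd d)) : Prop :=
  ¬ ∃ V : Submodule ℝ (Ed d), V ≠ ⊥ ∧ V ≠ ⊤ ∧
    (∀ᵐ g ∂μ, V.map (glCLM g).toLinearMap = V)

/-- The Markov operator associated with a measure on `GL_d(ℝ)`. -/
def Qop (μ : Measure (GLd d)) (φ : Pd d → ℝ) : Pd d → ℝ :=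
  fun v => ∫ g, φ (pact g v) ∂μ

/-- The average `α`-Hölder constant of a measure on `GL_d(ℝ)`. -/
def kalpha (α : ℝ) (μ : Measure (GLd d)) : ℝ :=
  sSup { x | ∃ v₁ v₂ : Pd d, v₁ ≠ v₂ ∧
    x = ∫ g, (pdelta (pact g v₁) (pact g v₂) / pdelta v₁ v₂) ^ α ∂μ }

/-- The `α`-Hölder seminorm of an observable on `ℙ(ℝ^d)`. -/
def valpha (α : ℝ) (φ : Pd d → ℝ) : ℝ :=
  sSup { x | ∃ v₁ v₂ : Pd d, v₁ ≠ v₂ ∧ x = |φ v₁ - φ v₂| / pdelta v₁ v₂ ^ α }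

/-- `φ` is `α`-Hölder: `v_α(φ) < ∞`. -/
def IsHolder (α : ℝ) (φ : Pd d → ℝ) : Prop :=
  BddAbove { x | ∃ v₁ v₂ : Pd d, v₁ ≠ v₂ ∧ x = |φ v₁ - φ v₂| / pdelta v₁ v₂ ^ α }

/-- The total variation distance between two finite measures. -/
def tvDist (μ ν : Measure (GLd d)) [IsFiniteMeasure μ] [IsFiniteMeasure ν] : ℝ :=
  ((μ.toSignedMeasure - ν.toSignedMeasure).totalVariation Set.univ).toReal

/-- A measure is compactly supported. -/
def CompactlySupported (μ : Measure (GLd d)) : Prop :=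
  ∃ K : Set (GLd d), IsCompact K ∧ μ Kᶜ = 0

/-- `S` is the (topological) support of `μ`. -/
def IsSupport (μ : Measure (GLd d)) (S : Set (GLd d)) : Prop :=
  μ Sᶜ = 0 ∧ ∀ x ∈ S, ∀ U : Set (GLd d), IsOpen U → x ∈ U → 0 < μ U

/-- A measure `η` on `ℙ(ℝ^d)` is `μ`-stationary. -/
def Stationary (μ : Measure (GLd d)) (η : Measure (Pd d)) : Prop :=
  ∀ φ : Pd d → ℝ, Continuous φ → (∃ C, ∀ v, |φ v| ≤ C) →
    ∫ v, φ v ∂η = ∫ g, ∫ v, φ (pact g v) ∂η ∂μ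

open scoped ENNReal Topology

namespace RandomMatrixProduct

section ConvolutionPowers

variable {G : Type*} [Monoid G] [MeasurableSpace G]

/-- The convolution power `ν^{*n}`, the law of a product of `n` independent `ν`-distributed
factors; unlike `mconvN` it makes sense on every measurable monoid. -/
def convPow (ν : Measure G) : ℕ → Measure G
  | 0 => Measure.dirac 1
  | n + 1 => convPow ν n ∗ₘ ν

/-- `f` grows at linear rate `l` along the random walk of law `ν`: the means of `f` under
`ν^{*n}`, divided by `n`, tend to `l`. For `f = log ‖·‖` the rate is the top Lyapunov exponent. -/
def HasGrowthRate (f : G → ℝ) (ν : Measure G) (l : ℝ) : Prop :=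
  Tendsto (fun n : ℕ => (n : ℝ)⁻¹ * ∫ g, f g ∂(convPow ν n)) atTop (𝓝 l)

lemma convPow_zero (ν : Measure G) : convPow ν 0 = Measure.dirac 1 := rfl

lemma convPow_succ (ν : Measure G) (n : ℕ) : convPow ν (n + 1) = convPow ν n ∗ₘ ν := rfl

variable [MeasurableMul₂ G] (ν : Measure G)

instance isProbabilityMeasure_convPow [IsProbabilityMeasure ν] (n : ℕ) :
    IsProbabilityMeasure (convPow ν n) := by
  induction n with
  | zero => rw [convPow_zero]; infer_instance
  | succ n ih => rw [convPow_succ]; infer_instance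

lemma convPow_one [SFinite ν] : convPow ν 1 = ν := Measure.dirac_one_mconv ν

lemma convPow_add [IsProbabilityMeasure ν] (a b : ℕ) :
    convPow ν (a + b) = convPow ν a ∗ₘ convPow ν b := by
  induction b with
  | zero => exact (Measure.mconv_dirac_one _).symm
  | succ b ih => rw [← add_assoc, convPow_succ, ih, convPow_succ, Measure.mconv_assoc]

lemma ae_mem_mconv {μ ν : Measure G} [SFinite μ] [SFinite ν] {s t u : Set G}
    (hu : MeasurableSet u) (hs : ∀ᵐ x ∂μ, x ∈ s) (ht : ∀ᵐ y ∂ν, y ∈ t)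
    (h : ∀ x ∈ s, ∀ y ∈ t, x * y ∈ u) : ∀ᵐ z ∂(μ ∗ₘ ν), z ∈ u := by
  refine (ae_map_iff (p := (· ∈ u)) (by fun_prop) hu).2 ?_
  filter_upwards [Measure.quasiMeasurePreserving_fst.ae hs,
    Measure.quasiMeasurePreserving_snd.ae ht] with p hp₁ hp₂
  exact h _ hp₁ _ hp₂

variable {ν} [IsProbabilityMeasure ν] {K : Submonoid G}

lemma ae_mem_convPow (hK : MeasurableSet (K : Set G)) (hν : ∀ᵐ x ∂ν, x ∈ K) (n : ℕ) :
    ∀ᵐ x ∂(convPow ν n), x ∈ K := by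
  induction n with
  | zero => exact (ae_dirac_iff (p := (· ∈ K)) hK).2 K.one_mem
  | succ n ih => exact ae_mem_mconv (u := K) hK ih hν fun _ hx _ hy => K.mul_mem hx hy

lemma map_convPow {G' : Type*} [Monoid G'] [MeasurableSpace G'] [MeasurableMul₂ G'] {f : G → G'}
    (hf : Measurable f) (hK : MeasurableSet (K : Set G)) (hν : ∀ᵐ x ∂ν, x ∈ K) (hf_one : f 1 = 1)
    (hf_mul : ∀ x ∈ K, ∀ y ∈ K, f (x * y) = f x * f y) (n : ℕ) :
    (convPow ν n).map f = convPow (ν.map f) n := by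
  have := Measure.isProbabilityMeasure_map (μ := ν) hf.aemeasurable
  induction n with
  | zero => rw [convPow_zero, convPow_zero, Measure.map_dirac' hf, hf_one]
  | succ n ih =>
    rw [convPow_succ, convPow_succ, ← ih]
    unfold Measure.mconv
    rw [Measure.map_map hf (by fun_prop), Measure.map_prod_map _ _ hf hf,
      Measure.map_map (by fun_prop) (by fun_prop)]
    apply Measure.map_congr
    filter_upwards [Measure.quasiMeasurePreserving_fst.ae (ae_mem_convPow hK hν n),
      Measure.quasiMeasurePreserving_snd.ae hν] with p hp₁ hp₂
    exact hf_mul _ hp₁ _ hp₂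

lemma integral_convPow_add {a b : ℕ} {f : G → ℝ} (hf : Measurable f)
    (hint : Integrable f (convPow ν (a + b))) :
    ∫ g, f g ∂(convPow ν (a + b)) = ∫ h, ∫ g, f (g * h) ∂(convPow ν a) ∂(convPow ν b) := by
  rw [convPow_add] at hint ⊢
  rw [integral_mconv hint]
  have hprod : Integrable (fun p : G × G => f (p.1 * p.2)) ((convPow ν a).prod (convPow ν b)) := by
    unfold Measure.mconv at hint
    rwa [integrable_map_measure hf.aestronglyMeasurable (by fun_prop)] at hint
  exact integral_integral_swap (f := fun x y => f (x * y)) hprod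

end ConvolutionPowers

section ExponentialMoments

variable {Ω : Type*} [MeasurableSpace Ω] {P : Measure Ω} [IsProbabilityMeasure P] {Z : Ω → ℝ}
  {B α : ℝ}

lemma integrable_exp_mul (hZ : AEStronglyMeasurable Z P) (hB : ∀ᵐ ω ∂P, |Z ω| ≤ B) (α : ℝ) :
    Integrable (fun ω => Real.exp (α * Z ω)) P := by
  refine Integrable.of_bound (Real.continuous_exp.comp_aestronglyMeasurable (hZ.const_mul α))
    (Real.exp (|α| * B)) ?_
  filter_upwards [hB] with ω h
  rw [Real.norm_eq_abs, abs_of_pos (Real.exp_pos _), Real.exp_le_exp]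
  calc α * Z ω ≤ |α| * |Z ω| := (le_abs_self _).trans (abs_mul _ _).le
    _ ≤ |α| * B := by gcongr

lemma integral_exp_mul_le (hZ : AEStronglyMeasurable Z P) (hB : ∀ᵐ ω ∂P, |Z ω| ≤ B) (hα : 0 ≤ α)
    (hαB : α * B ≤ 1) :
    ∫ ω, Real.exp (α * Z ω) ∂P ≤ 1 + α * ∫ ω, Z ω ∂P + α ^ 2 * B ^ 2 := by
  have hpt : ∀ᵐ ω ∂P, Real.exp (α * Z ω) ≤ 1 + α * Z ω + α ^ 2 * B ^ 2 := by
    filter_upwards [hB] with ω h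
    have habs : |α * Z ω| ≤ α * B := by rw [abs_mul, abs_of_nonneg hα]; gcongr
    have hexp := (abs_le.1 (Real.abs_exp_sub_one_sub_id_le (habs.trans hαB))).2
    have hsq : (α * Z ω) ^ 2 ≤ (α * B) ^ 2 := sq_le_sq.2 (habs.trans (le_abs_self _))
    linarith [mul_pow α B 2]
  have hZi : Integrable Z P := Integrable.of_bound hZ B (by simpa using hB)
  have hlin : Integrable (fun ω => 1 + α * Z ω) P := (integrable_const 1).add (hZi.const_mul α)
  calc ∫ ω, Real.exp (α * Z ω) ∂P ≤ ∫ ω, (1 + α * Z ω + α ^ 2 * B ^ 2) ∂P :=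
        integral_mono_ae (integrable_exp_mul hZ hB α) (hlin.add (integrable_const _)) hpt
    _ = 1 + α * ∫ ω, Z ω ∂P + α ^ 2 * B ^ 2 := by
        rw [integral_add hlin (integrable_const _),
          integral_add (integrable_const _) (hZi.const_mul α), integral_const_mul]
        simp

lemma integral_exp_mul_le_exp (hZ : AEStronglyMeasurable Z P) (hB : ∀ᵐ ω ∂P, |Z ω| ≤ B)
    (hα : 0 ≤ α) (hαB : α * B ≤ 1) {a η : ℝ} (hmean : ∫ ω, Z ω ∂P ≤ a) (hη : α * B ^ 2 ≤ η) :
    ∫ ω, Real.exp (α * Z ω) ∂P ≤ Real.exp (α * (a + η)) := by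
  calc ∫ ω, Real.exp (α * Z ω) ∂P ≤ 1 + α * ∫ ω, Z ω ∂P + α ^ 2 * B ^ 2 :=
        integral_exp_mul_le hZ hB hα hαB
    _ ≤ 1 + α * a + α * η := by
        have hsecond := mul_le_mul_of_nonneg_left hη hα
        have hfirst := mul_le_mul_of_nonneg_left hmean hα
        linarith
    _ ≤ Real.exp (α * (a + η)) := by linarith [Real.add_one_le_exp (α * (a + η))]

lemma exists_small_exponent {B η : ℝ} (hη : 0 < η) :
    ∃ α : ℝ, 0 < α ∧ α ≤ 1 ∧ α * B ≤ 1 ∧ α * B ^ 2 ≤ η := by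
  have hsmall : ∀ᶠ α : ℝ in 𝓝[>] 0, α ≤ 1 ∧ α * B ≤ 1 ∧ α * B ^ 2 ≤ η := by
    have key (c b : ℝ) (hb : 0 < b) : ∀ᶠ α : ℝ in 𝓝[>] 0, α * c ≤ b := by
      have : Tendsto (fun α : ℝ => α * c) (𝓝[>] 0) (𝓝 (0 * c)) :=
        (tendsto_nhdsWithin_of_tendsto_nhds tendsto_id).mul_const c
      exact this.eventually_le_const (by simpa using hb)
    filter_upwards [key 1 1 one_pos, key B 1 one_pos, key (B ^ 2) η hη] with α h₁ h₂ h₃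
    exact ⟨by simpa using h₁, h₂, h₃⟩
  obtain ⟨α, h, hα⟩ := (hsmall.and self_mem_nhdsWithin).exists
  exact ⟨α, hα, h⟩

end ExponentialMoments

section BilipschitzLaws

variable {V : Type*} [NormedAddCommGroup V] [NormedSpace ℝ V] {m M : ℝ}

/-- The operators that distort norms by a factor between `m` and `M`. A compact set of invertible
operators lies in such a class, and this is how compactness enters the argument. -/
def bilipschitz (V : Type*) [NormedAddCommGroup V] [NormedSpace ℝ V] (m M : ℝ) :
    Set (V →L[ℝ] V) :=
  {A | ∀ v, m * ‖v‖ ≤ ‖A v‖ ∧ ‖A v‖ ≤ M * ‖v‖}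

lemma isClosed_bilipschitz : IsClosed (bilipschitz V m M) := by
  have : bilipschitz V m M = ⋂ v, ({A | m * ‖v‖ ≤ ‖A v‖} ∩ {A | ‖A v‖ ≤ M * ‖v‖}) := by
    ext A; simp [bilipschitz]
  rw [this]
  exact isClosed_iInter fun v =>
    (isClosed_le (by fun_prop) (by fun_prop)).inter (isClosed_le (by fun_prop) (by fun_prop))

lemma one_mem_bilipschitz : (1 : V →L[ℝ] V) ∈ bilipschitz V 1 1 := fun v => by simp

lemma mul_mem_bilipschitz {m' M' : ℝ} (hm : 0 ≤ m) (hM : 0 ≤ M) {A B : V →L[ℝ] V}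
    (hA : A ∈ bilipschitz V m M) (hB : B ∈ bilipschitz V m' M') :
    A * B ∈ bilipschitz V (m * m') (M * M') := fun v =>
  ⟨calc m * m' * ‖v‖ = m * (m' * ‖v‖) := mul_assoc _ _ _
      _ ≤ m * ‖B v‖ := mul_le_mul_of_nonneg_left (hB v).1 hm
      _ ≤ ‖A (B v)‖ := (hA (B v)).1,
    calc ‖A (B v)‖ ≤ M * ‖B v‖ := (hA (B v)).2
      _ ≤ M * (M' * ‖v‖) := mul_le_mul_of_nonneg_left (hB v).2 hM
      _ = M * M' * ‖v‖ := (mul_assoc _ _ _).symm⟩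

lemma apply_ne_zero_of_mem_bilipschitz (hm : 0 < m) {A : V →L[ℝ] V} (hA : A ∈ bilipschitz V m M)
    {v : V} (hv : v ≠ 0) : A v ≠ 0 :=
  norm_pos_iff.1 ((mul_pos hm (norm_pos_iff.2 hv)).trans_le (hA v).1)

lemma log_norm_apply_mem_Icc (hm : 0 < m) {A : V →L[ℝ] V} (hA : A ∈ bilipschitz V m M) {v : V}
    (hv : v ≠ 0) :
    Real.log ‖A v‖ ∈ Set.Icc (Real.log m + Real.log ‖v‖) (Real.log M + Real.log ‖v‖) := by
  have hv' := norm_pos_iff.2 hv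
  have hAv := norm_pos_iff.2 (apply_ne_zero_of_mem_bilipschitz hm hA hv)
  have hM : 0 < M := pos_of_mul_pos_left (hAv.trans_le (hA v).2) hv'.le
  rw [← Real.log_mul hm.ne' hv'.ne', ← Real.log_mul hM.ne' hv'.ne']
  exact ⟨Real.log_le_log (by positivity) (hA v).1, Real.log_le_log hAv (hA v).2⟩

lemma abs_log_norm_apply_le (hm : 0 < m) {A : V →L[ℝ] V} (hA : A ∈ bilipschitz V m M) {v : V}
    (hv : v ≠ 0) :
    |Real.log ‖A v‖| ≤ |Real.log m| + |Real.log M| + |Real.log ‖v‖| := by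
  obtain ⟨hlow, hup⟩ := log_norm_apply_mem_Icc hm hA hv
  rw [abs_le]
  constructor
  · linarith [neg_abs_le (Real.log m), neg_abs_le (Real.log ‖v‖), abs_nonneg (Real.log M)]
  · linarith [le_abs_self (Real.log M), le_abs_self (Real.log ‖v‖), abs_nonneg (Real.log m)]

lemma norm_inv_norm_smul {v : V} (hv : v ≠ 0) : ‖‖v‖⁻¹ • v‖ = 1 := by
  rw [norm_smul, norm_inv, norm_norm, inv_mul_cancel₀ (norm_ne_zero_iff.2 hv)]

lemma measurable_log_norm_apply (v : V) : Measurable fun A : V →L[ℝ] V => Real.log ‖A v‖ :=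
  Real.measurable_log.comp (by fun_prop : Continuous fun A : V →L[ℝ] V => ‖A v‖).measurable

/-- Probability laws carried by the operators of distortion between `m` and `M`, with the
normalisation `m ≤ 1 ≤ M` under which the constants `m ^ n`, `M ^ n` of the convolution powers
are monotone in `n`. -/
structure IsBilipschitzLaw (ν : Measure (V →L[ℝ] V)) (m M : ℝ) : Prop where
  prob : IsProbabilityMeasure ν
  pos : 0 < m
  le_one : m ≤ 1
  one_le : 1 ≤ M
  ae_mem : ∀ᵐ A ∂ν, A ∈ bilipschitz V m M

namespace IsBilipschitzLaw

variable {ν : Measure (V →L[ℝ] V)}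

lemma pos' (h : IsBilipschitzLaw ν m M) : 0 < M := one_pos.trans_le h.one_le

lemma integrable (h : IsBilipschitzLaw ν m M) {f : (V →L[ℝ] V) → ℝ} (hf : Measurable f) {C : ℝ}
    (hC : ∀ A ∈ bilipschitz V m M, |f A| ≤ C) : Integrable f ν := by
  have := h.prob
  exact Integrable.of_bound hf.aestronglyMeasurable C (h.ae_mem.mono hC)

lemma integrable_log_norm_apply (h : IsBilipschitzLaw ν m M) {v : V} (hv : v ≠ 0) :
    Integrable (fun A => Real.log ‖A v‖) ν :=
  h.integrable (measurable_log_norm_apply v) fun _ hA => abs_log_norm_apply_le h.pos hA hv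

lemma convPow [FiniteDimensional ℝ V] (h : IsBilipschitzLaw ν m M) (n : ℕ) :
    IsBilipschitzLaw (convPow ν n) (m ^ n) (M ^ n) := by
  have := h.prob
  refine ⟨inferInstance, pow_pos h.pos n, pow_le_one₀ h.pos.le h.le_one, one_le_pow₀ h.one_le, ?_⟩
  induction n with
  | zero =>
    refine (ae_dirac_iff (p := (· ∈ bilipschitz V (m ^ 0) (M ^ 0)))
      isClosed_bilipschitz.measurableSet).2 ?_
    simpa only [pow_zero] using one_mem_bilipschitz
  | succ n ih =>
    exact ae_mem_mconv isClosed_bilipschitz.measurableSet ih h.ae_mem fun x hx y hy =>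
      mul_mem_bilipschitz (pow_nonneg h.pos.le n) (pow_nonneg h.pos'.le n) hx hy

end IsBilipschitzLaw

end BilipschitzLaws

section MeanLog

variable {V : Type*} [NormedAddCommGroup V] [NormedSpace ℝ V] {ν : Measure (V →L[ℝ] V)} {m M : ℝ}

/-- The mean of `log ‖A v‖` over a product `A` of `n` independent factors of law `ν`. -/
def meanLog (ν : Measure (V →L[ℝ] V)) (n : ℕ) (v : V) : ℝ := ∫ A, Real.log ‖A v‖ ∂(convPow ν n)

lemma meanLog_zero (v : V) : meanLog ν 0 v = Real.log ‖v‖ := by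
  rw [meanLog, convPow_zero, integral_dirac, one_apply_eq_self]

variable [FiniteDimensional ℝ V]

lemma meanLog_add (h : IsBilipschitzLaw ν m M) (a b : ℕ) {v : V} (hv : v ≠ 0) :
    meanLog ν (a + b) v = ∫ B, meanLog ν a (B v) ∂(convPow ν b) := by
  have := h.prob
  exact integral_convPow_add (measurable_log_norm_apply v)
    ((h.convPow (a + b)).integrable_log_norm_apply hv)

lemma meanLog_mem_Icc (h : IsBilipschitzLaw ν m M) (n : ℕ) {v : V} (hv : v ≠ 0) :
    meanLog ν n v ∈
      Set.Icc (n * Real.log m + Real.log ‖v‖) (n * Real.log M + Real.log ‖v‖) := by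
  have hn := h.convPow n
  have := hn.prob
  have hbounds : ∀ᵐ A ∂(convPow ν n), Real.log ‖A v‖ ∈
      Set.Icc (n * Real.log m + Real.log ‖v‖) (n * Real.log M + Real.log ‖v‖) := by
    filter_upwards [hn.ae_mem] with A hA
    simpa only [Real.log_pow] using log_norm_apply_mem_Icc hn.pos hA hv
  exact (convex_Icc _ _).integral_mem isClosed_Icc hbounds (hn.integrable_log_norm_apply hv)

lemma meanLog_smul (h : IsBilipschitzLaw ν m M) (n : ℕ) {v : V} (hv : v ≠ 0) {c : ℝ} (hc : c ≠ 0) :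
    meanLog ν n (c • v) = Real.log |c| + meanLog ν n v := by
  have hn := h.convPow n
  have := hn.prob
  have hpt : ∀ᵐ A ∂(convPow ν n), Real.log ‖A (c • v)‖ = Real.log |c| + Real.log ‖A v‖ := by
    filter_upwards [hn.ae_mem] with A hA
    rw [map_smul, norm_smul, Real.norm_eq_abs, Real.log_mul (abs_ne_zero.2 hc)
      (norm_ne_zero_iff.2 (apply_ne_zero_of_mem_bilipschitz hn.pos hA hv))]
  rw [meanLog, integral_congr_ae hpt, integral_add (integrable_const _)
    (hn.integrable_log_norm_apply hv), meanLog]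
  simp

lemma meanLog_eq_log_norm_add (h : IsBilipschitzLaw ν m M) (n : ℕ) {v : V} (hv : v ≠ 0) :
    meanLog ν n v = Real.log ‖v‖ + meanLog ν n (‖v‖⁻¹ • v) := by
  have hv' := norm_ne_zero_iff.2 hv
  rw [meanLog_smul h n hv (inv_ne_zero hv'), abs_of_nonneg (by positivity), Real.log_inv]
  ring

lemma continuousAt_meanLog (h : IsBilipschitzLaw ν m M) (n : ℕ) {v : V} (hv : v ≠ 0) :
    ContinuousAt (meanLog ν n) v := by
  have hn := h.convPow n
  have := hn.prob
  have hlog : ContinuousAt (fun w : V => Real.log ‖w‖) v :=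
    (Real.continuousAt_log (norm_ne_zero_iff.2 hv)).comp (by fun_prop)
  have hlt : ∀ᶠ w in 𝓝 v, |Real.log ‖w‖| < |Real.log ‖v‖| + 1 :=
    hlog.abs.eventually (gt_mem_nhds (by linarith))
  refine continuousAt_of_dominated (F := fun w (A : V →L[ℝ] V) => Real.log ‖A w‖)
    (bound := fun _ => |Real.log (m ^ n)| + |Real.log (M ^ n)| + (|Real.log ‖v‖| + 1))
    (Eventually.of_forall fun w => (measurable_log_norm_apply w).aestronglyMeasurable) ?_
    (integrable_const _) ?_
  · filter_upwards [hlt, isOpen_ne.mem_nhds hv] with w hw hw0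
    filter_upwards [hn.ae_mem] with A hA
    rw [Real.norm_eq_abs]
    linarith [abs_log_norm_apply_le hn.pos hA hw0]
  · filter_upwards [hn.ae_mem] with A hA
    exact ContinuousAt.log (by fun_prop)
      (norm_ne_zero_iff.2 (apply_ne_zero_of_mem_bilipschitz hn.pos hA hv))

lemma exists_uniform_renewal (h : IsBilipschitzLaw ν m M) {β : ℝ}
    (hfast : ∀ v : V, ‖v‖ = 1 → ∃ k : ℕ, k * β < meanLog ν k v) :
    ∃ (N : ℕ) (b : ℝ), β < b ∧
      ∀ v : V, ‖v‖ = 1 → ∃ k : ℕ, 1 ≤ k ∧ k ≤ N ∧ k * b ≤ meanLog ν k v := by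
  suffices ∃ (N : ℕ) (b : ℝ), β < b ∧ ∀ v ∈ Metric.sphere (0 : V) 1,
      ∃ k : ℕ, 1 ≤ k ∧ k ≤ N ∧ k * b ≤ meanLog ν k v by simpa using this
  refine (isCompact_sphere (0 : V) 1).induction_on (p := fun s => ∃ (N : ℕ) (b : ℝ), β < b ∧
    ∀ v ∈ s, ∃ k : ℕ, 1 ≤ k ∧ k ≤ N ∧ k * b ≤ meanLog ν k v) ⟨0, β + 1, by simp⟩ ?_ ?_ ?_
  · rintro s t hst ⟨N, b, hb, ht⟩
    exact ⟨N, b, hb, fun v hv => ht v (hst hv)⟩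
  · rintro s t ⟨N, b, hb, hs⟩ ⟨N', b', hb', ht⟩
    refine ⟨max N N', min b b', lt_min hb hb', ?_⟩
    rintro v (hv | hv)
    · obtain ⟨k, hk, hkN, hkb⟩ := hs v hv
      exact ⟨k, hk, le_max_of_le_left hkN, le_trans (by gcongr; exact min_le_left b b') hkb⟩
    · obtain ⟨k, hk, hkN, hkb⟩ := ht v hv
      exact ⟨k, hk, le_max_of_le_right hkN, le_trans (by gcongr; exact min_le_right b b') hkb⟩
  · intro v hv
    rw [mem_sphere_zero_iff_norm] at hv
    obtain ⟨k, hk⟩ := hfast v hv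
    have hv0 : v ≠ 0 := norm_ne_zero_iff.1 (by simp [hv])
    have hk₀ : 0 < k := Nat.pos_of_ne_zero fun h0 => by simp [h0, meanLog_zero, hv] at hk
    obtain ⟨b, hβb, hb⟩ := exists_between ((lt_div_iff₀' (Nat.cast_pos.2 hk₀)).2 hk)
    rw [lt_div_iff₀' (Nat.cast_pos.2 hk₀)] at hb
    refine ⟨_, mem_nhdsWithin_of_mem_nhds ((continuousAt_meanLog h k hv0).eventually
      (lt_mem_nhds hb)), k, b, hβb, fun w hw => ⟨k, hk₀, le_rfl, le_of_lt hw⟩⟩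

variable [MeasurableSpace V] [BorelSpace V]

lemma measurable_meanLog (h : IsBilipschitzLaw ν m M) (n : ℕ) : Measurable (meanLog ν n) :=
  measurable_of_continuousOn_compl_singleton 0 fun _ hv =>
    (continuousAt_meanLog h n hv).continuousWithinAt

lemma integrable_meanLog_apply (h : IsBilipschitzLaw ν m M) (a b : ℕ) {v : V} (hv : v ≠ 0) :
    Integrable (fun B => meanLog ν a (B v)) (convPow ν b) := by
  have hb := h.convPow b
  refine hb.integrable ((measurable_meanLog h a).comp
    (by fun_prop : Continuous fun B : V →L[ℝ] V => B v).measurable)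
    (C := |a * Real.log m| + |a * Real.log M| +
      (|Real.log (m ^ b)| + |Real.log (M ^ b)| + |Real.log ‖v‖|)) fun B hB => ?_
  obtain ⟨hlow, hup⟩ := meanLog_mem_Icc h a (apply_ne_zero_of_mem_bilipschitz hb.pos hB hv)
  obtain ⟨hlow', hup'⟩ := abs_le.1 (abs_log_norm_apply_le hb.pos hB hv)
  rw [abs_le]
  constructor
  · linarith [neg_abs_le (a * Real.log m), abs_nonneg (a * Real.log M)]
  · linarith [le_abs_self (a * Real.log M), abs_nonneg (a * Real.log m)]

lemma add_meanLog_le_meanLog_add (h : IsBilipschitzLaw ν m M) {a : ℕ} {c : ℝ}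
    (hc : ∀ u : V, ‖u‖ = 1 → c ≤ meanLog ν a u) (b : ℕ) {v : V} (hv : v ≠ 0) :
    c + meanLog ν b v ≤ meanLog ν (a + b) v := by
  have hb := h.convPow b
  have := hb.prob
  have hlog := hb.integrable_log_norm_apply hv
  calc c + meanLog ν b v = ∫ B, (c + Real.log ‖B v‖) ∂(convPow ν b) := by
        rw [integral_add (integrable_const _) hlog, meanLog]; simp
    _ ≤ ∫ B, meanLog ν a (B v) ∂(convPow ν b) := by
        refine integral_mono_ae ((integrable_const _).add hlog)
          (integrable_meanLog_apply h a b hv) ?_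
        filter_upwards [hb.ae_mem] with B hB
        have hBv := apply_ne_zero_of_mem_bilipschitz hb.pos hB hv
        rw [meanLog_eq_log_norm_add h a hBv]
        linarith [hc _ (norm_inv_norm_smul hBv)]
    _ = meanLog ν (a + b) v := (meanLog_add h a b hv).symm

/-- Cut a long product at successive times at which the mean growth exceeds `b` per step. -/
lemma sub_le_meanLog_of_renewal (h : IsBilipschitzLaw ν m M) {N : ℕ} {b : ℝ}
    (hstep : ∀ v : V, ‖v‖ = 1 → ∃ k : ℕ, 1 ≤ k ∧ k ≤ N ∧ k * b ≤ meanLog ν k v) (n : ℕ) :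
    ∀ v : V, ‖v‖ = 1 → n * b - N * (|Real.log m| + |b|) ≤ meanLog ν n v := by
  induction n using Nat.strong_induction_on with
  | _ n ih =>
  intro v hv
  have hv0 : v ≠ 0 := norm_ne_zero_iff.1 (by simp [hv])
  rcases lt_or_ge n N with hn | hn
  · have hlow := (meanLog_mem_Icc h n hv0).1
    rw [hv, Real.log_one, add_zero] at hlow
    have hnN : (n : ℝ) ≤ N := by exact_mod_cast hn.le
    have hb : n * b ≤ N * |b| :=
      calc n * b ≤ n * |b| := by gcongr; exact le_abs_self b
        _ ≤ N * |b| := by gcongr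
    have hm : N * -|Real.log m| ≤ n * Real.log m :=
      calc N * -|Real.log m| ≤ n * -|Real.log m| :=
            mul_le_mul_of_nonpos_right hnN (neg_nonpos.2 (abs_nonneg _))
        _ ≤ n * Real.log m := by gcongr; exact neg_abs_le _
    linarith
  · obtain ⟨k, hk₁, hkN, hk⟩ := hstep v hv
    have hsplit := add_meanLog_le_meanLog_add h (ih (n - k) (by omega)) k hv0
    rw [Nat.sub_add_cancel (hkN.trans hn), Nat.cast_sub (hkN.trans hn)] at hsplit
    linarith

lemma exists_forall_meanLog_le (h : IsBilipschitzLaw ν m M) {β : ℝ}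
    (hslow : ∀ n : ℕ, 1 ≤ n → ∃ v : V, ‖v‖ = 1 ∧ meanLog ν n v ≤ n * β) :
    ∃ v : V, ‖v‖ = 1 ∧ ∀ k : ℕ, meanLog ν k v ≤ k * β := by
  by_contra! hfast
  obtain ⟨N, b, hβb, hstep⟩ := exists_uniform_renewal h hfast
  obtain ⟨n, hn⟩ := exists_nat_gt (N * (|Real.log m| + |b|) / (b - β))
  rw [div_lt_iff₀ (sub_pos.2 hβb)] at hn
  obtain ⟨v, hv, hvn⟩ := hslow (n + 1) n.succ_pos
  have hgrowth := sub_le_meanLog_of_renewal h hstep (n + 1) v hv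
  push_cast at hvn hgrowth
  linarith

end MeanLog

section NormMoments

variable {V : Type*} [NormedAddCommGroup V] [NormedSpace ℝ V] {ν : Measure (V →L[ℝ] V)} {m M : ℝ}

/-- The mean of `‖A v‖ ^ s` over a product `A` of `k` independent factors of law `ν`. -/
def normMoment (ν : Measure (V →L[ℝ] V)) (s : ℝ) (k : ℕ) (v : V) : ℝ :=
  ∫ A, ‖A v‖ ^ s ∂(convPow ν k)

lemma normMoment_nonneg (s : ℝ) (k : ℕ) (v : V) : 0 ≤ normMoment ν s k v :=
  integral_nonneg fun _ => Real.rpow_nonneg (norm_nonneg _) _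

lemma normMoment_zero (s : ℝ) (v : V) : normMoment ν s 0 v = ‖v‖ ^ s := by
  rw [normMoment, convPow_zero, integral_dirac, one_apply_eq_self]

lemma normMoment_smul (s : ℝ) (k : ℕ) (c : ℝ) (v : V) :
    normMoment ν s k (c • v) = |c| ^ s * normMoment ν s k v := by
  simp only [normMoment, map_smul, norm_smul, Real.norm_eq_abs,
    Real.mul_rpow (abs_nonneg c) (norm_nonneg _), integral_const_mul]

lemma normMoment_eq_mul {v : V} (hv : v ≠ 0) (s : ℝ) (k : ℕ) :
    normMoment ν s k v = normMoment ν s k (‖v‖⁻¹ • v) * ‖v‖ ^ s := by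
  have hv' := norm_pos_iff.2 hv
  rw [normMoment_smul, abs_of_nonneg (by positivity), Real.inv_rpow hv'.le]
  have := Real.rpow_pos_of_pos hv' s
  field_simp

lemma rpow_norm_apply_eq_exp (hm : 0 < m) {A : V →L[ℝ] V} (hA : A ∈ bilipschitz V m M) {v : V}
    (hv : v ≠ 0) (s : ℝ) : ‖A v‖ ^ s = Real.exp (s * Real.log ‖A v‖) := by
  rw [Real.rpow_def_of_pos (norm_pos_iff.2 (apply_ne_zero_of_mem_bilipschitz hm hA hv)), mul_comm]

lemma IsBilipschitzLaw.integrable_rpow_norm_apply (h : IsBilipschitzLaw ν m M) (s : ℝ) (v : V) :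
    Integrable (fun A : V →L[ℝ] V => ‖A v‖ ^ s) ν := by
  have := h.prob
  rcases eq_or_ne v 0 with rfl | hv
  · simp
  · have hlog : ∀ᵐ A ∂ν, |Real.log ‖A v‖| ≤ |Real.log m| + |Real.log M| + |Real.log ‖v‖| :=
      h.ae_mem.mono fun A hA => abs_log_norm_apply_le h.pos hA hv
    refine (integrable_exp_mul (measurable_log_norm_apply v).aestronglyMeasurable hlog s).congr ?_
    filter_upwards [h.ae_mem] with A hA using (rpow_norm_apply_eq_exp h.pos hA hv s).symm

lemma rpow_norm_apply_le (hm : 0 < m) (hM : 0 < M) {A : V →L[ℝ] V} (hA : A ∈ bilipschitz V m M)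
    {v : V} (hv : v ≠ 0) (s : ℝ) : ‖A v‖ ^ s ≤ (m ^ s + M ^ s) * ‖v‖ ^ s := by
  have hv' := norm_pos_iff.2 hv
  have hms := Real.rpow_pos_of_pos hm s
  have hMs := Real.rpow_pos_of_pos hM s
  rcases le_total 0 s with hs | hs
  · calc ‖A v‖ ^ s ≤ (M * ‖v‖) ^ s := Real.rpow_le_rpow (norm_nonneg _) (hA v).2 hs
      _ = M ^ s * ‖v‖ ^ s := Real.mul_rpow hM.le hv'.le
      _ ≤ (m ^ s + M ^ s) * ‖v‖ ^ s := by gcongr; linarith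
  · calc ‖A v‖ ^ s ≤ (m * ‖v‖) ^ s :=
          Real.rpow_le_rpow_of_nonpos (by positivity) (hA v).1 hs
      _ = m ^ s * ‖v‖ ^ s := Real.mul_rpow hm.le hv'.le
      _ ≤ (m ^ s + M ^ s) * ‖v‖ ^ s := by gcongr; linarith

variable [FiniteDimensional ℝ V]

lemma normMoment_le_mul_rpow_norm (h : IsBilipschitzLaw ν m M) (s : ℝ) (k : ℕ) {v : V}
    (hv : v ≠ 0) :
    normMoment ν s k v ≤ ((m ^ k) ^ s + (M ^ k) ^ s) * ‖v‖ ^ s := by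
  have hk := h.convPow k
  have := hk.prob
  calc normMoment ν s k v ≤ ∫ _, ((m ^ k) ^ s + (M ^ k) ^ s) * ‖v‖ ^ s ∂(convPow ν k) :=
        integral_mono_ae (hk.integrable_rpow_norm_apply s v) (integrable_const _)
          (hk.ae_mem.mono fun A hA => rpow_norm_apply_le hk.pos hk.pos' hA hv s)
    _ = _ := by simp

lemma normMoment_add (h : IsBilipschitzLaw ν m M) (s : ℝ) (a b : ℕ) (v : V) :
    normMoment ν s (a + b) v = ∫ B, normMoment ν s a (B v) ∂(convPow ν b) := by
  have := h.prob
  exact integral_convPow_add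
    ((by fun_prop : Continuous fun A : V →L[ℝ] V => ‖A v‖).measurable.pow_const s)
    ((h.convPow (a + b)).integrable_rpow_norm_apply s v)

lemma normMoment_add_le (h : IsBilipschitzLaw ν m M) {s K : ℝ} {a : ℕ}
    (hK : ∀ v : V, v ≠ 0 → normMoment ν s a v ≤ K * ‖v‖ ^ s) (b : ℕ) {v : V} (hv : v ≠ 0) :
    normMoment ν s (a + b) v ≤ K * normMoment ν s b v := by
  have hb := h.convPow b
  rw [normMoment_add h, normMoment, ← integral_const_mul]
  refine integral_mono_of_nonneg (Eventually.of_forall fun B => normMoment_nonneg _ _ _)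
    ((hb.integrable_rpow_norm_apply s v).const_mul K) ?_
  filter_upwards [hb.ae_mem] with B hB
  exact hK _ (apply_ne_zero_of_mem_bilipschitz hb.pos hB hv)

lemma exists_normMoment_le_of_block (h : IsBilipschitzLaw ν m M) {n : ℕ} (hn : 1 ≤ n) {s c : ℝ}
    (hblock : ∀ v : V, v ≠ 0 → normMoment ν s n v ≤ Real.exp (c * n) * ‖v‖ ^ s) :
    ∃ C, ∀ (k : ℕ) (v : V), v ≠ 0 → normMoment ν s k v ≤ C * Real.exp (c * k) * ‖v‖ ^ s := by
  let K : ℕ → ℝ := fun k => ((m ^ k) ^ s + (M ^ k) ^ s) * Real.exp (-(c * k))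
  have hmpos := h.pos
  have hMpos := h.pos'
  have hK (k : ℕ) : 0 < K k := by positivity
  refine ⟨∑ k ∈ Finset.range n, K k, fun k => ?_⟩
  induction k using Nat.strong_induction_on with
  | _ k ih =>
  intro v hv
  rcases lt_or_ge k n with hk | hk
  · have hKk : K k ≤ ∑ k ∈ Finset.range n, K k :=
      Finset.single_le_sum (fun j _ => (hK j).le) (Finset.mem_range.2 hk)
    calc normMoment ν s k v ≤ ((m ^ k) ^ s + (M ^ k) ^ s) * ‖v‖ ^ s :=
          normMoment_le_mul_rpow_norm h s k hv
      _ = K k * Real.exp (c * k) * ‖v‖ ^ s := by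
          rw [mul_assoc _ (Real.exp _) (Real.exp _), ← Real.exp_add]; simp
      _ ≤ _ := by gcongr
  · have hsplit := normMoment_add_le h (ih (k - n) (by omega)) n hv
    rw [Nat.sub_add_cancel hk] at hsplit
    have hC : 0 ≤ ∑ k ∈ Finset.range n, K k := Finset.sum_nonneg fun j _ => (hK j).le
    calc normMoment ν s k v ≤ _ := hsplit
      _ ≤ (∑ k ∈ Finset.range n, K k) * Real.exp (c * (k - n : ℕ)) *
          (Real.exp (c * n) * ‖v‖ ^ s) := by gcongr; exact hblock v hv
      _ = (∑ k ∈ Finset.range n, K k) * Real.exp (c * k) * ‖v‖ ^ s := by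
          have hexp : Real.exp (c * k) = Real.exp (c * (k - n : ℕ)) * Real.exp (c * n) := by
            rw [← Real.exp_add, Nat.cast_sub hk]; ring_nf
          rw [hexp]; ring

lemma exists_neg_normMoment_le (h : IsBilipschitzLaw ν m M) {n : ℕ} (hn : 1 ≤ n) {c c₀ : ℝ}
    (hc : c < c₀) (hlow : ∀ v : V, ‖v‖ = 1 → n * c₀ ≤ meanLog ν n v) :
    ∃ α C : ℝ, 0 < α ∧ ∀ (k : ℕ) (v : V), v ≠ 0 →
      normMoment ν (-α) k v ≤ C * Real.exp (-α * c * k) * ‖v‖ ^ (-α) := by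
  have hn₀ : (0 : ℝ) < n := by exact_mod_cast hn
  have hg := h.convPow n
  have := hg.prob
  obtain ⟨α, hα, -, hαB, hαη⟩ := exists_small_exponent
    (B := |Real.log (m ^ n)| + |Real.log (M ^ n)|) (mul_pos hn₀ (sub_pos.2 hc))
  have hunit (u : V) (hu : ‖u‖ = 1) : normMoment ν (-α) n u ≤ Real.exp (-α * c * n) := by
    have hu0 : u ≠ 0 := norm_ne_zero_iff.1 (by simp [hu])
    have hmean : ∫ A, -Real.log ‖A u‖ ∂(convPow ν n) ≤ -(n * c₀) := by
      rw [integral_neg]; exact neg_le_neg (hlow u hu)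
    have hbound : ∀ᵐ A ∂(convPow ν n),
        |-Real.log ‖A u‖| ≤ |Real.log (m ^ n)| + |Real.log (M ^ n)| := by
      filter_upwards [hg.ae_mem] with A hA
      simpa [abs_neg, hu] using abs_log_norm_apply_le hg.pos hA hu0
    calc normMoment ν (-α) n u = ∫ A, Real.exp (α * -Real.log ‖A u‖) ∂(convPow ν n) := by
          refine integral_congr_ae ?_
          filter_upwards [hg.ae_mem] with A hA
          rw [rpow_norm_apply_eq_exp hg.pos hA hu0, neg_mul_comm]
      _ ≤ Real.exp (α * (-(n * c₀) + n * (c₀ - c))) :=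
          integral_exp_mul_le_exp (measurable_log_norm_apply u).neg.aestronglyMeasurable hbound
            hα.le hαB hmean hαη
      _ = Real.exp (-α * c * n) := by ring_nf
  obtain ⟨C, hC⟩ := exists_normMoment_le_of_block h hn (s := -α) (c := -α * c) fun v hv => by
    rw [normMoment_eq_mul hv]
    gcongr
    exact hunit _ (norm_inv_norm_smul hv)
  exact ⟨α, C, hα, hC⟩

end NormMoments

section MeanExcess

variable {V : Type*} [NormedAddCommGroup V] [NormedSpace ℝ V] {ν : Measure (V →L[ℝ] V)} {m M : ℝ}

/-- The mean excess of `log ‖A w‖` over `k β`, for a product `A` of `k` independent factors of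
law `ν`; extended-valued so that series of excesses need no summability proofs. -/
def meanExcess (ν : Measure (V →L[ℝ] V)) (β : ℝ) (k : ℕ) (w : V) : ℝ≥0∞ :=
  ∫⁻ A, ENNReal.ofReal (Real.posLog (Real.exp (-(k * β)) * ‖A w‖)) ∂(convPow ν k)

lemma measurable_posLog_mul_norm_apply (a : ℝ) (w : V) :
    Measurable fun A : V →L[ℝ] V => Real.posLog (a * ‖A w‖) :=
  (Real.continuous_posLog.comp (by fun_prop)).measurable

lemma IsBilipschitzLaw.integrable_posLog_mul_norm_apply (h : IsBilipschitzLaw ν m M) {a : ℝ}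
    (ha : 0 ≤ a) (w : V) : Integrable (fun A => Real.posLog (a * ‖A w‖)) ν := by
  refine h.integrable (measurable_posLog_mul_norm_apply a w) (C := Real.posLog (a * (M * ‖w‖)))
    fun A hA => ?_
  rw [abs_of_nonneg Real.posLog_nonneg]
  exact Real.posLog_le_posLog (by positivity) (mul_le_mul_of_nonneg_left (hA w).2 ha)

lemma posLog_exp_mul_le {α e x : ℝ} (hα : 0 < α) (he : 0 ≤ e) {y : ℝ} (hy : 0 < y) :
    Real.posLog (Real.exp (-x) * y) ≤
      Real.log y + (e - x) + α⁻¹ * Real.exp (α * (x - e)) * y ^ (-α) := by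
  have hexp : Real.exp (α * (x - e)) * y ^ (-α) = Real.exp (-α * (Real.log y + (e - x))) := by
    rw [Real.rpow_def_of_pos hy, ← Real.exp_add]; ring_nf
  have hlin : -(Real.log y + (e - x)) ≤ α⁻¹ * Real.exp (-α * (Real.log y + (e - x))) := by
    rw [le_inv_mul_iff₀ hα]
    linarith [Real.add_one_le_exp (-α * (Real.log y + (e - x)))]
  have hpos : 0 < α⁻¹ * Real.exp (-α * (Real.log y + (e - x))) := by positivity
  rw [Real.posLog_apply, Real.log_mul (Real.exp_pos _).ne' hy.ne', Real.log_exp, mul_assoc, hexp]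
  exact max_le (by linarith) (by linarith)

variable [FiniteDimensional ℝ V]

lemma meanExcess_eq_ofReal (h : IsBilipschitzLaw ν m M) (β : ℝ) (k : ℕ) (w : V) :
    meanExcess ν β k w =
      ENNReal.ofReal (∫ A, Real.posLog (Real.exp (-(k * β)) * ‖A w‖) ∂(convPow ν k)) :=
  (ofReal_integral_eq_lintegral_ofReal
    ((h.convPow k).integrable_posLog_mul_norm_apply (Real.exp_pos _).le w)
    (Eventually.of_forall fun _ => Real.posLog_nonneg)).symm

/-- The mean of `log ‖A v‖ - k β` is nonpositive and its negative part is controlled by negative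
moments, so its positive part is small too. -/
lemma exists_meanExcess_le (h : IsBilipschitzLaw ν m M) {β : ℝ}
    (hlow : ∀ ε > 0, ∃ n : ℕ, 1 ≤ n ∧ ∀ v : V, ‖v‖ = 1 → n * (β - ε) ≤ meanLog ν n v)
    {v : V} (hv : ‖v‖ = 1) (hup : ∀ k : ℕ, meanLog ν k v ≤ k * β) {ε : ℝ} (hε : 0 < ε) :
    ∃ C : ℝ, ∀ k : ℕ, meanExcess ν β k v ≤ ENNReal.ofReal (ε * k + C) := by
  obtain ⟨n, hn, hlow_n⟩ := hlow (ε / 2) (by linarith)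
  obtain ⟨α, C, hα, hneg⟩ := exists_neg_normMoment_le h hn (c := β - ε) (by linarith) hlow_n
  refine ⟨α⁻¹ * C, fun k => ?_⟩
  rw [meanExcess_eq_ofReal h]
  apply ENNReal.ofReal_le_ofReal
  have hv0 : v ≠ 0 := norm_ne_zero_iff.1 (by simp [hv])
  have hk := h.convPow k
  have := hk.prob
  set E := Real.exp (α * (k * β - ε * k)) with hE
  have hlog : Integrable (fun A => Real.log ‖A v‖ + (ε * k - k * β)) (convPow ν k) :=
    (hk.integrable_log_norm_apply hv0).add (integrable_const _)
  have hmom := (hk.integrable_rpow_norm_apply (-α) v).const_mul (α⁻¹ * E)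
  have hmoment : E * normMoment ν (-α) k v ≤ C :=
    calc E * normMoment ν (-α) k v ≤ E * (C * Real.exp (-α * (β - ε) * k)) := by
          gcongr; simpa [hv] using hneg k v hv0
      _ = C := by rw [mul_left_comm, hE, ← Real.exp_add]; ring_nf; simp
  calc ∫ A, Real.posLog (Real.exp (-(k * β)) * ‖A v‖) ∂(convPow ν k)
      ≤ ∫ A, (Real.log ‖A v‖ + (ε * k - k * β) + α⁻¹ * E * ‖A v‖ ^ (-α)) ∂(convPow ν k) := by
        refine integral_mono_ae (hk.integrable_posLog_mul_norm_apply (Real.exp_pos _).le v)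
          (hlog.add hmom) ?_
        filter_upwards [hk.ae_mem] with A hA
        exact posLog_exp_mul_le hα (by positivity)
          (norm_pos_iff.2 (apply_ne_zero_of_mem_bilipschitz hk.pos hA hv0))
    _ = meanLog ν k v + (ε * k - k * β) + α⁻¹ * (E * normMoment ν (-α) k v) := by
        rw [integral_add hlog hmom, integral_add (hk.integrable_log_norm_apply hv0)
          (integrable_const _), integral_const_mul, meanLog, normMoment]
        simp [mul_assoc]
    _ ≤ ε * k + α⁻¹ * C := by
        have := mul_le_mul_of_nonneg_left hmoment (inv_pos.2 hα).le
        linarith [hup k]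

end MeanExcess

section RestrictNorm

variable {V : Type*} [NormedAddCommGroup V] [InnerProductSpace ℝ V] {m M : ℝ}

/-- The operator norm of the restriction of `A` to the subspace `W`. -/
def restrictNorm (W : Submodule ℝ V) (A : V →L[ℝ] V) : ℝ := ‖A.comp W.subtypeL‖

lemma norm_apply_le_restrictNorm_mul (W : Submodule ℝ V) (A : V →L[ℝ] V) {v : V} (hv : v ∈ W) :
    ‖A v‖ ≤ restrictNorm W A * ‖v‖ :=
  (A.comp W.subtypeL).le_opNorm ⟨v, hv⟩

lemma restrictNorm_mem_Icc {W : Submodule ℝ V} (hW : W ≠ ⊥) (hM : 0 ≤ M) {A : V →L[ℝ] V}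
    (hA : A ∈ bilipschitz V m M) : restrictNorm W A ∈ Set.Icc m M := by
  obtain ⟨v, hv, hv0⟩ := W.ne_bot_iff.1 hW
  exact ⟨le_of_mul_le_mul_right ((hA v).1.trans (norm_apply_le_restrictNorm_mul W A hv))
    (norm_pos_iff.2 hv0), ContinuousLinearMap.opNorm_le_bound _ hM fun w => (hA w).2⟩

lemma abs_log_restrictNorm_le {W : Submodule ℝ V} (hW : W ≠ ⊥) (hm : 0 < m) (hM : 0 ≤ M)
    {A : V →L[ℝ] V} (hA : A ∈ bilipschitz V m M) :
    |Real.log (restrictNorm W A)| ≤ |Real.log m| + |Real.log M| := by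
  obtain ⟨hlow, hup⟩ := restrictNorm_mem_Icc hW hM hA
  have hlow' := Real.log_le_log hm hlow
  have hup' := Real.log_le_log (hm.trans_le hlow) hup
  rw [abs_le]
  constructor
  · linarith [neg_abs_le (Real.log m), abs_nonneg (Real.log M)]
  · linarith [le_abs_self (Real.log M), abs_nonneg (Real.log m)]

lemma measurable_log_restrictNorm (W : Submodule ℝ V) :
    Measurable fun A : V →L[ℝ] V => Real.log (restrictNorm W A) := by
  have : Continuous (restrictNorm W) :=
    ((ContinuousLinearMap.compL ℝ W V V).flip W.subtypeL).continuous.norm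
  exact Real.measurable_log.comp this.measurable

lemma IsBilipschitzLaw.integrable_log_restrictNorm {ν : Measure (V →L[ℝ] V)}
    (h : IsBilipschitzLaw ν m M) {W : Submodule ℝ V} (hW : W ≠ ⊥) :
    Integrable (fun A => Real.log (restrictNorm W A)) ν :=
  h.integrable (measurable_log_restrictNorm W) fun _ hA =>
    abs_log_restrictNorm_le hW h.pos h.pos'.le hA

variable [FiniteDimensional ℝ V]

lemma restrictNorm_le_sum_norm (W : Submodule ℝ V) (A : V →L[ℝ] V) :
    restrictNorm W A ≤ ∑ i, ‖A (stdOrthonormalBasis ℝ W i)‖ := by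
  refine ContinuousLinearMap.opNorm_le_bound _ (Finset.sum_nonneg fun i _ => norm_nonneg _)
    fun w => ?_
  set b := stdOrthonormalBasis ℝ W
  have hcoord : ∀ i, ‖b.repr w i‖ ≤ ‖w‖ := fun i => by
    simpa [b.repr_apply_apply] using norm_inner_le_norm (𝕜 := ℝ) (b i) w
  calc ‖A.comp W.subtypeL w‖ = ‖∑ i, b.repr w i • A (b i)‖ := by
        conv_lhs => rw [← b.sum_repr w]
        simp
    _ ≤ ∑ i, ‖b.repr w i • A (b i)‖ := norm_sum_le _ _
    _ ≤ ∑ i, ‖A (b i)‖ * ‖w‖ := Finset.sum_le_sum fun i _ => by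
        rw [norm_smul, mul_comm]
        exact mul_le_mul_of_nonneg_left (hcoord i) (norm_nonneg _)
    _ = (∑ i, ‖A (b i)‖) * ‖w‖ := (Finset.sum_mul ..).symm

lemma forall_mem_of_forall_basis {W : Submodule ℝ V} {A : V →L[ℝ] V}
    (hA : ∀ i, A (stdOrthonormalBasis ℝ W i) ∈ W) {w : V} (hw : w ∈ W) : A w ∈ W := by
  have hrep : w = ∑ i, (stdOrthonormalBasis ℝ W).repr ⟨w, hw⟩ i •
      (stdOrthonormalBasis ℝ W i : V) := by
    simpa using congrArg Subtype.val ((stdOrthonormalBasis ℝ W).sum_repr ⟨w, hw⟩).symm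
  rw [hrep, map_sum]
  exact W.sum_mem fun i _ => by rw [map_smul]; exact W.smul_mem _ (hA i)

lemma ae_forall_mem_of_forall_ae {ν : Measure (V →L[ℝ] V)} {W : Submodule ℝ V}
    (hW : ∀ w ∈ W, ∀ᵐ A ∂ν, A w ∈ W) : ∀ᵐ A ∂ν, ∀ w ∈ W, A w ∈ W := by
  filter_upwards [ae_all_iff.2 fun i => hW _ (stdOrthonormalBasis ℝ W i).2] with A hA w hw
  exact forall_mem_of_forall_basis hA hw

end RestrictNorm

section FiniteExcess

lemma lintegral_ofReal_le_const_add {α : Type*} [MeasurableSpace α] {μ : Measure α}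
    [IsProbabilityMeasure μ] {f g : α → ℝ} {c : ℝ} (hc : 0 ≤ c) (hg : ∀ x, 0 ≤ g x)
    (hfg : ∀ x, f x ≤ c + g x) :
    ∫⁻ x, ENNReal.ofReal (f x) ∂μ ≤ ENNReal.ofReal c + ∫⁻ x, ENNReal.ofReal (g x) ∂μ :=
  calc ∫⁻ x, ENNReal.ofReal (f x) ∂μ
      ≤ ∫⁻ x, (ENNReal.ofReal c + ENNReal.ofReal (g x)) ∂μ :=
        lintegral_mono fun x => (ENNReal.ofReal_le_ofReal (hfg x)).trans_eq
          (ENNReal.ofReal_add hc (hg x))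
    _ = ENNReal.ofReal c + ∫⁻ x, ENNReal.ofReal (g x) ∂μ := by
        rw [lintegral_add_left measurable_const, lintegral_const, measure_univ, mul_one]

variable {V : Type*} [NormedAddCommGroup V] [NormedSpace ℝ V] [FiniteDimensional ℝ V]
  {ν : Measure (V →L[ℝ] V)} {m M : ℝ}

lemma meanExcess_add_le [IsProbabilityMeasure ν] (β : ℝ) (k : ℕ) (w w' : V) :
    meanExcess ν β k (w + w') ≤
      ENNReal.ofReal (Real.log 2) + (meanExcess ν β k w + meanExcess ν β k w') := by
  set e := Real.exp (-(k * β))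
  have hpt : ∀ A : V →L[ℝ] V, Real.posLog (e * ‖A (w + w')‖) ≤
      Real.log 2 + (Real.posLog (e * ‖A w‖) + Real.posLog (e * ‖A w'‖)) := fun A => by
    have htri : e * ‖A (w + w')‖ ≤ e * ‖A w‖ + e * ‖A w'‖ := by
      rw [map_add, ← mul_add]
      exact mul_le_mul_of_nonneg_left (norm_add_le _ _) (Real.exp_pos _).le
    rw [← add_assoc]
    exact (Real.posLog_le_posLog (by positivity) htri).trans Real.posLog_add
  refine (lintegral_ofReal_le_const_add (Real.log_nonneg one_le_two)
    (fun A => add_nonneg Real.posLog_nonneg Real.posLog_nonneg) hpt).trans_eq ?_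
  simp only [ENNReal.ofReal_add Real.posLog_nonneg Real.posLog_nonneg]
  exact congrArg _ (lintegral_add_left
    (ENNReal.measurable_ofReal.comp (measurable_posLog_mul_norm_apply e w)) _)

lemma meanExcess_smul_le [IsProbabilityMeasure ν] (β : ℝ) (k : ℕ) (c : ℝ) (w : V) :
    meanExcess ν β k (c • w) ≤ ENNReal.ofReal (Real.posLog c) + meanExcess ν β k w := by
  refine lintegral_ofReal_le_const_add Real.posLog_nonneg (fun A => Real.posLog_nonneg)
    fun A => ?_
  rw [map_smul, norm_smul, Real.norm_eq_abs, mul_left_comm, ← Real.posLog_abs c]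
  exact Real.posLog_mul

lemma lintegral_meanExcess_apply_le (h : IsBilipschitzLaw ν m M) (β : ℝ) (k : ℕ) (w : V) :
    ∫⁻ A, meanExcess ν β k (A w) ∂ν ≤ ENNReal.ofReal (Real.posLog M) + meanExcess ν β k w := by
  have := h.prob
  set e := Real.exp (-(k * β))
  have hmeas : Measurable fun A : V →L[ℝ] V => ENNReal.ofReal (Real.posLog (e * ‖A w‖)) :=
    ENNReal.measurable_ofReal.comp (measurable_posLog_mul_norm_apply e w)
  have hprod : Measurable fun p : (V →L[ℝ] V) × (V →L[ℝ] V) =>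
      ENNReal.ofReal (Real.posLog (e * ‖p.2 (p.1 w)‖)) := by
    have : Continuous fun p : (V →L[ℝ] V) × (V →L[ℝ] V) => Real.posLog (e * ‖p.2 (p.1 w)‖) :=
      Real.continuous_posLog.comp (by fun_prop)
    exact ENNReal.measurable_ofReal.comp this.measurable
  have hcomm : convPow ν k ∗ₘ ν = ν ∗ₘ convPow ν k := by
    rw [← convPow_succ, add_comm, convPow_add, convPow_one]
  have hstep : ∀ A ∈ bilipschitz V m M,
      ∫⁻ B, ENNReal.ofReal (Real.posLog (e * ‖A (B w)‖)) ∂(convPow ν k) ≤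
        ENNReal.ofReal (Real.posLog M) + meanExcess ν β k w := fun A hA =>
    lintegral_ofReal_le_const_add Real.posLog_nonneg (fun B => Real.posLog_nonneg) fun B =>
      (Real.posLog_le_posLog (by positivity) (by
        rw [mul_left_comm]
        exact mul_le_mul_of_nonneg_left (hA (B w)).2 (Real.exp_pos _).le)).trans Real.posLog_mul
  calc ∫⁻ A, meanExcess ν β k (A w) ∂ν
      = ∫⁻ A, ENNReal.ofReal (Real.posLog (e * ‖A w‖)) ∂(convPow ν k ∗ₘ ν) := by
        rw [Measure.lintegral_mconv hmeas]
        exact lintegral_lintegral_swap hprod.aemeasurable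
    _ = ∫⁻ A, ∫⁻ B, ENNReal.ofReal (Real.posLog (e * ‖A (B w)‖)) ∂(convPow ν k) ∂ν := by
        rw [hcomm, Measure.lintegral_mconv hmeas]; rfl
    _ ≤ ∫⁻ _, (ENNReal.ofReal (Real.posLog M) + meanExcess ν β k w) ∂ν :=
        lintegral_mono_ae (h.ae_mem.mono hstep)
    _ = ENNReal.ofReal (Real.posLog M) + meanExcess ν β k w := by simp

lemma exists_times_meanExcess_le (h : IsBilipschitzLaw ν m M) {β : ℝ}
    (hlow : ∀ ε > 0, ∃ n : ℕ, 1 ≤ n ∧ ∀ v : V, ‖v‖ = 1 → n * (β - ε) ≤ meanLog ν n v)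
    {v : V} (hv : ‖v‖ = 1) (hup : ∀ k : ℕ, meanLog ν k v ≤ k * β) :
    ∃ k : ℕ → ℕ, (∀ j, 2 ^ j ≤ k j) ∧
      ∀ j, meanExcess ν β (k j) v ≤ ENNReal.ofReal ((1 / 2 : ℝ) ^ j * k j) := by
  have htime : ∀ j : ℕ, ∃ k : ℕ, 2 ^ j ≤ k ∧
      meanExcess ν β k v ≤ ENNReal.ofReal ((1 / 2 : ℝ) ^ j * k) := fun j => by
    obtain ⟨C, hC⟩ := exists_meanExcess_le h hlow hv hup (ε := (1 / 2 : ℝ) ^ j / 2) (by positivity)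
    obtain ⟨k, hk⟩ := exists_nat_gt (C / ((1 / 2 : ℝ) ^ j / 2))
    refine ⟨max k (2 ^ j), le_max_right _ _, (hC _).trans (ENNReal.ofReal_le_ofReal ?_)⟩
    have hk' := hk.trans_le (Nat.cast_le.2 (le_max_left k (2 ^ j)))
    rw [div_lt_iff₀ (by positivity)] at hk'
    linarith
  choose k hk using htime
  exact ⟨k, fun j => (hk j).1, fun j => (hk j).2⟩

end FiniteExcess

section WeightedExcess

variable {k : ℕ → ℕ}

lemma tsum_ofReal_half_pow_ne_top : ∑' j : ℕ, ENNReal.ofReal ((1 / 2 : ℝ) ^ j) ≠ ⊤ :=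
  (summable_geometric_of_lt_one (by norm_num) (by norm_num)).tsum_ofReal_ne_top

lemma one_div_le_half_pow (hk : ∀ j, 2 ^ j ≤ k j) (j : ℕ) : 1 / (k j : ℝ) ≤ (1 / 2) ^ j := by
  rw [div_pow, one_pow]
  exact one_div_le_one_div_of_le (by positivity) (mod_cast hk j)

lemma tsum_ofReal_one_div_ne_top (hk : ∀ j, 2 ^ j ≤ k j) :
    ∑' j, ENNReal.ofReal (1 / (k j : ℝ)) ≠ ⊤ :=
  ne_top_of_le_ne_top tsum_ofReal_half_pow_ne_top
    (ENNReal.tsum_le_tsum fun j => ENNReal.ofReal_le_ofReal (one_div_le_half_pow hk j))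

lemma tsum_mul_ne_top_of_le_add {a u f : ℕ → ℝ≥0∞} {K : ℝ≥0∞} (ha : ∑' j, a j ≠ ⊤) (hK : K ≠ ⊤)
    (hf : ∑' j, a j * f j ≠ ⊤) (hu : ∀ j, u j ≤ K + f j) : ∑' j, a j * u j ≠ ⊤ := by
  have hsum : ∑' j, a j * (K + f j) = (∑' j, a j) * K + ∑' j, a j * f j := by
    simp only [mul_add, ENNReal.tsum_add, ENNReal.tsum_mul_right]
  refine ne_top_of_le_ne_top ?_ (ENNReal.tsum_le_tsum fun j => mul_le_mul_right (hu j) (a j))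
  rw [hsum]
  exact ENNReal.add_ne_top.2 ⟨ENNReal.mul_ne_top ha hK, hf⟩

variable {V : Type*} [NormedAddCommGroup V] [NormedSpace ℝ V] {ν : Measure (V →L[ℝ] V)} {m M : ℝ}

/-- A weighted sum of mean excesses along a sparse sequence of times. Its weights are summable, so
that it is finite on a subspace, and `1 / k j` is the weight for which finiteness at `w` forces the
excess of `w` to be `o(k j)`. -/
def weightedExcess (ν : Measure (V →L[ℝ] V)) (β : ℝ) (k : ℕ → ℕ) (w : V) : ℝ≥0∞ :=
  ∑' j, ENNReal.ofReal (1 / (k j : ℝ)) * meanExcess ν β (k j) w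

lemma tendsto_toReal_of_weightedExcess_ne_top {β : ℝ} {w : V}
    (hw : weightedExcess ν β k w ≠ ⊤) :
    Tendsto (fun j => 1 / (k j : ℝ) * (meanExcess ν β (k j) w).toReal) atTop (𝓝 0) := by
  have := (ENNReal.tendsto_toReal ENNReal.zero_ne_top).comp
    (ENNReal.tendsto_atTop_zero_of_tsum_ne_top hw)
  refine this.congr fun j => ?_
  rw [Function.comp, ENNReal.toReal_mul, ENNReal.toReal_ofReal (by positivity)]

lemma weightedExcess_ne_top (hk : ∀ j, 2 ^ j ≤ k j) {β : ℝ} {v : V}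
    (hv : ∀ j, meanExcess ν β (k j) v ≤ ENNReal.ofReal ((1 / 2 : ℝ) ^ j * k j)) :
    weightedExcess ν β k v ≠ ⊤ := by
  refine ne_top_of_le_ne_top tsum_ofReal_half_pow_ne_top (ENNReal.tsum_le_tsum fun j => ?_)
  have hkj : (k j : ℝ) ≠ 0 := by
    exact_mod_cast ((by positivity : 0 < 2 ^ j).trans_le (hk j)).ne'
  calc ENNReal.ofReal (1 / (k j : ℝ)) * meanExcess ν β (k j) v
      ≤ ENNReal.ofReal (1 / (k j : ℝ)) * ENNReal.ofReal ((1 / 2 : ℝ) ^ j * k j) :=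
        mul_le_mul_right (hv j) _
    _ = ENNReal.ofReal ((1 / 2 : ℝ) ^ j) := by
        rw [← ENNReal.ofReal_mul (by positivity)]
        congr 1
        field_simp

variable [FiniteDimensional ℝ V]

/-- The subspace of the vectors of finite weighted excess. -/
def finiteExcess (ν : Measure (V →L[ℝ] V)) [IsProbabilityMeasure ν] (β : ℝ)
    (hk : ∀ j, 2 ^ j ≤ k j) : Submodule ℝ V where
  carrier := {w | weightedExcess ν β k w ≠ ⊤}
  zero_mem' := by simp [weightedExcess, meanExcess]
  add_mem' {x y} hx hy := by
    refine tsum_mul_ne_top_of_le_add (tsum_ofReal_one_div_ne_top hk) ENNReal.ofReal_ne_top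
      (f := fun j => meanExcess ν β (k j) x + meanExcess ν β (k j) y) ?_
      fun j => meanExcess_add_le β (k j) x y
    simp only [mul_add, ENNReal.tsum_add]
    exact ENNReal.add_ne_top.2 ⟨hx, hy⟩
  smul_mem' c x hx := tsum_mul_ne_top_of_le_add (tsum_ofReal_one_div_ne_top hk)
    ENNReal.ofReal_ne_top hx fun j => meanExcess_smul_le β (k j) c x

variable [MeasurableSpace V] [BorelSpace V]

lemma measurable_meanExcess [IsProbabilityMeasure ν] (β : ℝ) (k : ℕ) :
    Measurable (meanExcess ν β k) := by
  have : Continuous fun p : V × (V →L[ℝ] V) =>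
      Real.posLog (Real.exp (-(k * β)) * ‖p.2 p.1‖) :=
    Real.continuous_posLog.comp (by fun_prop)
  exact (ENNReal.measurable_ofReal.comp this.measurable).lintegral_prod_right'

lemma ae_weightedExcess_apply_ne_top (h : IsBilipschitzLaw ν m M) (hk : ∀ j, 2 ^ j ≤ k j) {β : ℝ}
    {w : V} (hw : weightedExcess ν β k w ≠ ⊤) : ∀ᵐ A ∂ν, weightedExcess ν β k (A w) ≠ ⊤ := by
  have := h.prob
  have hmeas : ∀ j, Measurable fun A : V →L[ℝ] V => meanExcess ν β (k j) (A w) := fun j =>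
    (measurable_meanExcess β (k j)).comp
      (by fun_prop : Continuous fun A : V →L[ℝ] V => A w).measurable
  have hint : ∫⁻ A, weightedExcess ν β k (A w) ∂ν =
      ∑' j, ENNReal.ofReal (1 / (k j : ℝ)) * ∫⁻ A, meanExcess ν β (k j) (A w) ∂ν :=
    (lintegral_tsum fun j => ((hmeas j).const_mul _).aemeasurable).trans
      (tsum_congr fun j => lintegral_const_mul _ (hmeas j))
  have hfin : ∫⁻ A, weightedExcess ν β k (A w) ∂ν ≠ ⊤ := by
    rw [hint]
    exact tsum_mul_ne_top_of_le_add (tsum_ofReal_one_div_ne_top hk) ENNReal.ofReal_ne_top hw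
      fun j => lintegral_meanExcess_apply_le h β (k j) w
  exact (ae_lt_top (Measurable.tsum fun j => (hmeas j).const_mul _) hfin).mono
    fun A hA => hA.ne

end WeightedExcess

section SlowSubspace

variable {V : Type*} [NormedAddCommGroup V] [InnerProductSpace ℝ V] [FiniteDimensional ℝ V]
  {ν : Measure (V →L[ℝ] V)} {m M : ℝ}

lemma integral_log_restrictNorm_le (h : IsBilipschitzLaw ν m M) {W : Submodule ℝ V} (hW : W ≠ ⊥)
    (β : ℝ) (k : ℕ) :
    ∫ A, Real.log (restrictNorm W A) ∂(convPow ν k) ≤ k * β + Real.log (Module.finrank ℝ W) +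
      ∑ i, (meanExcess ν β k (stdOrthonormalBasis ℝ W i : V)).toReal := by
  have hk := h.convPow k
  have := hk.prob
  set b : Fin (Module.finrank ℝ W) → V := fun i => stdOrthonormalBasis ℝ W i
  set e := Real.exp (-(k * β)) with he
  have hint : ∀ i, Integrable (fun A => Real.posLog (e * ‖A (b i)‖)) (convPow ν k) := fun i =>
    hk.integrable_posLog_mul_norm_apply (Real.exp_pos _).le (b i)
  have hexcess : ∀ i, (meanExcess ν β k (b i)).toReal =
      ∫ A, Real.posLog (e * ‖A (b i)‖) ∂(convPow ν k) := fun i => by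
    rw [meanExcess_eq_ofReal h, ENNReal.toReal_ofReal (integral_nonneg fun A => Real.posLog_nonneg)]
  have hpt : ∀ᵐ A ∂(convPow ν k), Real.log (restrictNorm W A) ≤
      k * β + Real.log (Module.finrank ℝ W) + ∑ i, Real.posLog (e * ‖A (b i)‖) := by
    filter_upwards [hk.ae_mem] with A hA
    have hpos : 0 < restrictNorm W A := hk.pos.trans_le (restrictNorm_mem_Icc hW hk.pos'.le hA).1
    have hsum := Real.posLog_sum Finset.univ fun i => e * ‖A (b i)‖
    rw [← Finset.mul_sum, Finset.card_univ, Fintype.card_fin] at hsum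
    have hlog : Real.log (e * restrictNorm W A) ≤ Real.posLog (e * ∑ i, ‖A (b i)‖) :=
      (le_max_right _ _).trans (Real.posLog_le_posLog (by positivity)
        (mul_le_mul_of_nonneg_left (restrictNorm_le_sum_norm W A) (Real.exp_pos _).le))
    rw [Real.log_mul (Real.exp_pos _).ne' hpos.ne', he, Real.log_exp] at hlog
    linarith
  have hle := integral_mono_ae (hk.integrable_log_restrictNorm hW)
    ((integrable_const _).add (integrable_finsetSum Finset.univ fun i _ => hint i)) hpt
  rw [integral_add' (integrable_const _) (integrable_finsetSum Finset.univ fun i _ => hint i),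
    integral_finsetSum _ fun i _ => hint i] at hle
  simp only [integral_const, probReal_univ, one_smul, ← hexcess] at hle
  exact hle

lemma exists_integral_log_restrictNorm_lt (h : IsBilipschitzLaw ν m M) {W : Submodule ℝ V}
    (hW : W ≠ ⊥) {k : ℕ → ℕ} (hk : ∀ j, 2 ^ j ≤ k j) {β : ℝ}
    (hfin : ∀ w ∈ W, weightedExcess ν β k w ≠ ⊤) {c : ℝ} (hc : β < c) :
    ∃ n : ℕ, 1 ≤ n ∧ ∫ A, Real.log (restrictNorm W A) ∂(convPow ν n) < n * c := by
  set b : Fin (Module.finrank ℝ W) → V := fun i => stdOrthonormalBasis ℝ W i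
  have hinv : Tendsto (fun j => 1 / (k j : ℝ)) atTop (𝓝 0) :=
    squeeze_zero (fun j => by positivity) (one_div_le_half_pow hk)
      (tendsto_pow_atTop_nhds_zero_of_lt_one (r := (1 / 2 : ℝ)) (by norm_num) (by norm_num))
  have hlim : Tendsto (fun j => 1 / (k j : ℝ) * (Real.log (Module.finrank ℝ W) +
      ∑ i, (meanExcess ν β (k j) (b i)).toReal)) atTop (𝓝 0) := by
    have := (hinv.mul_const (Real.log (Module.finrank ℝ W))).add
      (tendsto_finsetSum Finset.univ fun i _ =>
        tendsto_toReal_of_weightedExcess_ne_top (hfin (b i) (stdOrthonormalBasis ℝ W i).2))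
    simpa only [mul_add, Finset.mul_sum, zero_mul, Finset.sum_const_zero, add_zero] using this
  obtain ⟨j, hj⟩ := (hlim.eventually (gt_mem_nhds (sub_pos.2 hc))).exists
  have hkj : 1 ≤ k j := Nat.one_le_two_pow.trans (hk j)
  refine ⟨k j, hkj, (integral_log_restrictNorm_le h hW β (k j)).trans_lt ?_⟩
  rw [one_div_mul_eq_div, div_lt_iff₀ (by exact_mod_cast hkj)] at hj
  linarith

variable [MeasurableSpace V] [BorelSpace V]

/- Products applied to `v` have excess `o(k)` over `exp (k β)` in mean, and so do those applied to
every vector of the random orbit of `v`; the subspace of all the vectors with this property along a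
sparse sequence of times is invariant for that reason. -/
theorem exists_invariant_subspace_of_slow_vector (h : IsBilipschitzLaw ν m M) {β : ℝ}
    (hlow : ∀ ε > 0, ∃ n : ℕ, 1 ≤ n ∧ ∀ v : V, ‖v‖ = 1 → n * (β - ε) ≤ meanLog ν n v)
    {v : V} (hv : ‖v‖ = 1) (hup : ∀ k : ℕ, meanLog ν k v ≤ k * β) :
    ∃ W : Submodule ℝ V, v ∈ W ∧ (∀ᵐ A ∂ν, ∀ w ∈ W, A w ∈ W) ∧
      ∀ c > β, ∃ n : ℕ, 1 ≤ n ∧ ∫ A, Real.log (restrictNorm W A) ∂(convPow ν n) < n * c := by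
  have := h.prob
  obtain ⟨k, hk, hexcess⟩ := exists_times_meanExcess_le h hlow hv hup
  have hvW : v ∈ finiteExcess ν β hk := weightedExcess_ne_top hk hexcess
  have hv0 : v ≠ 0 := norm_ne_zero_iff.1 (by simp [hv])
  exact ⟨finiteExcess ν β hk, hvW,
    ae_forall_mem_of_forall_ae fun w hw => ae_weightedExcess_apply_ne_top h hk hw,
    fun c hc => exists_integral_log_restrictNorm_lt h ((Submodule.ne_bot_iff _).2 ⟨v, hvW, hv0⟩) hk
      (fun w hw => hw) hc⟩

end SlowSubspace

section Gauges

variable {V : Type*} [NormedAddCommGroup V] [NormedSpace ℝ V] [MeasurableSpace V]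
  {ν : Measure (V →L[ℝ] V)} {m M α C c : ℝ} {S : Set V} {T : V → ℝ}

/-- A function `T` comparable with `‖·‖ ^ α` which one random step of law `ν`, started from `S`,
multiplies on average by at most `exp (α * c)`; so `c` bounds a growth rate. -/
structure IsGauge (ν : Measure (V →L[ℝ] V)) (α C c : ℝ) (S : Set V) (T : V → ℝ) : Prop where
  exponent_pos : 0 < α
  const_nonneg : 0 ≤ C
  measurable : Measurable T
  rpow_norm_le : ∀ v, ‖v‖ ^ α ≤ T v
  le_mul_rpow_norm : ∀ v, T v ≤ C * ‖v‖ ^ α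
  integral_apply_le : ∀ v ∈ S, ∫ A, T (A v) ∂ν ≤ Real.exp (α * c) * T v

lemma rpow_add_le_of_subadditive {E : Type*} [Add E] {T : E → ℝ} (hT₀ : ∀ v, 0 ≤ T v)
    (hT : ∀ v w, T (v + w) ≤ T v + T w) {s : ℝ} (hs : 0 ≤ s) (hs₁ : s ≤ 1) (v w : E) :
    T (v + w) ^ s ≤ T v ^ s + T w ^ s :=
  (Real.rpow_le_rpow (hT₀ _) (hT v w) hs).trans
    (Real.rpow_add_le_add_rpow (hT₀ _) (hT₀ _) hs hs₁)

lemma integral_rpow_le_rpow_integral {Ω : Type*} [MeasurableSpace Ω] {P : Measure Ω}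
    [IsProbabilityMeasure P] {f : Ω → ℝ} (hf₀ : ∀ ω, 0 ≤ f ω) (hf : Integrable f P) {s : ℝ}
    (hs : 0 ≤ s) (hs₁ : s ≤ 1) : ∫ ω, f ω ^ s ∂P ≤ (∫ ω, f ω ∂P) ^ s := by
  by_cases hfs : Integrable (fun ω => f ω ^ s) P
  · exact (Real.concaveOn_rpow hs hs₁).le_map_integral
      (Real.continuous_rpow_const hs).continuousOn isClosed_Ici
      (Eventually.of_forall hf₀) hf hfs
  · rw [integral_undef hfs]
    exact Real.rpow_nonneg (integral_nonneg hf₀) s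

namespace IsGauge

lemma nonneg (hT : IsGauge ν α C c S T) (v : V) : 0 ≤ T v :=
  (Real.rpow_nonneg (norm_nonneg v) α).trans (hT.rpow_norm_le v)

lemma apply_le (hT : IsGauge ν α C c S T) {A : V →L[ℝ] V} (hM : 0 ≤ M)
    (hA : A ∈ bilipschitz V m M) (v : V) : T (A v) ≤ C * M ^ α * ‖v‖ ^ α :=
  calc T (A v) ≤ C * ‖A v‖ ^ α := hT.le_mul_rpow_norm _
    _ ≤ C * (M * ‖v‖) ^ α :=
        mul_le_mul_of_nonneg_left
          (Real.rpow_le_rpow (norm_nonneg _) (hA v).2 hT.exponent_pos.le) hT.const_nonneg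
    _ = C * M ^ α * ‖v‖ ^ α := by rw [Real.mul_rpow hM (norm_nonneg _), mul_assoc]

variable [BorelSpace V]

lemma measurable_apply (hT : IsGauge ν α C c S T) (v : V) :
    Measurable fun A : V →L[ℝ] V => T (A v) :=
  hT.measurable.comp (by fun_prop : Continuous fun A : V →L[ℝ] V => A v).measurable

lemma integrable_apply (hT : IsGauge ν α C c S T) {ν' : Measure (V →L[ℝ] V)}
    (h : IsBilipschitzLaw ν' m M) (v : V) : Integrable (fun A : V →L[ℝ] V => T (A v)) ν' :=
  h.integrable (hT.measurable_apply v) fun A hA => by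
    rw [abs_of_nonneg (hT.nonneg _)]
    exact hT.apply_le h.pos'.le hA v

lemma rpow (hT : IsGauge ν α C c S T) (h : IsBilipschitzLaw ν m M) {s : ℝ} (hs : 0 < s)
    (hs₁ : s ≤ 1) : IsGauge ν (α * s) (C ^ s) c S fun v => T v ^ s where
  exponent_pos := mul_pos hT.exponent_pos hs
  const_nonneg := Real.rpow_nonneg hT.const_nonneg s
  measurable := hT.measurable.pow_const s
  rpow_norm_le v := by
    rw [Real.rpow_mul (norm_nonneg _)]
    exact Real.rpow_le_rpow (Real.rpow_nonneg (norm_nonneg _) _) (hT.rpow_norm_le v) hs.le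
  le_mul_rpow_norm v := by
    rw [Real.rpow_mul (norm_nonneg _),
      ← Real.mul_rpow hT.const_nonneg (Real.rpow_nonneg (norm_nonneg _) _)]
    exact Real.rpow_le_rpow (hT.nonneg v) (hT.le_mul_rpow_norm v) hs.le
  integral_apply_le v hv := by
    have := h.prob
    calc ∫ A, T (A v) ^ s ∂ν ≤ (∫ A, T (A v) ∂ν) ^ s :=
          integral_rpow_le_rpow_integral (fun A => hT.nonneg _) (hT.integrable_apply h v) hs.le hs₁
      _ ≤ (Real.exp (α * c) * T v) ^ s :=
          Real.rpow_le_rpow (integral_nonneg fun A => hT.nonneg _) (hT.integral_apply_le v hv) hs.le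
      _ = Real.exp (α * s * c) * T v ^ s := by
          rw [Real.mul_rpow (Real.exp_pos _).le (hT.nonneg v), ← Real.exp_mul]
          ring_nf

end IsGauge

end Gauges

section RenewalSum

variable {V : Type*} [NormedAddCommGroup V] [NormedSpace ℝ V] {ν : Measure (V →L[ℝ] V)}
  {m M α c : ℝ}

/-- The discounted sum `∑ k < n, exp (-α c k) 𝔼‖A v‖ ^ α` over products of `k` factors: it turns
growth at most `exp (α c n)` over a block of `n` steps into growth at most `exp (α c)` at each
step. -/
def renewalSum (ν : Measure (V →L[ℝ] V)) (α c : ℝ) (n : ℕ) (v : V) : ℝ :=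
  ∑ k ∈ Finset.range n, Real.exp (-(α * c * k)) * normMoment ν α k v

lemma rpow_norm_le_renewalSum (ν : Measure (V →L[ℝ] V)) (α c : ℝ) {n : ℕ} (hn : 1 ≤ n) (v : V) :
    ‖v‖ ^ α ≤ renewalSum ν α c n v :=
  calc ‖v‖ ^ α = Real.exp (-(α * c * (0 : ℕ))) * normMoment ν α 0 v := by simp [normMoment_zero]
    _ ≤ renewalSum ν α c n v :=
        Finset.single_le_sum (f := fun k : ℕ => Real.exp (-(α * c * k)) * normMoment ν α k v)
          (fun k _ => mul_nonneg (Real.exp_pos _).le (normMoment_nonneg _ _ _))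
          (Finset.mem_range.2 hn)

variable [FiniteDimensional ℝ V]

lemma normMoment_map_add_le (h : IsBilipschitzLaw ν m M) (hα : 0 ≤ α) (hα₁ : α ≤ 1) (k : ℕ)
    (v w : V) : normMoment ν α k (v + w) ≤ normMoment ν α k v + normMoment ν α k w := by
  have hint (u : V) := (h.convPow k).integrable_rpow_norm_apply α u
  unfold normMoment
  rw [← integral_add (hint v) (hint w)]
  refine integral_mono (hint _) ((hint v).add (hint w)) fun A => ?_
  simp only [map_add]
  exact rpow_add_le_of_subadditive (T := norm) norm_nonneg norm_add_le hα hα₁ (A v) (A w)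

lemma renewalSum_map_add_le (h : IsBilipschitzLaw ν m M) (hα : 0 ≤ α) (hα₁ : α ≤ 1) (n : ℕ)
    (v w : V) : renewalSum ν α c n (v + w) ≤ renewalSum ν α c n v + renewalSum ν α c n w := by
  simp only [renewalSum, ← Finset.sum_add_distrib, ← mul_add]
  gcongr
  exact normMoment_map_add_le h hα hα₁ _ v w

lemma renewalSum_le (h : IsBilipschitzLaw ν m M) (hα : 0 < α) (n : ℕ) (v : V) :
    renewalSum ν α c n v ≤ (∑ k ∈ Finset.range n,
      Real.exp (-(α * c * k)) * ((m ^ k) ^ α + (M ^ k) ^ α)) * ‖v‖ ^ α := by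
  rw [Finset.sum_mul, renewalSum]
  refine Finset.sum_le_sum fun k _ => ?_
  rw [mul_assoc _ _ (‖v‖ ^ α)]
  refine mul_le_mul_of_nonneg_left ?_ (Real.exp_pos _).le
  rcases eq_or_ne v 0 with rfl | hv
  · simp [normMoment, Real.zero_rpow hα.ne']
  · exact normMoment_le_mul_rpow_norm h α k hv

variable [MeasurableSpace V] [BorelSpace V]

lemma measurable_normMoment (h : IsBilipschitzLaw ν m M) (s : ℝ) (k : ℕ) :
    Measurable (normMoment ν s k) := by
  have := (h.convPow k).prob
  have hjoint : Continuous fun p : V × (V →L[ℝ] V) => ‖p.2 p.1‖ := by fun_prop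
  exact ((hjoint.measurable.pow_const s).stronglyMeasurable.integral_prod_right'
    (ν := convPow ν k)).measurable

lemma integrable_normMoment_apply (h : IsBilipschitzLaw ν m M) (s : ℝ) (k : ℕ) (v : V) :
    Integrable (fun A : V →L[ℝ] V => normMoment ν s k (A v)) ν := by
  rcases eq_or_ne v 0 with rfl | hv
  · have := h.prob
    simp
  · have hmeas := (measurable_normMoment h s k).comp
      (by fun_prop : Continuous fun A : V →L[ℝ] V => A v).measurable
    refine ((h.integrable_rpow_norm_apply s v).const_mul ((m ^ k) ^ s + (M ^ k) ^ s)).mono'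
      hmeas.aestronglyMeasurable ?_
    filter_upwards [h.ae_mem] with A hA
    rw [Real.norm_of_nonneg (normMoment_nonneg _ _ _)]
    exact normMoment_le_mul_rpow_norm h s k (apply_ne_zero_of_mem_bilipschitz h.pos hA hv)

lemma integral_renewalSum_apply (h : IsBilipschitzLaw ν m M) (n : ℕ) (v : V) :
    ∫ A, renewalSum ν α c n (A v) ∂ν = Real.exp (α * c) *
      (renewalSum ν α c n v + Real.exp (-(α * c * n)) * normMoment ν α n v - ‖v‖ ^ α) := by
  have := h.prob
  have hstep (k : ℕ) : ∫ A, normMoment ν α k (A v) ∂ν = normMoment ν α (k + 1) v := by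
    rw [normMoment_add h α k 1 v, convPow_one]
  have hexp (k : ℕ) : Real.exp (-(α * c * k)) =
      Real.exp (α * c) * Real.exp (-(α * c * (k + 1 : ℕ))) := by
    rw [← Real.exp_add]; push_cast; ring_nf
  have hshift : ∑ k ∈ Finset.range n,
      Real.exp (-(α * c * (k + 1 : ℕ))) * normMoment ν α (k + 1) v =
        renewalSum ν α c n v + Real.exp (-(α * c * n)) * normMoment ν α n v - ‖v‖ ^ α := by
    rw [eq_sub_iff_add_eq, renewalSum, ← Finset.sum_range_succ, Finset.sum_range_succ']
    simp [normMoment_zero]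
  unfold renewalSum at hshift ⊢
  rw [integral_finsetSum _ fun k _ => (integrable_normMoment_apply h α k v).const_mul _, ← hshift,
    Finset.mul_sum]
  refine Finset.sum_congr rfl fun k _ => ?_
  rw [integral_const_mul, hstep, hexp, mul_assoc]

lemma isGauge_renewalSum (h : IsBilipschitzLaw ν m M) {n : ℕ} (hn : 1 ≤ n) (hα : 0 < α) {S : Set V}
    (hblock : ∀ v ∈ S, normMoment ν α n v ≤ Real.exp (α * c * n) * ‖v‖ ^ α) :
    IsGauge ν α (∑ k ∈ Finset.range n, Real.exp (-(α * c * k)) * ((m ^ k) ^ α + (M ^ k) ^ α)) c S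
      (renewalSum ν α c n) where
  exponent_pos := hα
  const_nonneg := by
    have hmpos := h.pos
    have hMpos := h.pos'
    positivity
  measurable := Finset.measurable_fun_sum _ fun k _ => (measurable_normMoment h α k).const_mul _
  rpow_norm_le := rpow_norm_le_renewalSum ν α c hn
  le_mul_rpow_norm := renewalSum_le h hα n
  integral_apply_le v hv := by
    have hend : Real.exp (-(α * c * n)) * normMoment ν α n v ≤ ‖v‖ ^ α := by
      rw [Real.exp_neg, inv_mul_le_iff₀ (Real.exp_pos _)]
      exact hblock v hv
    rw [integral_renewalSum_apply h]
    gcongr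
    linarith

end RenewalSum

section SlowSubspaces

variable {V : Type*} [NormedAddCommGroup V] [InnerProductSpace ℝ V] [FiniteDimensional ℝ V]
  {ν : Measure (V →L[ℝ] V)} {m M : ℝ}

lemma normMoment_le_integral_exp_mul (h : IsBilipschitzLaw ν m M) {W : Submodule ℝ V} (hW : W ≠ ⊥)
    {α : ℝ} (hα : 0 ≤ α) (n : ℕ) {v : V} (hv : v ∈ W) :
    normMoment ν α n v ≤
      (∫ A, Real.exp (α * Real.log (restrictNorm W A)) ∂(convPow ν n)) * ‖v‖ ^ α := by
  have hn := h.convPow n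
  have := hn.prob
  have hlog : ∀ᵐ A ∂(convPow ν n), |Real.log (restrictNorm W A)| ≤ _ :=
    hn.ae_mem.mono fun A hA => abs_log_restrictNorm_le hW hn.pos hn.pos'.le hA
  rw [normMoment, ← integral_mul_const]
  refine integral_mono_ae (hn.integrable_rpow_norm_apply α v)
    ((integrable_exp_mul (measurable_log_restrictNorm W).aestronglyMeasurable hlog α).mul_const _)
    ?_
  filter_upwards [hn.ae_mem] with A hA
  have hpos : 0 < restrictNorm W A := hn.pos.trans_le (restrictNorm_mem_Icc hW hn.pos'.le hA).1
  calc ‖A v‖ ^ α ≤ (restrictNorm W A * ‖v‖) ^ α :=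
        Real.rpow_le_rpow (norm_nonneg _) (norm_apply_le_restrictNorm_mul W A hv) hα
    _ = Real.exp (α * Real.log (restrictNorm W A)) * ‖v‖ ^ α := by
        rw [Real.mul_rpow hpos.le (norm_nonneg _), Real.rpow_def_of_pos hpos, mul_comm α]

variable [MeasurableSpace V] [BorelSpace V]

/-- The rate `c` bounds the growth on the subspace `W`, as witnessed by a subadditive gauge. -/
def IsSlow (ν : Measure (V →L[ℝ] V)) (W : Submodule ℝ V) (c : ℝ) : Prop :=
  ∃ (α C : ℝ) (T : V → ℝ), α ≤ 1 ∧ IsGauge ν α C c W T ∧ ∀ v w, T (v + w) ≤ T v + T w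

lemma isSlow_of_integral_log_restrictNorm_lt (h : IsBilipschitzLaw ν m M) {W : Submodule ℝ V}
    (hW : W ≠ ⊥) {n : ℕ} (hn : 1 ≤ n) {c : ℝ}
    (hc : ∫ A, Real.log (restrictNorm W A) ∂(convPow ν n) < n * c) : IsSlow ν W c := by
  have hg := h.convPow n
  have := hg.prob
  obtain ⟨α, hα, hα₁, hαB, hαη⟩ := exists_small_exponent
    (B := |Real.log (m ^ n)| + |Real.log (M ^ n)|) (sub_pos.2 hc)
  have hexp : ∫ A, Real.exp (α * Real.log (restrictNorm W A)) ∂(convPow ν n) ≤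
      Real.exp (α * c * n) :=
    (integral_exp_mul_le_exp (measurable_log_restrictNorm W).aestronglyMeasurable
      (hg.ae_mem.mono fun A hA => abs_log_restrictNorm_le hW hg.pos hg.pos'.le hA)
      hα.le hαB le_rfl hαη).trans_eq (by ring_nf)
  refine ⟨α, _, renewalSum ν α c n, hα₁, isGauge_renewalSum h hn hα fun v hv => ?_,
    renewalSum_map_add_le h hα.le hα₁ n⟩
  exact (normMoment_le_integral_exp_mul h hW hα.le n hv).trans (by gcongr)

end SlowSubspaces

section Compression

variable {V : Type*} [NormedAddCommGroup V] [InnerProductSpace ℝ V]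

/-- The monoid of operators mapping the subspace `W` into itself. -/
def preserving (W : Submodule ℝ V) : Submonoid (V →L[ℝ] V) where
  carrier := {A | ∀ w ∈ W, A w ∈ W}
  one_mem' _ hw := hw
  mul_mem' hA hB _ hw := hA _ (hB _ hw)

lemma norm_le_norm_sub_of_mem_orthogonal {W : Submodule ℝ V} {u w : V} (hu : u ∈ Wᗮ) (hw : w ∈ W) :
    ‖u‖ ≤ ‖u - w‖ := by
  have hinner : inner ℝ u w = 0 := Submodule.inner_left_of_mem_orthogonal hw hu
  have hsq := norm_sub_sq_real u w
  rw [hinner] at hsq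
  exact le_of_sq_le_sq (by nlinarith [sq_nonneg ‖w‖]) (norm_nonneg _)

lemma measurableMul₂_continuousLinearMap (V : Type*) [NormedAddCommGroup V]
    [InnerProductSpace ℝ V] [FiniteDimensional ℝ V] : MeasurableMul₂ (V →L[ℝ] V) :=
  inferInstance

variable [FiniteDimensional ℝ V] (W : Submodule ℝ V) {m M : ℝ} {A : V →L[ℝ] V}

/-- The compression of `A` to `Wᗮ`. When `A` preserves `W`, this is the action of `A` on `V ⧸ W`,
realised on the orthogonal complement. -/
def compression (A : V →L[ℝ] V) : Wᗮ →L[ℝ] Wᗮ :=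
  Wᗮ.orthogonalProjectionOnto ∘L A ∘L Wᗮ.subtypeL

lemma continuous_compression : Continuous (compression W) := by
  unfold compression
  fun_prop

lemma compression_one : compression W 1 = 1 := by
  ext u
  simp [compression]

lemma norm_compression_apply_le (A : V →L[ℝ] V) (u : Wᗮ) : ‖compression W A u‖ ≤ ‖A u‖ :=
  Wᗮ.norm_orthogonalProjectionOnto_apply_le (A u)

lemma isClosed_preserving : IsClosed (preserving W : Set (V →L[ℝ] V)) := by
  have : (preserving W : Set (V →L[ℝ] V)) = ⋂ w ∈ W, {A : V →L[ℝ] V | A w ∈ W} := by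
    ext A; simp only [Set.mem_iInter]; rfl
  rw [this]
  exact isClosed_biInter fun w _ => W.closed_of_finiteDimensional.preimage
    (f := fun A : V →L[ℝ] V => A w) (by fun_prop)

lemma orthogonalProjectionOnto_add_orthogonal (v : V) :
    (W.orthogonalProjectionOnto v : V) + (Wᗮ.orthogonalProjectionOnto v : V) = v :=
  W.starProjection_add_starProjection_orthogonal v

variable {W}

lemma orthogonalProjectionOnto_apply_of_mem_preserving (hA : A ∈ preserving W) (v : V) :
    Wᗮ.orthogonalProjectionOnto (A v) = compression W A (Wᗮ.orthogonalProjectionOnto v) := by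
  have hzero : Wᗮ.orthogonalProjectionOnto (A (W.orthogonalProjectionOnto v)) = 0 := by
    rw [Submodule.orthogonalProjectionOnto_eq_zero_iff]
    simpa using hA _ (W.orthogonalProjectionOnto v).2
  conv_lhs => rw [← orthogonalProjectionOnto_add_orthogonal W v]
  rw [map_add, map_add, hzero, zero_add]
  rfl

lemma compression_mul {B : V →L[ℝ] V} (hA : A ∈ preserving W) :
    compression W (A * B) = compression W A * compression W B := by
  ext u
  exact congrArg Subtype.val (orthogonalProjectionOnto_apply_of_mem_preserving hA (B u))

lemma exists_mem_apply_eq (hm : 0 < m) (hA : A ∈ preserving W) (hb : A ∈ bilipschitz V m M)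
    {x : V} (hx : x ∈ W) : ∃ w ∈ W, A w = x := by
  let f : W →ₗ[ℝ] W := A.toLinearMap.restrict hA
  have hinj : Function.Injective f := by
    refine (injective_iff_map_eq_zero f).2 fun w hw => ?_
    by_contra hne
    exact apply_ne_zero_of_mem_bilipschitz hm hb (by simpa using hne : (w : V) ≠ 0)
      (congrArg Subtype.val hw)
  obtain ⟨w, hw⟩ := LinearMap.injective_iff_surjective.1 hinj ⟨x, hx⟩
  exact ⟨w, w.2, congrArg Subtype.val hw⟩

lemma compression_mem_bilipschitz (hm : 0 < m) (hA : A ∈ preserving W)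
    (hb : A ∈ bilipschitz V m M) : compression W A ∈ bilipschitz Wᗮ m M := by
  refine fun u => ⟨?_, (norm_compression_apply_le W A u).trans (hb u).2⟩
  obtain ⟨w, hw, hAw⟩ := exists_mem_apply_eq hm hA hb (W.orthogonalProjectionOnto (A u)).2
  have hlift : A ((u : V) - w) = compression W A u := by
    rw [map_sub, hAw, sub_eq_iff_eq_add']
    exact (orthogonalProjectionOnto_add_orthogonal W (A u)).symm
  calc m * ‖u‖ ≤ m * ‖(u : V) - w‖ :=
        mul_le_mul_of_nonneg_left (norm_le_norm_sub_of_mem_orthogonal u.2 hw) hm.le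
    _ ≤ ‖A ((u : V) - w)‖ := (hb _).1
    _ = ‖compression W A u‖ := by rw [hlift]; rfl

variable {ν : Measure (V →L[ℝ] V)}

lemma IsBilipschitzLaw.map_compression (h : IsBilipschitzLaw ν m M)
    (hW : ∀ᵐ A ∂ν, A ∈ preserving W) : IsBilipschitzLaw (ν.map (compression W)) m M where
  prob := by
    have := h.prob
    exact Measure.isProbabilityMeasure_map (continuous_compression W).measurable.aemeasurable
  pos := h.pos
  le_one := h.le_one
  one_le := h.one_le
  ae_mem := by
    refine (ae_map_iff (p := (· ∈ bilipschitz Wᗮ m M))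
      (continuous_compression W).measurable.aemeasurable isClosed_bilipschitz.measurableSet).2 ?_
    filter_upwards [hW, h.ae_mem] with A hA hb using compression_mem_bilipschitz h.pos hA hb

lemma map_compression_convPow [IsProbabilityMeasure ν] (hW : ∀ᵐ A ∂ν, A ∈ preserving W) (n : ℕ) :
    (convPow ν n).map (compression W) = convPow (ν.map (compression W)) n := by
  have := measurableMul₂_continuousLinearMap Wᗮ
  exact map_convPow (continuous_compression W).measurable (isClosed_preserving W).measurableSet hW
    (compression_one W) (fun _ hA _ _ => compression_mul hA) n

end Compression

section CombinedGauge

variable {V : Type*} [NormedAddCommGroup V] [InnerProductSpace ℝ V] [FiniteDimensional ℝ V]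
  {W : Submodule ℝ V} {K : ℝ} {T₁ : V → ℝ} {T₂ : Wᗮ → ℝ}

/-- The function on `V` built from gauges on `W` and on `Wᗮ`. A large weight `K` lets the slack in
the growth of `T₂` absorb the part of the image of `Wᗮ` that falls into `W`. -/
def combinedGauge (W : Submodule ℝ V) (K : ℝ) (T₁ : V → ℝ) (T₂ : Wᗮ → ℝ) (v : V) : ℝ :=
  T₁ (W.orthogonalProjectionOnto v) + K * T₂ (Wᗮ.orthogonalProjectionOnto v)

lemma combinedGauge_map_add_le (hK : 0 ≤ K) (hT₁ : ∀ v w, T₁ (v + w) ≤ T₁ v + T₁ w)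
    (hT₂ : ∀ v w, T₂ (v + w) ≤ T₂ v + T₂ w) (v w : V) :
    combinedGauge W K T₁ T₂ (v + w) ≤ combinedGauge W K T₁ T₂ v + combinedGauge W K T₁ T₂ w := by
  simp only [combinedGauge, map_add, Submodule.coe_add]
  have h₁ := hT₁ (W.orthogonalProjectionOnto v) (W.orthogonalProjectionOnto w)
  have h₂ := mul_le_mul_of_nonneg_left
    (hT₂ (Wᗮ.orthogonalProjectionOnto v) (Wᗮ.orthogonalProjectionOnto w)) hK
  linarith

variable [MeasurableSpace V] {ν : Measure (V →L[ℝ] V)}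
  {ν' : Measure (Wᗮ →L[ℝ] Wᗮ)} {m M α C₁ C₂ c₁ c₂ c : ℝ} {V' : Set Wᗮ}

lemma rpow_norm_le_combinedGauge (hα : α ≤ 1) (hK : 1 ≤ K) {S : Set V}
    (hT₁ : IsGauge ν α C₁ c₁ S T₁) (hT₂ : IsGauge ν' α C₂ c₂ V' T₂) (v : V) :
    ‖v‖ ^ α ≤ combinedGauge W K T₁ T₂ v := by
  calc ‖v‖ ^ α
      = ‖(W.orthogonalProjectionOnto v : V) + (Wᗮ.orthogonalProjectionOnto v : V)‖ ^ α := by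
        rw [orthogonalProjectionOnto_add_orthogonal]
    _ ≤ ‖(W.orthogonalProjectionOnto v : V)‖ ^ α + ‖Wᗮ.orthogonalProjectionOnto v‖ ^ α :=
        rpow_add_le_of_subadditive (T := norm) norm_nonneg norm_add_le hT₁.exponent_pos.le hα _ _
    _ ≤ T₁ (W.orthogonalProjectionOnto v) + 1 * T₂ (Wᗮ.orthogonalProjectionOnto v) := by
        rw [one_mul]
        exact add_le_add (hT₁.rpow_norm_le _) (hT₂.rpow_norm_le _)
    _ ≤ combinedGauge W K T₁ T₂ v := by
        unfold combinedGauge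
        gcongr
        exact hT₂.nonneg _

lemma combinedGauge_le (hK : 0 ≤ K) {S : Set V} (hT₁ : IsGauge ν α C₁ c₁ S T₁)
    (hT₂ : IsGauge ν' α C₂ c₂ V' T₂) (v : V) :
    combinedGauge W K T₁ T₂ v ≤ (C₁ + K * C₂) * ‖v‖ ^ α := by
  have hC₁ := hT₁.const_nonneg
  have hC₂ := hT₂.const_nonneg
  have hα := hT₁.exponent_pos.le
  calc combinedGauge W K T₁ T₂ v
      ≤ C₁ * ‖(W.orthogonalProjectionOnto v : V)‖ ^ α +
        K * (C₂ * ‖Wᗮ.orthogonalProjectionOnto v‖ ^ α) :=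
        add_le_add (hT₁.le_mul_rpow_norm _)
          (mul_le_mul_of_nonneg_left (hT₂.le_mul_rpow_norm _) hK)
    _ ≤ C₁ * ‖v‖ ^ α + K * (C₂ * ‖v‖ ^ α) := by
        gcongr
        · exact W.norm_orthogonalProjectionOnto_apply_le v
        · exact Wᗮ.norm_orthogonalProjectionOnto_apply_le v
    _ = (C₁ + K * C₂) * ‖v‖ ^ α := by ring

lemma combinedGauge_apply_le (hM : 0 ≤ M) {A : V →L[ℝ] V} (hA : A ∈ preserving W)
    (hb : A ∈ bilipschitz V m M) {S : Set V} (hT₁ : IsGauge ν α C₁ c₁ S T₁)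
    (hadd : ∀ v w, T₁ (v + w) ≤ T₁ v + T₁ w) (hT₂ : IsGauge ν' α C₂ c₂ V' T₂) (v : V) :
    combinedGauge W K T₁ T₂ (A v) ≤ T₁ (A (W.orthogonalProjectionOnto v)) +
      C₁ * M ^ α * T₂ (Wᗮ.orthogonalProjectionOnto v) +
      K * T₂ (compression W A (Wᗮ.orthogonalProjectionOnto v)) := by
  set p : V := ↑(W.orthogonalProjectionOnto v)
  set q := Wᗮ.orthogonalProjectionOnto v
  have hsplit : (W.orthogonalProjectionOnto (A v) : V) =
      A p + W.orthogonalProjectionOnto (A q) := by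
    have hAp : (W.orthogonalProjectionOnto (A p) : V) = A p :=
      Submodule.starProjection_eq_self_iff.2 (hA p (W.orthogonalProjectionOnto v).2)
    conv_lhs => rw [← orthogonalProjectionOnto_add_orthogonal W v]
    rw [map_add, map_add, Submodule.coe_add, hAp]
  have hoff : T₁ (W.orthogonalProjectionOnto (A q)) ≤ C₁ * M ^ α * T₂ q :=
    calc T₁ (W.orthogonalProjectionOnto (A q))
        ≤ C₁ * ‖(W.orthogonalProjectionOnto (A q) : V)‖ ^ α := hT₁.le_mul_rpow_norm _
      _ ≤ C₁ * (M * ‖q‖) ^ α :=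
          mul_le_mul_of_nonneg_left (Real.rpow_le_rpow (norm_nonneg _)
            ((W.norm_orthogonalProjectionOnto_apply_le _).trans (hb q).2) hT₁.exponent_pos.le)
            hT₁.const_nonneg
      _ = C₁ * M ^ α * ‖q‖ ^ α := by rw [Real.mul_rpow hM (norm_nonneg _), mul_assoc]
      _ ≤ C₁ * M ^ α * T₂ q :=
          mul_le_mul_of_nonneg_left (hT₂.rpow_norm_le q)
            (mul_nonneg hT₁.const_nonneg (Real.rpow_nonneg hM α))
  rw [combinedGauge, hsplit, orthogonalProjectionOnto_apply_of_mem_preserving hA]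
  gcongr
  exact (hadd _ _).trans (by gcongr)

variable [BorelSpace V]

lemma measurable_combinedGauge (hT₁ : Measurable T₁) (hT₂ : Measurable T₂) :
    Measurable (combinedGauge W K T₁ T₂) := by
  have hproj : Continuous fun v : V => (W.orthogonalProjectionOnto v : V) := by fun_prop
  exact (hT₁.comp hproj.measurable).add
    ((hT₂.comp Wᗮ.orthogonalProjectionOnto.continuous.measurable).const_mul K)

lemma integral_combinedGauge_apply_le (h : IsBilipschitzLaw ν m M)
    (hW : ∀ᵐ A ∂ν, A ∈ preserving W) (hK : 0 ≤ K) {S : Set V} (hT₁ : IsGauge ν α C₁ c₁ S T₁)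
    (hadd : ∀ v w, T₁ (v + w) ≤ T₁ v + T₁ w)
    (hT₂ : IsGauge (ν.map (compression W)) α C₂ c₂ V' T₂) (v : V) :
    ∫ A, combinedGauge W K T₁ T₂ (A v) ∂ν ≤ ∫ A, T₁ (A (W.orthogonalProjectionOnto v)) ∂ν +
      C₁ * M ^ α * T₂ (Wᗮ.orthogonalProjectionOnto v) +
      K * ∫ B, T₂ (B (Wᗮ.orthogonalProjectionOnto v)) ∂(ν.map (compression W)) := by
  have := h.prob
  set q := Wᗮ.orthogonalProjectionOnto v
  have hcomp := (continuous_compression W).measurable.aemeasurable (μ := ν)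
  have hint₁ := hT₁.integrable_apply h (W.orthogonalProjectionOnto v)
  have hint₂ := hT₂.integrable_apply (h.map_compression hW) q
  have hint₂' : Integrable (fun A => K * T₂ (compression W A q)) ν :=
    (hint₂.comp_aemeasurable hcomp).const_mul K
  have hint₁' : Integrable (fun A : V →L[ℝ] V =>
      T₁ (A (W.orthogonalProjectionOnto v)) + C₁ * M ^ α * T₂ q) ν :=
    hint₁.add (integrable_const _)
  calc ∫ A, combinedGauge W K T₁ T₂ (A v) ∂ν
      ≤ ∫ A, (T₁ (A (W.orthogonalProjectionOnto v)) + C₁ * M ^ α * T₂ q +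
        K * T₂ (compression W A q)) ∂ν := by
        refine integral_mono_of_nonneg (Eventually.of_forall fun A => ?_) (hint₁'.add hint₂') ?_
        · exact add_nonneg (hT₁.nonneg _) (mul_nonneg hK (hT₂.nonneg _))
        · filter_upwards [hW, h.ae_mem] with A hA hb
          exact combinedGauge_apply_le h.pos'.le hA hb hT₁ hadd hT₂ v
    _ = _ := by
        rw [integral_add hint₁' hint₂', integral_add hint₁ (integrable_const _), integral_const,
          integral_const_mul, integral_map hcomp hint₂.1]
        simp

theorem exists_isGauge_combinedGauge (h : IsBilipschitzLaw ν m M)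
    (hW : ∀ᵐ A ∂ν, A ∈ preserving W) (hα : α ≤ 1) (hT₁ : IsGauge ν α C₁ c₁ W T₁)
    (hadd : ∀ v w, T₁ (v + w) ≤ T₁ v + T₁ w)
    (hT₂ : IsGauge (ν.map (compression W)) α C₂ c₂ V' T₂) (hc₁ : c₁ ≤ c) (hc₂ : c₂ < c) :
    ∃ K, 0 ≤ K ∧ IsGauge ν α (C₁ + K * C₂) c {v | Wᗮ.orthogonalProjectionOnto v ∈ V'}
      (combinedGauge W K T₁ T₂) := by
  have hα₀ := hT₁.exponent_pos
  have hgap : 0 < Real.exp (α * c) - Real.exp (α * c₂) :=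
    sub_pos.2 (Real.exp_lt_exp.2 (mul_lt_mul_of_pos_left hc₂ hα₀))
  let K := max 1 (C₁ * M ^ α / (Real.exp (α * c) - Real.exp (α * c₂)))
  have hK₁ : 1 ≤ K := le_max_left _ _
  have hK : C₁ * M ^ α ≤ K * (Real.exp (α * c) - Real.exp (α * c₂)) :=
    (div_le_iff₀ hgap).1 (le_max_right _ _)
  have hK₀ : 0 ≤ K := zero_le_one.trans hK₁
  refine ⟨K, hK₀, hα₀, add_nonneg hT₁.const_nonneg (mul_nonneg hK₀ hT₂.const_nonneg),
    measurable_combinedGauge hT₁.measurable hT₂.measurable,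
    rpow_norm_le_combinedGauge hα hK₁ hT₁ hT₂, combinedGauge_le hK₀ hT₁ hT₂, fun v hv => ?_⟩
  set p : V := ↑(W.orthogonalProjectionOnto v)
  set q := Wᗮ.orthogonalProjectionOnto v
  have hstep₁ : ∫ A, T₁ (A p) ∂ν ≤ Real.exp (α * c) * T₁ p := by
    refine (hT₁.integral_apply_le p (W.orthogonalProjectionOnto v).2).trans ?_
    have := hT₁.nonneg p
    gcongr
  have hstep₂ := mul_le_mul_of_nonneg_left (hT₂.integral_apply_le q hv) hK₀
  have hslack := mul_le_mul_of_nonneg_right hK (hT₂.nonneg q)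
  calc ∫ A, combinedGauge W K T₁ T₂ (A v) ∂ν ≤ _ :=
        integral_combinedGauge_apply_le h hW hK₀ hT₁ hadd hT₂ v
    _ ≤ Real.exp (α * c) * (T₁ p + K * T₂ q) := by linarith

end CombinedGauge

section GlobalGauge

/-- Linearising `exp` at the target mean `a` recovers a bound on the mean from the moment. -/
lemma integral_le_add_inv_mul_integral_exp {Ω : Type*} [MeasurableSpace Ω] {P : Measure Ω}
    [IsProbabilityMeasure P] {Z : Ω → ℝ} {B : ℝ} (hZ : AEStronglyMeasurable Z P)
    (hB : ∀ᵐ ω ∂P, |Z ω| ≤ B) {α : ℝ} (hα : 0 < α) (a : ℝ) :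
    ∫ ω, Z ω ∂P ≤ a + α⁻¹ * (Real.exp (-(α * a)) * ∫ ω, Real.exp (α * Z ω) ∂P) := by
  have hexp := (integrable_exp_mul hZ hB α).const_mul (α⁻¹ * Real.exp (-(α * a)))
  calc ∫ ω, Z ω ∂P
      ≤ ∫ ω, (a + α⁻¹ * Real.exp (-(α * a)) * Real.exp (α * Z ω)) ∂P := by
        refine integral_mono (Integrable.of_bound hZ B (by simpa using hB))
          ((integrable_const a).add hexp) fun ω => ?_
        rw [mul_assoc, ← Real.exp_add, ← sub_le_iff_le_add', le_inv_mul_iff₀ hα]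
        linarith [Real.add_one_le_exp (-(α * a) + α * Z ω)]
    _ = _ := by
        rw [integral_add (integrable_const a) hexp, integral_const_mul, mul_assoc]
        simp

variable {V : Type*} [NormedAddCommGroup V] [InnerProductSpace ℝ V]

lemma restrictNorm_top (A : V →L[ℝ] V) : restrictNorm ⊤ A = ‖A‖ := by
  refine le_antisymm ?_ ?_
  · exact ContinuousLinearMap.opNorm_le_bound _ (norm_nonneg _) fun w => A.le_opNorm w
  · exact A.opNorm_le_bound (norm_nonneg (A.comp (⊤ : Submodule ℝ V).subtypeL)) fun v =>
      norm_apply_le_restrictNorm_mul ⊤ A Submodule.mem_top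

variable {ν : Measure (V →L[ℝ] V)} {m M : ℝ}

lemma IsBilipschitzLaw.integrable_log_norm [Nontrivial V] (h : IsBilipschitzLaw ν m M) :
    Integrable (fun A : V →L[ℝ] V => Real.log ‖A‖) ν := by
  simpa only [restrictNorm_top] using h.integrable_log_restrictNorm (W := ⊤) top_ne_bot

variable [FiniteDimensional ℝ V]

lemma norm_rpow_le_sum_rpow [Nontrivial V] {α : ℝ} (hα : 0 ≤ α) (A : V →L[ℝ] V) :
    ‖A‖ ^ α ≤ (Module.finrank ℝ V : ℝ) ^ α *
      ∑ i, ‖A (stdOrthonormalBasis ℝ (⊤ : Submodule ℝ V) i)‖ ^ α := by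
  let b := stdOrthonormalBasis ℝ (⊤ : Submodule ℝ V)
  have : Nonempty (Fin (Module.finrank ℝ (⊤ : Submodule ℝ V))) :=
    Fin.pos_iff_nonempty.1 (by rw [finrank_top]; exact Module.finrank_pos)
  obtain ⟨j, hj⟩ := Finite.exists_max fun i => ‖A (b i)‖
  have hnorm : ‖A‖ ≤ Module.finrank ℝ V * ‖A (b j)‖ := by
    rw [← restrictNorm_top A]
    refine (restrictNorm_le_sum_norm ⊤ A).trans ?_
    simpa using Finset.sum_le_card_nsmul Finset.univ (fun i => ‖A (b i)‖) _ fun i _ => hj i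
  calc ‖A‖ ^ α ≤ (Module.finrank ℝ V * ‖A (b j)‖) ^ α :=
        Real.rpow_le_rpow (norm_nonneg _) hnorm hα
    _ = (Module.finrank ℝ V : ℝ) ^ α * ‖A (b j)‖ ^ α :=
        Real.mul_rpow (Nat.cast_nonneg _) (norm_nonneg _)
    _ ≤ _ := by
        gcongr
        exact Finset.single_le_sum (f := fun i => ‖A (b i)‖ ^ α)
          (fun i _ => Real.rpow_nonneg (norm_nonneg _) _) (Finset.mem_univ j)

variable [MeasurableSpace V] [BorelSpace V] {α C c : ℝ} {T : V → ℝ}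

lemma IsGauge.integral_convPow_apply_le (hT : IsGauge ν α C c Set.univ T)
    (h : IsBilipschitzLaw ν m M) (n : ℕ) (v : V) :
    ∫ A, T (A v) ∂(convPow ν n) ≤ Real.exp (α * c * n) * T v := by
  have := h.prob
  induction n generalizing v with
  | zero => simp [convPow_zero]
  | succ n ih =>
    rw [integral_convPow_add (f := fun A : V →L[ℝ] V => T (A v)) (hT.measurable_apply v)
      (hT.integrable_apply (h.convPow (n + 1)) v), convPow_one]
    calc ∫ B, ∫ A, T ((A * B) v) ∂(convPow ν n) ∂ν
        ≤ ∫ B, Real.exp (α * c * n) * T (B v) ∂ν :=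
          integral_mono_of_nonneg
            (Eventually.of_forall fun B => integral_nonneg fun A => hT.nonneg _)
            ((hT.integrable_apply h v).const_mul _) (Eventually.of_forall fun B => ih (B v))
      _ = Real.exp (α * c * n) * ∫ B, T (B v) ∂ν := integral_const_mul _ _
      _ ≤ Real.exp (α * c * n) * (Real.exp (α * c) * T v) :=
          mul_le_mul_of_nonneg_left (hT.integral_apply_le v trivial) (Real.exp_pos _).le
      _ = Real.exp (α * c * (n + 1 : ℕ)) * T v := by
          rw [← mul_assoc, ← Real.exp_add]; push_cast; ring_nf

lemma IsGauge.integral_norm_rpow_le [Nontrivial V] (hT : IsGauge ν α C c Set.univ T)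
    (h : IsBilipschitzLaw ν m M) (n : ℕ) :
    ∫ A, ‖A‖ ^ α ∂(convPow ν n) ≤ (Module.finrank ℝ V : ℝ) ^ α *
      ∑ i, T (stdOrthonormalBasis ℝ (⊤ : Submodule ℝ V) i) * Real.exp (α * c * n) := by
  have hn := h.convPow n
  calc ∫ A, ‖A‖ ^ α ∂(convPow ν n) ≤ ∫ A, (Module.finrank ℝ V : ℝ) ^ α *
        ∑ i, T (A (stdOrthonormalBasis ℝ (⊤ : Submodule ℝ V) i)) ∂(convPow ν n) := by
        refine integral_mono_of_nonneg
          (Eventually.of_forall fun A => Real.rpow_nonneg (norm_nonneg _) _)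
          ((integrable_finsetSum _ fun i _ => hT.integrable_apply hn _).const_mul _)
          (Eventually.of_forall fun A => (norm_rpow_le_sum_rpow hT.exponent_pos.le A).trans ?_)
        exact mul_le_mul_of_nonneg_left (Finset.sum_le_sum fun i _ => hT.rpow_norm_le _)
          (by positivity)
    _ ≤ _ := by
        rw [integral_const_mul, integral_finsetSum _ fun i _ => hT.integrable_apply hn _]
        refine mul_le_mul_of_nonneg_left (Finset.sum_le_sum fun i _ => ?_) (by positivity)
        rw [mul_comm]
        exact hT.integral_convPow_apply_le h n _

theorem IsGauge.exists_integral_log_norm_le [Nontrivial V] (hT : IsGauge ν α C c Set.univ T)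
    (h : IsBilipschitzLaw ν m M) :
    ∃ C', ∀ n : ℕ, ∫ A, Real.log ‖A‖ ∂(convPow ν n) ≤ c * n + C' := by
  refine ⟨α⁻¹ * ((Module.finrank ℝ V : ℝ) ^ α *
    ∑ i, T (stdOrthonormalBasis ℝ (⊤ : Submodule ℝ V) i)), fun n => ?_⟩
  have hn := h.convPow n
  have := hn.prob
  have hα := hT.exponent_pos
  have hexp : ∀ᵐ A ∂(convPow ν n), Real.exp (α * Real.log ‖A‖) = ‖A‖ ^ α := by
    filter_upwards [hn.ae_mem] with A hA
    have hA₀ : 0 < ‖A‖ := by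
      rw [← restrictNorm_top A]
      exact hn.pos.trans_le (restrictNorm_mem_Icc top_ne_bot hn.pos'.le hA).1
    rw [Real.rpow_def_of_pos hA₀, mul_comm]
  have hlog : ∀ᵐ A ∂(convPow ν n), |Real.log ‖A‖| ≤ |Real.log (m ^ n)| + |Real.log (M ^ n)| := by
    filter_upwards [hn.ae_mem] with A hA
    simpa only [restrictNorm_top] using
      abs_log_restrictNorm_le top_ne_bot hn.pos hn.pos'.le hA
  have hmoment := hT.integral_norm_rpow_le h n
  rw [← integral_congr_ae hexp, ← Finset.sum_mul, ← mul_assoc] at hmoment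
  refine (integral_le_add_inv_mul_integral_exp hn.integrable_log_norm.1 hlog hα (c * n)).trans ?_
  rw [mul_assoc α] at hmoment
  refine add_le_add le_rfl (mul_le_mul_of_nonneg_left ?_ (inv_nonneg.2 hα.le))
  rwa [Real.exp_neg, inv_mul_le_iff₀ (Real.exp_pos _), mul_comm]

end GlobalGauge

section MaximalSlowSubspace

/-- Below the rate `l`, the mean logarithmic growth of unit vectors at some time is uniformly
large. -/
def HasUniformGrowth {V : Type*} [NormedAddCommGroup V] [NormedSpace ℝ V]
    (ν : Measure (V →L[ℝ] V)) (l : ℝ) : Prop :=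
  ∀ c < l, ∃ n : ℕ, 1 ≤ n ∧ ∀ u : V, ‖u‖ = 1 → n * c ≤ meanLog ν n u

variable {V : Type*} [NormedAddCommGroup V] [InnerProductSpace ℝ V]

lemma isSlow_bot [MeasurableSpace V] [BorelSpace V] (ν : Measure (V →L[ℝ] V)) (c : ℝ) :
    IsSlow ν (⊥ : Submodule ℝ V) c := by
  refine ⟨1, 1, norm, le_rfl, ⟨one_pos, zero_le_one, measurable_norm, fun v => by simp,
    fun v => by simp, fun v hv => ?_⟩, norm_add_le⟩
  rw [(Submodule.mem_bot ℝ).1 hv]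
  simp

variable [FiniteDimensional ℝ V] {ν : Measure (V →L[ℝ] V)} {m M l c c₁ c₂ : ℝ}

lemma exists_unit_forall_meanLog_le [Nontrivial V] (h : IsBilipschitzLaw ν m M) (n : ℕ) :
    ∃ v : V, ‖v‖ = 1 ∧ ∀ u : V, ‖u‖ = 1 → meanLog ν n v ≤ meanLog ν n u := by
  obtain ⟨v, hv, hmin⟩ := (isCompact_sphere (0 : V) 1).exists_isMinOn
    (NormedSpace.sphere_nonempty.2 zero_le_one) fun v hv =>
      (continuousAt_meanLog h n (norm_ne_zero_iff.1 (by simp [mem_sphere_zero_iff_norm.1 hv]))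
        ).continuousWithinAt
  exact ⟨v, mem_sphere_zero_iff_norm.1 hv, fun u hu => hmin (mem_sphere_zero_iff_norm.2 hu)⟩

lemma exists_unit_meanLog_le_sSup [Nontrivial V] (h : IsBilipschitzLaw ν m M) {S : Set ℝ}
    (hS : BddAbove S)
    (hmem : ∀ b (n : ℕ), 1 ≤ n → (∀ u : V, ‖u‖ = 1 → n * b ≤ meanLog ν n u) → b ∈ S)
    {n : ℕ} (hn : 1 ≤ n) : ∃ v : V, ‖v‖ = 1 ∧ meanLog ν n v ≤ n * sSup S := by
  have hn₀ : (0 : ℝ) < n := by exact_mod_cast hn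
  obtain ⟨v, hv, hmin⟩ := exists_unit_forall_meanLog_le h n
  refine ⟨v, hv, (div_le_iff₀' hn₀).1 (le_csSup hS (hmem _ n hn fun u hu => ?_))⟩
  rw [mul_div_cancel₀ _ hn₀.ne']
  exact hmin u hu

lemma ae_mem_preserving_comap (ν : Measure (V →L[ℝ] V)) {W : Submodule ℝ V}
    (hW : ∀ᵐ A ∂ν, A ∈ preserving W) {W' : Submodule ℝ Wᗮ}
    (hW' : ∀ᵐ B ∂(ν.map (compression W)), B ∈ preserving W') :
    ∀ᵐ A ∂ν, A ∈ preserving (W'.comap Wᗮ.orthogonalProjectionOnto.toLinearMap) := by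
  filter_upwards [hW, ae_of_ae_map (continuous_compression W).measurable.aemeasurable hW']
    with A hA hA' v hv
  change Wᗮ.orthogonalProjectionOnto (A v) ∈ W'
  rw [orthogonalProjectionOnto_apply_of_mem_preserving hA]
  exact hA' _ hv

lemma lt_comap_orthogonalProjectionOnto (W : Submodule ℝ V) {W' : Submodule ℝ Wᗮ} (hW' : W' ≠ ⊥) :
    W < W'.comap Wᗮ.orthogonalProjectionOnto.toLinearMap := by
  refine lt_of_le_not_ge (fun w hw => ?_) fun hle => ?_
  · have hzero : Wᗮ.orthogonalProjectionOnto w = 0 :=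
      (Submodule.orthogonalProjectionOnto_eq_zero_iff).2 (by simpa using hw)
    exact Submodule.mem_comap.2 (by simp [hzero])
  · obtain ⟨u, hu, hu₀⟩ := W'.ne_bot_iff.1 hW'
    have huW : (u : V) ∈ W := hle (by rw [Submodule.mem_comap]; simpa using hu)
    exact hu₀ (by simpa using u.2 (u : V) huW)

variable [MeasurableSpace V] [BorelSpace V]

/-- The optimal uniform growth rate `sSup S` is attained by a slow vector, whose slow invariant
subspace is the one we want. -/
theorem exists_isSlow_of_not_hasUniformGrowth [Nontrivial V] (h : IsBilipschitzLaw ν m M)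
    (hslow : ¬ HasUniformGrowth ν c) :
    ∃ W : Submodule ℝ V, W ≠ ⊥ ∧ (∀ᵐ A ∂ν, A ∈ preserving W) ∧ ∃ c' < c, IsSlow ν W c' := by
  obtain ⟨c₀, hc₀, hno⟩ : ∃ c₀ < c, ∀ n : ℕ, 1 ≤ n → ∃ u : V, ‖u‖ = 1 ∧ meanLog ν n u < n * c₀ := by
    simpa [HasUniformGrowth] using hslow
  let S : Set ℝ := {b | ∃ n : ℕ, 1 ≤ n ∧ ∀ u : V, ‖u‖ = 1 → n * b ≤ meanLog ν n u}
  have hne : S.Nonempty := ⟨Real.log m, 1, le_rfl, fun u hu => by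
    simpa [hu] using (meanLog_mem_Icc h 1 (v := u) (norm_ne_zero_iff.1 (by simp [hu]))).1⟩
  have hub : ∀ b ∈ S, b ≤ c₀ := by
    rintro b ⟨n, hn, hb⟩
    obtain ⟨u, hu, hlt⟩ := hno n hn
    exact (lt_of_mul_lt_mul_left ((hb u hu).trans_lt hlt) n.cast_nonneg).le
  have hlow : ∀ ε > 0, ∃ n : ℕ, 1 ≤ n ∧ ∀ v : V, ‖v‖ = 1 → n * (sSup S - ε) ≤ meanLog ν n v := by
    intro ε hε
    obtain ⟨b, ⟨n, hn, hb⟩, hlt⟩ := exists_lt_of_lt_csSup hne (sub_lt_self (sSup S) hε)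
    exact ⟨n, hn, fun v hv =>
      (mul_le_mul_of_nonneg_left hlt.le n.cast_nonneg).trans (hb v hv)⟩
  obtain ⟨v, hv, hup⟩ := exists_forall_meanLog_le h fun n hn =>
    exists_unit_meanLog_le_sSup h ⟨c₀, hub⟩ (fun b k hk hb => ⟨k, hk, hb⟩) hn
  obtain ⟨W, hvW, hinv, hrate⟩ := exists_invariant_subspace_of_slow_vector h hlow hv hup
  have hW : W ≠ ⊥ := (Submodule.ne_bot_iff W).2 ⟨v, hvW, norm_ne_zero_iff.1 (by simp [hv])⟩
  obtain ⟨c', hc', hc'c⟩ := exists_between hc₀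
  obtain ⟨n, hn, hint⟩ := hrate c' ((csSup_le hne hub).trans_lt hc')
  exact ⟨W, hW, hinv, c', hc'c, isSlow_of_integral_log_restrictNorm_lt h hW hn hint⟩

lemma IsSlow.comap_compression (h : IsBilipschitzLaw ν m M) {W : Submodule ℝ V}
    (hW : ∀ᵐ A ∂ν, A ∈ preserving W) (hs : IsSlow ν W c₁) {W' : Submodule ℝ Wᗮ}
    (hs' : IsSlow (ν.map (compression W)) W' c₂) (hc₁ : c₁ ≤ c) (hc₂ : c₂ < c) :
    IsSlow ν (W'.comap Wᗮ.orthogonalProjectionOnto.toLinearMap) c := by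
  obtain ⟨α, C, T, hα, hT, hadd⟩ := hs
  obtain ⟨α', C', T', hα', hT', hadd'⟩ := hs'
  have hα₀ := hT.exponent_pos.le
  have hα'₀ := hT'.exponent_pos.le
  have hpow := hT.rpow h hT'.exponent_pos hα'
  have hpow' := hT'.rpow (h.map_compression hW) hT.exponent_pos hα
  rw [mul_comm α' α] at hpow'
  have hpow_add := rpow_add_le_of_subadditive hT.nonneg hadd hα'₀ hα'
  have hpow_add' := rpow_add_le_of_subadditive hT'.nonneg hadd' hα₀ hα
  obtain ⟨K, hK, hcomb⟩ := exists_isGauge_combinedGauge h hW (mul_le_one₀ hα hα'₀ hα') hpow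
    hpow_add hpow' hc₁ hc₂
  exact ⟨_, _, _, mul_le_one₀ hα hα'₀ hα', hcomb, combinedGauge_map_add_le hK hpow_add hpow_add'⟩

lemma IsSlow.growthRate_le_of_top [Nontrivial V] (h : IsBilipschitzLaw ν m M)
    (hl : HasGrowthRate (fun A : V →L[ℝ] V => Real.log ‖A‖) ν l) (hs : IsSlow ν ⊤ c) : l ≤ c := by
  obtain ⟨α, C, T, -, hT, -⟩ := hs
  obtain ⟨C', hC'⟩ := IsGauge.exists_integral_log_norm_le hT h
  have hbound : ∀ᶠ n : ℕ in atTop,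
      (n : ℝ)⁻¹ * ∫ A, Real.log ‖A‖ ∂(convPow ν n) ≤ c + C' * (n : ℝ)⁻¹ := by
    filter_upwards [eventually_gt_atTop 0] with n hn
    rw [inv_mul_le_iff₀ (by exact_mod_cast hn)]
    refine (hC' n).trans_eq ?_
    field_simp
  have hlim : Tendsto (fun n : ℕ => c + C' * (n : ℝ)⁻¹) atTop (𝓝 c) := by
    simpa using (tendsto_inv_atTop_nhds_zero_nat.const_mul C').const_add c
  exact le_of_tendsto_of_tendsto hl hlim hbound

theorem exists_isSlow_hasUniformGrowth_compression [Nontrivial V] (h : IsBilipschitzLaw ν m M)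
    (hl : HasGrowthRate (fun A : V →L[ℝ] V => Real.log ‖A‖) ν l) :
    ∃ W : Submodule ℝ V, (∀ᵐ A ∂ν, A ∈ preserving W) ∧ (∃ c < l, IsSlow ν W c) ∧ W ≠ ⊤ ∧
      HasUniformGrowth (ν.map (compression W)) l := by
  let S : Set (Submodule ℝ V) := {W | (∀ᵐ A ∂ν, A ∈ preserving W) ∧ ∃ c < l, IsSlow ν W c}
  have hbot : ⊥ ∈ S := by
    refine ⟨Eventually.of_forall fun A w hw => ?_, l - 1, sub_one_lt l, isSlow_bot ν _⟩
    rw [(Submodule.mem_bot ℝ).1 hw, map_zero]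
    exact zero_mem _
  obtain ⟨W, ⟨hinv, c, hcl, hW⟩, hmax⟩ :=
    (wellFounded_gt (α := Submodule ℝ V)).has_min S ⟨⊥, hbot⟩
  have htop : W ≠ ⊤ := by
    rintro rfl
    exact (hW.growthRate_le_of_top h hl).not_gt hcl
  refine ⟨W, hinv, ⟨c, hcl, hW⟩, htop, ?_⟩
  by_contra hslow
  have : Nontrivial Wᗮ :=
    (Submodule.nontrivial_iff_ne_bot).2 fun hb => htop (Submodule.orthogonal_eq_bot_iff.1 hb)
  obtain ⟨W', hW', hinv', c', hc'l, hslow'⟩ :=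
    exists_isSlow_of_not_hasUniformGrowth (h.map_compression hinv) hslow
  obtain ⟨b, hb, hbl⟩ := exists_between (max_lt hcl hc'l)
  exact hmax _ ⟨ae_mem_preserving_comap ν hinv hinv', b, hbl, hW.comap_compression h hinv hslow'
    ((le_max_left c c').trans hb.le) ((le_max_right c c').trans_lt hb)⟩
    (lt_comap_orthogonalProjectionOnto W hW')

lemma add_log_norm_le_meanLog_mul (h : IsBilipschitzLaw ν m M) {n : ℕ}
    (hlow : ∀ v : V, ‖v‖ = 1 → c ≤ meanLog ν n v) (k : ℕ) {v : V} (hv : v ≠ 0) :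
    k * c + Real.log ‖v‖ ≤ meanLog ν (k * n) v := by
  induction k with
  | zero => simp [meanLog_zero]
  | succ k ih =>
    have := add_meanLog_le_meanLog_add h hlow (k * n) hv
    rw [Nat.succ_mul, add_comm (k * n)]
    push_cast
    linarith

end MaximalSlowSubspace

section Area

variable {E F : Type*} [NormedAddCommGroup E] [InnerProductSpace ℝ E]
  [NormedAddCommGroup F] [InnerProductSpace ℝ F]

/-- The area of the parallelogram spanned by `x` and `y`, i.e. the norm of `x ∧ y`. -/
def area (x y : E) : ℝ := √(‖x‖ ^ 2 * ‖y‖ ^ 2 - inner ℝ x y ^ 2)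

lemma area_nonneg (x y : E) : 0 ≤ area x y := Real.sqrt_nonneg _

lemma area_sq (x y : E) : area x y ^ 2 = ‖x‖ ^ 2 * ‖y‖ ^ 2 - inner ℝ x y ^ 2 := by
  refine Real.sq_sqrt (sub_nonneg.2 ?_)
  rw [← mul_pow, ← sq_abs (inner ℝ x y)]
  gcongr
  exact abs_real_inner_le_norm x y

lemma area_le_mul_norm (x y : E) : area x y ≤ ‖x‖ * ‖y‖ := by
  refine Real.sqrt_le_iff.2 ⟨by positivity, ?_⟩
  rw [mul_pow]
  exact sub_le_self _ (sq_nonneg _)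

lemma area_zero_left (y : E) : area 0 y = 0 := by simp [area]

lemma area_zero_right (x : E) : area x 0 = 0 := by simp [area]

lemma continuous_area : Continuous fun p : E × E => area p.1 p.2 := by
  unfold area
  fun_prop

lemma area_sub_smul_right (x y : E) (c : ℝ) : area x (y - c • x) = area x y := by
  unfold area
  congr 1
  rw [norm_sub_sq_real, inner_sub_right, inner_smul_right, inner_smul_right,
    real_inner_self_eq_norm_sq, norm_smul, mul_pow, Real.norm_eq_abs, sq_abs, real_inner_comm y x]
  ring

lemma area_smul_smul (x y : E) (s t : ℝ) : area (s • x) (t • y) = |s * t| * area x y := by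
  unfold area
  rw [← Real.sqrt_sq_eq_abs, ← Real.sqrt_mul (sq_nonneg _), norm_smul, norm_smul,
    real_inner_smul_left, real_inner_smul_right, mul_pow, mul_pow, Real.norm_eq_abs,
    Real.norm_eq_abs, sq_abs, sq_abs]
  ring_nf

lemma exists_orthogonal_area_eq {x : E} (hx : x ≠ 0) (y : E) :
    ∃ c : ℝ, inner ℝ x (y - c • x) = 0 ∧ area x y = ‖x‖ * ‖y - c • x‖ := by
  have hx₀ : ‖x‖ ≠ 0 := norm_ne_zero_iff.2 hx
  have horth : inner ℝ x (y - (inner ℝ x y / ‖x‖ ^ 2) • x) = 0 := by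
    rw [inner_sub_right, real_inner_smul_right, real_inner_self_eq_norm_sq]
    field_simp
    ring
  refine ⟨_, horth, ?_⟩
  rw [← area_sub_smul_right x y (inner ℝ x y / ‖x‖ ^ 2), area, horth, ← mul_pow]
  rw [sq (0 : ℝ), mul_zero, sub_zero, Real.sqrt_sq (by positivity)]

variable (A : E →L[ℝ] F)

lemma area_apply_le {K : ℝ} (hK : ∀ p q : E, ‖p‖ = 1 → ‖q‖ = 1 → inner ℝ p q = 0 →
    area (A p) (A q) ≤ K) (x y : E) : area (A x) (A y) ≤ K * area x y := by
  rcases eq_or_ne x 0 with rfl | hx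
  · simp [area_zero_left]
  obtain ⟨c, horth, harea⟩ := exists_orthogonal_area_eq hx y
  set z := y - c • x
  have hshear : area (A x) (A y) = area (A x) (A z) := by
    rw [← area_sub_smul_right (A x) (A y) c, map_sub, map_smul]
  rw [hshear, harea]
  rcases eq_or_ne z 0 with hz | hz
  · simp [hz, area_zero_right]
  have hxy : area (A x) (A z) = ‖x‖ * ‖z‖ * area (A (‖x‖⁻¹ • x)) (A (‖z‖⁻¹ • z)) := by
    rw [map_smul, map_smul, area_smul_smul, abs_of_nonneg (by positivity)]
    field_simp
  rw [hxy, mul_comm K]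
  refine mul_le_mul_of_nonneg_left (hK _ _ (norm_inv_norm_smul hx) (norm_inv_norm_smul hz) ?_)
    (by positivity)
  rw [real_inner_smul_left, real_inner_smul_right, horth, mul_zero, mul_zero]

lemma area_apply_le_opNorm_sq {p q : E} (hp : ‖p‖ = 1) (hq : ‖q‖ = 1) :
    area (A p) (A q) ≤ ‖A‖ ^ 2 := by
  calc area (A p) (A q) ≤ ‖A p‖ * ‖A q‖ := area_le_mul_norm _ _
    _ ≤ (‖A‖ * ‖p‖) * (‖A‖ * ‖q‖) := by gcongr <;> exact A.le_opNorm _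
    _ = ‖A‖ ^ 2 := by rw [hp, hq]; ring

lemma sq_le_area_apply {m : ℝ} (hm : 0 < m) (hA : ∀ v, m * ‖v‖ ≤ ‖A v‖) {p q : E}
    (hp : ‖p‖ = 1) (hq : ‖q‖ = 1) (hpq : inner ℝ p q = 0) : m ^ 2 ≤ area (A p) (A q) := by
  have hAp : m ≤ ‖A p‖ := by simpa [hp] using hA p
  obtain ⟨c, -, harea⟩ := exists_orthogonal_area_eq (norm_pos_iff.1 (hm.trans_le hAp)) (A q)
  have hlong : 1 ≤ ‖q - c • p‖ := by
    have hsq := norm_sub_sq_real q (c • p)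
    rw [real_inner_smul_right, real_inner_comm, hpq, hq] at hsq
    exact le_of_sq_le_sq (by nlinarith [sq_nonneg ‖c • p‖]) (norm_nonneg _)
  rw [harea, sq, ← map_smul, ← map_sub]
  gcongr
  exact (le_mul_of_one_le_right hm.le hlong).trans (hA _)

end Area

section AreaNorm

variable {V : Type*} [NormedAddCommGroup V] [InnerProductSpace ℝ V] {A : V →L[ℝ] V} {m M : ℝ}

/-- The largest factor by which `A` expands areas, i.e. the operator norm of `A ∧ A`. It is the
product of the two largest singular values of `A`. -/
def areaNorm (A : V →L[ℝ] V) : ℝ :=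
  sSup {x | ∃ p q : V, ‖p‖ = 1 ∧ ‖q‖ = 1 ∧ inner ℝ p q = 0 ∧ x = area (A p) (A q)}

lemma area_le_areaNorm (A : V →L[ℝ] V) {p q : V} (hp : ‖p‖ = 1) (hq : ‖q‖ = 1)
    (hpq : inner ℝ p q = 0) : area (A p) (A q) ≤ areaNorm A := by
  refine le_csSup ⟨‖A‖ ^ 2, ?_⟩ ⟨p, q, hp, hq, hpq, rfl⟩
  rintro x ⟨p, q, hp, hq, -, rfl⟩
  exact area_apply_le_opNorm_sq A hp hq

lemma areaNorm_nonneg (A : V →L[ℝ] V) : 0 ≤ areaNorm A := by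
  refine Real.sSup_nonneg ?_
  rintro x ⟨p, q, -, -, -, rfl⟩
  exact area_nonneg _ _

lemma areaNorm_le {c : ℝ} (hc : 0 ≤ c) (hA : ∀ p q : V, ‖p‖ = 1 → ‖q‖ = 1 → inner ℝ p q = 0 →
    area (A p) (A q) ≤ c) : areaNorm A ≤ c := by
  refine Real.sSup_le ?_ hc
  rintro x ⟨p, q, hp, hq, hpq, rfl⟩
  exact hA p q hp hq hpq

lemma area_apply_le_areaNorm_mul (A : V →L[ℝ] V) (x y : V) :
    area (A x) (A y) ≤ areaNorm A * area x y :=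
  area_apply_le A (fun _ _ => area_le_areaNorm A) x y

lemma areaNorm_mul_le (A B : V →L[ℝ] V) : areaNorm (A * B) ≤ areaNorm A * areaNorm B :=
  areaNorm_le (mul_nonneg (areaNorm_nonneg A) (areaNorm_nonneg B)) fun p q hp hq hpq =>
    (area_apply_le_areaNorm_mul A (B p) (B q)).trans
      (mul_le_mul_of_nonneg_left (area_le_areaNorm B hp hq hpq) (areaNorm_nonneg A))

lemma measurable_areaNorm : Measurable (areaNorm : (V →L[ℝ] V) → ℝ) := by
  refine measurable_of_Iic fun c => ?_
  rcases lt_or_ge c 0 with hc | hc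
  · have hempty : areaNorm ⁻¹' Set.Iic c = (∅ : Set (V →L[ℝ] V)) :=
      Set.eq_empty_of_forall_notMem fun A hA => (hc.trans_le (areaNorm_nonneg A)).not_ge hA
    rw [hempty]
    exact MeasurableSet.empty
  · have hinter : areaNorm ⁻¹' Set.Iic c =
        ⋂ (p : V) (q : V) (_ : ‖p‖ = 1) (_ : ‖q‖ = 1) (_ : inner ℝ p q = 0),
          {A : V →L[ℝ] V | area (A p) (A q) ≤ c} := by
      ext A
      simp only [Set.mem_preimage, Set.mem_Iic, Set.mem_iInter]
      exact ⟨fun h p q hp hq hpq => (area_le_areaNorm A hp hq hpq).trans h, areaNorm_le hc⟩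
    rw [hinter]
    refine (isClosed_iInter fun p => isClosed_iInter fun q => isClosed_iInter fun _ =>
      isClosed_iInter fun _ => isClosed_iInter fun _ => ?_).measurableSet
    exact isClosed_le (continuous_area.comp (f := fun A : V →L[ℝ] V => (A p, A q)) (by fun_prop))
      continuous_const

lemma exists_orthonormal_pair (hd : 2 ≤ Module.finrank ℝ V) :
    ∃ p q : V, ‖p‖ = 1 ∧ ‖q‖ = 1 ∧ inner ℝ p q = 0 := by
  have : FiniteDimensional ℝ V := Module.finite_of_finrank_pos (by lia)
  let b := stdOrthonormalBasis ℝ V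
  exact ⟨b ⟨0, by lia⟩, b ⟨1, hd⟩, b.orthonormal.1 _, b.orthonormal.1 _,
    b.orthonormal.2 (by simp)⟩

lemma norm_mem_Icc [Nontrivial V] (hM : 0 ≤ M) (hA : A ∈ bilipschitz V m M) :
    ‖A‖ ∈ Set.Icc m M := by
  simpa only [restrictNorm_top] using restrictNorm_mem_Icc top_ne_bot hM hA

lemma areaNorm_mem_Icc (hd : 2 ≤ Module.finrank ℝ V) (hm : 0 < m) (hM : 0 ≤ M)
    (hA : A ∈ bilipschitz V m M) : areaNorm A ∈ Set.Icc (m ^ 2) (M ^ 2) := by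
  obtain ⟨p, q, hp, hq, hpq⟩ := exists_orthonormal_pair hd
  refine ⟨(sq_le_area_apply A hm (fun v => (hA v).1) hp hq hpq).trans
    (area_le_areaNorm A hp hq hpq), areaNorm_le (sq_nonneg _) fun p q hp hq _ => ?_⟩
  refine (area_apply_le_opNorm_sq A hp hq).trans (pow_le_pow_left₀ (norm_nonneg _) ?_ 2)
  exact A.opNorm_le_bound hM fun v => (hA v).2

end AreaNorm

section GrowthRates

lemma integral_convPow_add_le {G : Type*} [Monoid G] [MeasurableSpace G] [MeasurableMul₂ G]
    {ν : Measure G} [IsProbabilityMeasure ν] {f : G → ℝ} (hf : Measurable f)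
    (hint : ∀ n, Integrable f (convPow ν n)) {a b : ℕ} {s t : Set G}
    (hs : ∀ᵐ g ∂(convPow ν a), g ∈ s) (ht : ∀ᵐ g ∂(convPow ν b), g ∈ t)
    (hsub : ∀ g ∈ s, ∀ h ∈ t, f (g * h) ≤ f g + f h) :
    ∫ g, f g ∂(convPow ν (a + b)) ≤ ∫ g, f g ∂(convPow ν a) + ∫ g, f g ∂(convPow ν b) := by
  have hmul := hint (a + b)
  rw [convPow_add] at hmul ⊢
  unfold Measure.mconv at hmul ⊢
  rw [integrable_map_measure hf.aestronglyMeasurable (by fun_prop)] at hmul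
  rw [integral_map (by fun_prop) hf.aestronglyMeasurable]
  have hfst : Integrable (fun p : G × G => f p.1) ((convPow ν a).prod (convPow ν b)) :=
    (hint a).comp_fst _
  have hsnd : Integrable (fun p : G × G => f p.2) ((convPow ν a).prod (convPow ν b)) :=
    (hint b).comp_snd _
  calc ∫ p : G × G, f (p.1 * p.2) ∂((convPow ν a).prod (convPow ν b))
      ≤ ∫ p : G × G, (f p.1 + f p.2) ∂((convPow ν a).prod (convPow ν b)) := by
        refine integral_mono_ae hmul (hfst.add hsnd) ?_
        filter_upwards [Measure.quasiMeasurePreserving_fst.ae hs,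
          Measure.quasiMeasurePreserving_snd.ae ht] with p hp₁ hp₂
        exact hsub _ hp₁ _ hp₂
    _ = ∫ g, f g ∂(convPow ν a) + ∫ g, f g ∂(convPow ν b) := by
        rw [integral_add hfst hsnd, integral_fun_fst, integral_fun_snd]
        simp

lemma exists_hasGrowthRate_of_subadditive {G : Type*} [Monoid G] [MeasurableSpace G]
    {ν : Measure G} {f : G → ℝ} {C : ℝ} (hbd : ∀ n : ℕ, |∫ g, f g ∂(convPow ν n)| ≤ C * n)
    (hsub : Subadditive fun n => ∫ g, f g ∂(convPow ν n)) : ∃ l, HasGrowthRate f ν l := by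
  refine ⟨hsub.lim, (hsub.tendsto_lim ⟨-|C|, ?_⟩).congr fun n => div_eq_inv_mul _ _⟩
  rintro _ ⟨n, rfl⟩
  refine (abs_le.1 ?_).1
  rw [abs_div, Nat.abs_cast]
  refine div_le_of_le_mul₀ n.cast_nonneg (abs_nonneg C) ((hbd n).trans ?_)
  exact mul_le_mul_of_nonneg_right (le_abs_self C) n.cast_nonneg

variable {V : Type*} [NormedAddCommGroup V] [InnerProductSpace ℝ V] [FiniteDimensional ℝ V]
  {ν : Measure (V →L[ℝ] V)} {m M : ℝ}

lemma abs_log_le_of_mem_Icc_pow {k : ℕ} {x : ℝ} (hm : 0 < m) (hx : x ∈ Set.Icc (m ^ k) (M ^ k)) :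
    |Real.log x| ≤ k * (|Real.log m| + |Real.log M|) := by
  have hmk : 0 < m ^ k := pow_pos hm k
  have hlow := Real.log_le_log hmk hx.1
  have hup := Real.log_le_log (hmk.trans_le hx.1) hx.2
  rw [Real.log_pow] at hlow hup
  have : 0 ≤ (k : ℝ) := k.cast_nonneg
  refine abs_le.2 ⟨?_, ?_⟩
  · nlinarith [neg_abs_le (Real.log m), abs_nonneg (Real.log M)]
  · nlinarith [le_abs_self (Real.log M), abs_nonneg (Real.log m)]

lemma exists_hasGrowthRate_log (h : IsBilipschitzLaw ν m M) {N : (V →L[ℝ] V) → ℝ}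
    (hN : Measurable N) {k : ℕ} (hmul : ∀ A B, N (A * B) ≤ N A * N B)
    (hbd : ∀ {m M A}, 0 < m → 0 < M → A ∈ bilipschitz V m M → N A ∈ Set.Icc (m ^ k) (M ^ k)) :
    ∃ l, HasGrowthRate (fun A => Real.log (N A)) ν l := by
  have := h.prob
  have hlog : ∀ n : ℕ, ∀ A ∈ bilipschitz V (m ^ n) (M ^ n),
      |Real.log (N A)| ≤ k * (|Real.log m| + |Real.log M|) * n := fun n A hA => by
    have hN' := hbd (h.convPow n).pos (h.convPow n).pos' hA
    rw [← pow_mul, ← pow_mul, mul_comm n] at hN'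
    simpa only [Nat.cast_mul, mul_right_comm] using abs_log_le_of_mem_Icc_pow h.pos hN'
  refine exists_hasGrowthRate_of_subadditive (C := k * (|Real.log m| + |Real.log M|))
    (fun n => ?_) fun a b => ?_
  · have := h.convPow n
    have := this.prob
    simpa using norm_integral_le_of_norm_le_const (f := fun A => Real.log (N A))
      ((h.convPow n).ae_mem.mono (hlog n))
  · have hposN : ∀ n, ∀ A ∈ bilipschitz V (m ^ n) (M ^ n), 0 < N A := fun n A hA =>
      (pow_pos (h.convPow n).pos k).trans_le (hbd (h.convPow n).pos (h.convPow n).pos' hA).1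
    refine integral_convPow_add_le (by fun_prop) (fun n => (h.convPow n).integrable (by fun_prop)
      (hlog n)) (h.convPow a).ae_mem (h.convPow b).ae_mem fun A hA B hB => ?_
    have hAB : A * B ∈ bilipschitz V (m ^ (a + b)) (M ^ (a + b)) := by
      rw [pow_add, pow_add]
      exact mul_mem_bilipschitz (h.convPow a).pos.le (h.convPow a).pos'.le hA hB
    rw [← Real.log_mul (hposN a A hA).ne' (hposN b B hB).ne']
    exact Real.log_le_log (hposN _ _ hAB) (hmul A B)

lemma exists_hasGrowthRate_log_norm [Nontrivial V] (h : IsBilipschitzLaw ν m M) :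
    ∃ l, HasGrowthRate (fun A => Real.log ‖A‖) ν l :=
  exists_hasGrowthRate_log h measurable_norm (k := 1) norm_mul_le fun _ hM hA => by
    simpa only [pow_one] using norm_mem_Icc hM.le hA

lemma exists_hasGrowthRate_log_areaNorm (hd : 2 ≤ Module.finrank ℝ V)
    (h : IsBilipschitzLaw ν m M) : ∃ l, HasGrowthRate (fun A => Real.log (areaNorm A)) ν l :=
  exists_hasGrowthRate_log h measurable_areaNorm areaNorm_mul_le fun hm hM hA =>
    areaNorm_mem_Icc hd hm hM.le hA

end GrowthRates

section ProjectiveDistance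

variable {E F : Type*} [NormedAddCommGroup E] [InnerProductSpace ℝ E]
  [NormedAddCommGroup F] [InnerProductSpace ℝ F]

/-- The distance between the lines spanned by `x` and `y`, namely the sine of their angle; it is
`0` by convention when `x` or `y` vanishes. -/
def projDist (x y : E) : ℝ := area x y / (‖x‖ * ‖y‖)

lemma projDist_nonneg (x y : E) : 0 ≤ projDist x y := div_nonneg (area_nonneg _ _) (by positivity)

lemma projDist_le_one (x y : E) : projDist x y ≤ 1 :=
  div_le_one_of_le₀ (area_le_mul_norm _ _) (by positivity)

lemma projDist_rpow_nonneg (x y : E) (α : ℝ) : 0 ≤ projDist x y ^ α :=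
  Real.rpow_nonneg (projDist_nonneg _ _) _

lemma projDist_rpow_le_one (x y : E) {α : ℝ} (hα : 0 ≤ α) : projDist x y ^ α ≤ 1 :=
  Real.rpow_le_one (projDist_nonneg _ _) (projDist_le_one _ _) hα

lemma projDist_le_of_area_le {x y : E} {x' y' : F} (hx : x ≠ 0) (hy : y ≠ 0) {K : ℝ}
    (hK : area x' y' ≤ K * area x y) :
    projDist x' y' ≤ K * (‖x‖ * ‖y‖) / (‖x'‖ * ‖y'‖) * projDist x y := by
  have : 0 < ‖x‖ * ‖y‖ := mul_pos (norm_pos_iff.2 hx) (norm_pos_iff.2 hy)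
  calc projDist x' y' ≤ K * area x y / (‖x'‖ * ‖y'‖) := by unfold projDist; gcongr
    _ = K * (‖x‖ * ‖y‖) / (‖x'‖ * ‖y'‖) * projDist x y := by unfold projDist; field_simp

variable {V : Type*} [NormedAddCommGroup V] [InnerProductSpace ℝ V] {A : V →L[ℝ] V} {m M α : ℝ}

lemma projDist_apply_le (hm : 0 < m) (hM : 0 ≤ M) (hA : A ∈ bilipschitz V m M) {x y : V}
    (hx : x ≠ 0) (hy : y ≠ 0) : projDist (A x) (A y) ≤ (M / m) ^ 2 * projDist x y := by
  have := norm_pos_iff.2 hx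
  have := norm_pos_iff.2 hy
  have hK : area (A x) (A y) ≤ M ^ 2 * area x y := by
    refine area_apply_le A (fun p q hp hq _ => (area_apply_le_opNorm_sq A hp hq).trans ?_) x y
    exact pow_le_pow_left₀ (norm_nonneg _) (A.opNorm_le_bound hM fun v => (hA v).2) 2
  refine (projDist_le_of_area_le hx hy hK).trans
    (mul_le_mul_of_nonneg_right ?_ (projDist_nonneg _ _))
  calc M ^ 2 * (‖x‖ * ‖y‖) / (‖A x‖ * ‖A y‖)
      ≤ M ^ 2 * (‖x‖ * ‖y‖) / ((m * ‖x‖) * (m * ‖y‖)) := by gcongr <;> exact (hA _).1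
    _ = (M / m) ^ 2 := by field_simp

lemma projDist_apply_rpow_le (hm : 0 < m) (hmM : m ≤ M) (hA : A ∈ bilipschitz V m M)
    (hα : 0 ≤ α) (hα₁ : α ≤ 1) {x y : V} (hx : x ≠ 0) (hy : y ≠ 0) :
    projDist (A x) (A y) ^ α ≤ (M / m) ^ 2 * projDist x y ^ α := by
  have hM : 0 ≤ M := hm.le.trans hmM
  have hone : 1 ≤ (M / m) ^ 2 := one_le_pow₀ ((one_le_div hm).2 hmM)
  calc projDist (A x) (A y) ^ α ≤ ((M / m) ^ 2 * projDist x y) ^ α :=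
        Real.rpow_le_rpow (projDist_nonneg _ _) (projDist_apply_le hm hM hA hx hy) hα
    _ = ((M / m) ^ 2) ^ α * projDist x y ^ α :=
        Real.mul_rpow (by positivity) (projDist_nonneg _ _)
    _ ≤ (M / m) ^ 2 * projDist x y ^ α :=
        mul_le_mul_of_nonneg_right (Real.rpow_le_self_of_one_le hone hα₁)
          (projDist_rpow_nonneg _ _ _)

end ProjectiveDistance

section MeanContraction

variable {V : Type*} [NormedAddCommGroup V] [InnerProductSpace ℝ V]
  {ν : Measure (V →L[ℝ] V)} {m M α : ℝ}

/-- The `α`-th moment of the projective distance of `x` and `y` after `k` random steps. -/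
def projDistMoment (ν : Measure (V →L[ℝ] V)) (α : ℝ) (k : ℕ) (x y : V) : ℝ :=
  ∫ A, projDist (A x) (A y) ^ α ∂(convPow ν k)

lemma projDistMoment_zero (x y : V) : projDistMoment ν α 0 x y = projDist x y ^ α := by
  rw [projDistMoment, convPow_zero, integral_dirac, one_apply_eq_self, one_apply_eq_self]

lemma projDistMoment_nonneg (k : ℕ) (x y : V) : 0 ≤ projDistMoment ν α k x y :=
  integral_nonneg fun _ => projDist_rpow_nonneg _ _ _

lemma measurable_projDist_apply_rpow (x y : V) :
    Measurable fun A : V →L[ℝ] V => projDist (A x) (A y) ^ α := by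
  have harea : Continuous fun A : V →L[ℝ] V => area (A x) (A y) :=
    continuous_area.comp (f := fun A : V →L[ℝ] V => (A x, A y)) (by fun_prop)
  have hnorm : Continuous fun A : V →L[ℝ] V => ‖A x‖ * ‖A y‖ := by fun_prop
  exact (harea.measurable.div hnorm.measurable).pow_const α

lemma IsBilipschitzLaw.integrable_projDist_apply_rpow (h : IsBilipschitzLaw ν m M) (hα : 0 ≤ α)
    (x y : V) : Integrable (fun A : V →L[ℝ] V => projDist (A x) (A y) ^ α) ν :=
  h.integrable (measurable_projDist_apply_rpow x y) (C := 1) fun A _ => by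
    rw [abs_of_nonneg (projDist_rpow_nonneg _ _ _)]
    exact projDist_rpow_le_one _ _ hα

variable [FiniteDimensional ℝ V]

lemma projDistMoment_add_le (h : IsBilipschitzLaw ν m M) (hα : 0 ≤ α) {a : ℕ} {K : ℝ}
    (hK : ∀ x y : V, x ≠ 0 → y ≠ 0 → projDistMoment ν α a x y ≤ K * projDist x y ^ α) (b : ℕ)
    {x y : V} (hx : x ≠ 0) (hy : y ≠ 0) :
    projDistMoment ν α (a + b) x y ≤ K * projDistMoment ν α b x y := by
  have := h.prob
  have hb := h.convPow b
  calc projDistMoment ν α (a + b) x y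
      = ∫ B, projDistMoment ν α a (B x) (B y) ∂(convPow ν b) :=
        integral_convPow_add (measurable_projDist_apply_rpow x y)
          ((h.convPow (a + b)).integrable_projDist_apply_rpow hα x y)
    _ ≤ ∫ B, K * projDist (B x) (B y) ^ α ∂(convPow ν b) := by
        refine integral_mono_of_nonneg (Eventually.of_forall fun B => projDistMoment_nonneg _ _ _)
          ((hb.integrable_projDist_apply_rpow hα x y).const_mul K) ?_
        filter_upwards [hb.ae_mem] with B hB
        exact hK _ _ (apply_ne_zero_of_mem_bilipschitz hb.pos hB hx)
          (apply_ne_zero_of_mem_bilipschitz hb.pos hB hy)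
    _ = K * projDistMoment ν α b x y := integral_const_mul _ _

lemma projDistMoment_mul_le (h : IsBilipschitzLaw ν m M) (hα : 0 ≤ α) {n : ℕ} {θ : ℝ}
    (hθ : 0 ≤ θ)
    (hn : ∀ x y : V, x ≠ 0 → y ≠ 0 → projDistMoment ν α n x y ≤ θ * projDist x y ^ α) (q : ℕ)
    {x y : V} (hx : x ≠ 0) (hy : y ≠ 0) :
    projDistMoment ν α (q * n) x y ≤ θ ^ q * projDist x y ^ α := by
  induction q generalizing x y with
  | zero => simp [projDistMoment_zero]
  | succ q ih =>
    rw [Nat.succ_mul, pow_succ, mul_assoc]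
    exact (projDistMoment_add_le h hα (fun _ _ => ih) n hx hy).trans
      (mul_le_mul_of_nonneg_left (hn x y hx hy) (pow_nonneg hθ q))

lemma projDistMoment_le (h : IsBilipschitzLaw ν m M) (hα : 0 ≤ α) (hα₁ : α ≤ 1) (k : ℕ) {x y : V}
    (hx : x ≠ 0) (hy : y ≠ 0) :
    projDistMoment ν α k x y ≤ ((M / m) ^ k) ^ 2 * projDist x y ^ α := by
  have hk := h.convPow k
  have := hk.prob
  have hle : ∀ᵐ A ∂(convPow ν k),
      projDist (A x) (A y) ^ α ≤ ((M / m) ^ k) ^ 2 * projDist x y ^ α := by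
    filter_upwards [hk.ae_mem] with A hA
    rw [div_pow]
    exact projDist_apply_rpow_le hk.pos (hk.le_one.trans hk.one_le) hA hα hα₁ hx hy
  calc projDistMoment ν α k x y
      ≤ ∫ _, ((M / m) ^ k) ^ 2 * projDist x y ^ α ∂(convPow ν k) :=
        integral_mono_ae (hk.integrable_projDist_apply_rpow hα x y) (integrable_const _) hle
    _ = ((M / m) ^ k) ^ 2 * projDist x y ^ α := by simp

/-- The law `ν` contracts the `α`-th power of the projective distance in the mean, at the geometric
rate `ρ` and uniformly over all pairs of lines. -/
structure IsMeanContracting (ν : Measure (V →L[ℝ] V)) (α K ρ : ℝ) : Prop where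
  exponent_pos : 0 < α
  exponent_le_one : α ≤ 1
  const_pos : 0 < K
  rate_pos : 0 < ρ
  rate_lt_one : ρ < 1
  projDistMoment_le : ∀ (k : ℕ) (x y : V), x ≠ 0 → y ≠ 0 →
    projDistMoment ν α k x y ≤ K * ρ ^ k * projDist x y ^ α

lemma exists_isMeanContracting_of_block (h : IsBilipschitzLaw ν m M) {n : ℕ} (hn : 1 ≤ n)
    (hα : 0 < α) (hα₁ : α ≤ 1) {θ : ℝ} (hθ : 0 < θ) (hθ₁ : θ < 1)
    (hcontr : ∀ x y : V, x ≠ 0 → y ≠ 0 → projDistMoment ν α n x y ≤ θ * projDist x y ^ α) :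
    ∃ K ρ : ℝ, IsMeanContracting ν α K ρ := by
  have hdist : 1 ≤ M / m := (one_le_div h.pos).2 (h.le_one.trans h.one_le)
  obtain ⟨ρ, hρ, hρ₁, hρn⟩ : ∃ ρ : ℝ, 0 < ρ ∧ ρ < 1 ∧ ρ ^ n = θ :=
    ⟨θ ^ (n : ℝ)⁻¹, Real.rpow_pos_of_pos hθ _, Real.rpow_lt_one hθ.le hθ₁ (by positivity),
      Real.rpow_inv_natCast_pow hθ.le (by lia)⟩
  set κ := ((M / m) ^ n) ^ 2
  have : 0 < κ := by positivity
  refine ⟨κ / θ, ρ, hα, hα₁, by positivity, hρ, hρ₁, fun k x y hx hy => ?_⟩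
  have hd := projDist_rpow_nonneg x y α
  have hrem : projDistMoment ν α (k % n) x y ≤ κ * projDist x y ^ α := by
    refine (projDistMoment_le h hα.le hα₁ _ hx hy).trans (mul_le_mul_of_nonneg_right ?_ hd)
    exact pow_le_pow_left₀ (by positivity) (pow_le_pow_right₀ hdist (Nat.mod_lt k hn).le) 2
  have hquot : θ ^ (k / n) ≤ ρ ^ k / θ := by
    rw [le_div_iff₀ hθ, ← pow_succ, ← hρn, ← pow_mul]
    exact pow_le_pow_of_le_one hρ.le hρ₁.le (Nat.lt_mul_div_succ k hn).le
  calc projDistMoment ν α k x y = projDistMoment ν α (k / n * n + k % n) x y := by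
        rw [Nat.div_add_mod']
    _ ≤ θ ^ (k / n) * projDistMoment ν α (k % n) x y :=
        projDistMoment_add_le h hα.le
          (fun _ _ => projDistMoment_mul_le h hα.le hθ.le hcontr (k / n)) _ hx hy
    _ ≤ ρ ^ k / θ * (κ * projDist x y ^ α) := by gcongr; exact projDistMoment_nonneg _ _ _
    _ = κ / θ * ρ ^ k * projDist x y ^ α := by ring

end MeanContraction

section QuotientContraction

variable {V : Type*} [NormedAddCommGroup V] [InnerProductSpace ℝ V] [FiniteDimensional ℝ V]
  {W : Submodule ℝ V} {A : V →L[ℝ] V} {m M α : ℝ} {x y : Wᗮ}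

lemma area_compression_apply_le (A : V →L[ℝ] V) (x y : Wᗮ) :
    area (compression W A x) (compression W A y) ≤ areaNorm A * area x y := by
  have hproj := area_apply_le (Wᗮ.orthogonalProjectionOnto) (K := 1) (fun p q hp hq _ =>
    (area_apply_le_opNorm_sq _ hp hq).trans
      (pow_le_one₀ (norm_nonneg _) (Submodule.orthogonalProjectionOnto_norm_le _))) (A x) (A y)
  rw [one_mul] at hproj
  exact hproj.trans (area_apply_le_areaNorm_mul A x y)

/-- The logarithm of the factor by which `compression W A` expands `projDist x y`, with the area
expansion replaced by its bound `areaNorm A`. -/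
def logDistortion (W : Submodule ℝ V) (x y : Wᗮ) (A : V →L[ℝ] V) : ℝ :=
  Real.log (areaNorm A) - Real.log ‖compression W A x‖ - Real.log ‖compression W A y‖ +
    (Real.log ‖x‖ + Real.log ‖y‖)

lemma measurable_log_norm_compression_apply (x : Wᗮ) :
    Measurable fun A : V →L[ℝ] V => Real.log ‖compression W A x‖ :=
  (measurable_log_norm_apply x).comp (continuous_compression W).measurable

lemma measurable_logDistortion (x y : Wᗮ) : Measurable (logDistortion W x y) :=
  (((Real.measurable_log.comp measurable_areaNorm).sub
    (measurable_log_norm_compression_apply x)).sub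
    (measurable_log_norm_compression_apply y)).add_const _

lemma abs_logDistortion_le (hd : 2 ≤ Module.finrank ℝ V) (hm : 0 < m) (hM : 0 ≤ M)
    (hA : A ∈ preserving W) (hA' : A ∈ bilipschitz V m M) (hx : x ≠ 0) (hy : y ≠ 0) :
    |logDistortion W x y A| ≤ 4 * (|Real.log m| + |Real.log M|) := by
  have hcomp := compression_mem_bilipschitz hm hA hA'
  have harea := abs_le.1 (abs_log_le_of_mem_Icc_pow hm (areaNorm_mem_Icc hd hm hM hA'))
  have hx' := log_norm_apply_mem_Icc hm hcomp hx
  have hy' := log_norm_apply_mem_Icc hm hcomp hy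
  have hlogm := neg_abs_le (Real.log m)
  have hlogM := le_abs_self (Real.log M)
  have hm₀ := abs_nonneg (Real.log m)
  have hM₀ := abs_nonneg (Real.log M)
  push_cast at harea
  unfold logDistortion
  exact abs_le.2 ⟨by linarith [harea.1, hx'.2, hy'.2], by linarith [harea.2, hx'.1, hy'.1]⟩

lemma projDist_compression_apply_rpow_le (hd : 2 ≤ Module.finrank ℝ V) (hm : 0 < m) (hM : 0 ≤ M)
    (hA : A ∈ preserving W) (hA' : A ∈ bilipschitz V m M) (hα : 0 ≤ α) (hx : x ≠ 0)
    (hy : y ≠ 0) :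
    projDist (compression W A x) (compression W A y) ^ α ≤
      Real.exp (α * logDistortion W x y A) * projDist x y ^ α := by
  have hcomp := compression_mem_bilipschitz hm hA hA'
  have hAx := norm_pos_iff.2 (apply_ne_zero_of_mem_bilipschitz hm hcomp hx)
  have hAy := norm_pos_iff.2 (apply_ne_zero_of_mem_bilipschitz hm hcomp hy)
  have harea : 0 < areaNorm A := (pow_pos hm 2).trans_le (areaNorm_mem_Icc hd hm hM hA').1
  have hexp : Real.exp (logDistortion W x y A) =
      areaNorm A * (‖x‖ * ‖y‖) / (‖compression W A x‖ * ‖compression W A y‖) := by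
    unfold logDistortion
    rw [Real.exp_add, Real.exp_sub, Real.exp_sub, Real.exp_log harea, Real.exp_log hAx,
      Real.exp_log hAy, Real.exp_add, Real.exp_log (norm_pos_iff.2 hx),
      Real.exp_log (norm_pos_iff.2 hy)]
    field_simp
  have hdist := projDist_le_of_area_le hx hy (area_compression_apply_le A x y)
  rw [← hexp] at hdist
  calc projDist (compression W A x) (compression W A y) ^ α
      ≤ (Real.exp (logDistortion W x y A) * projDist x y) ^ α :=
        Real.rpow_le_rpow (projDist_nonneg _ _) hdist hα
    _ = Real.exp (α * logDistortion W x y A) * projDist x y ^ α := by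
        rw [Real.mul_rpow (Real.exp_pos _).le (projDist_nonneg _ _), ← Real.exp_mul, mul_comm α]

variable {ν : Measure (V →L[ℝ] V)} {l l₁₂ : ℝ}

lemma integral_logDistortion (h : IsBilipschitzLaw ν m M) (hW : ∀ᵐ A ∂ν, A ∈ preserving W)
    (hd : 2 ≤ Module.finrank ℝ V) (n : ℕ) (hx : x ≠ 0) (hy : y ≠ 0) :
    ∫ A, logDistortion W x y A ∂(convPow ν n) = ∫ A, Real.log (areaNorm A) ∂(convPow ν n) -
      meanLog (ν.map (compression W)) n x - meanLog (ν.map (compression W)) n y +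
      (Real.log ‖x‖ + Real.log ‖y‖) := by
  have := h.prob
  have hn := h.convPow n
  have hcomp := (continuous_compression W).measurable.aemeasurable (μ := convPow ν n)
  have hmean (u : Wᗮ) : meanLog (ν.map (compression W)) n u =
      ∫ A, Real.log ‖compression W A u‖ ∂(convPow ν n) := by
    rw [meanLog, ← map_compression_convPow hW,
      integral_map hcomp (measurable_log_norm_apply u).aestronglyMeasurable]
  have hlog {u : Wᗮ} (hu : u ≠ 0) :
      Integrable (fun A => Real.log ‖compression W A u‖) (convPow ν n) := by
    have hint := ((h.map_compression hW).convPow n).integrable_log_norm_apply hu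
    rw [← map_compression_convPow hW] at hint
    exact hint.comp_aemeasurable hcomp
  have harea : Integrable (fun A => Real.log (areaNorm A)) (convPow ν n) :=
    hn.integrable (Real.measurable_log.comp measurable_areaNorm) fun A hA =>
      abs_log_le_of_mem_Icc_pow hn.pos (areaNorm_mem_Icc hd hn.pos hn.pos'.le hA)
  have hsub : Integrable (fun A => Real.log (areaNorm A) - Real.log ‖compression W A x‖)
      (convPow ν n) := harea.sub (hlog hx)
  have hsub' : Integrable (fun A => Real.log (areaNorm A) - Real.log ‖compression W A x‖ -
      Real.log ‖compression W A y‖) (convPow ν n) := hsub.sub (hlog hy)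
  simp only [logDistortion]
  rw [integral_add hsub' (integrable_const _), integral_sub hsub (hlog hy),
    integral_sub harea (hlog hx), hmean, hmean]
  simp

lemma projDistMoment_compression_le (h : IsBilipschitzLaw ν m M)
    (hW : ∀ᵐ A ∂ν, A ∈ preserving W) (hd : 2 ≤ Module.finrank ℝ V) (n : ℕ) (hα : 0 ≤ α)
    (hx : x ≠ 0) (hy : y ≠ 0) :
    projDistMoment (ν.map (compression W)) α n x y ≤
      (∫ A, Real.exp (α * logDistortion W x y A) ∂(convPow ν n)) * projDist x y ^ α := by
  have := h.prob
  have hn := h.convPow n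
  have := hn.prob
  have hpres := ae_mem_convPow (isClosed_preserving W).measurableSet hW n
  have hexp := integrable_exp_mul (measurable_logDistortion x y).aestronglyMeasurable
    (show ∀ᵐ A ∂(convPow ν n), |logDistortion W x y A| ≤ _ by
      filter_upwards [hn.ae_mem, hpres] with A hA hA'
      exact abs_logDistortion_le hd hn.pos hn.pos'.le hA' hA hx hy) α
  rw [projDistMoment, ← map_compression_convPow hW,
    integral_map (continuous_compression W).measurable.aemeasurable
      (measurable_projDist_apply_rpow x y).aestronglyMeasurable, ← integral_mul_const]
  refine integral_mono_of_nonneg (Eventually.of_forall fun A => projDist_rpow_nonneg _ _ _)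
    (hexp.mul_const _) ?_
  filter_upwards [hn.ae_mem, hpres] with A hA hA'
  exact projDist_compression_apply_rpow_le hd hn.pos hn.pos'.le hA' hA hα hx hy

variable [MeasurableSpace V] [BorelSpace V]

lemma exists_integral_logDistortion_le (h : IsBilipschitzLaw ν m M)
    (hW : ∀ᵐ A ∂ν, A ∈ preserving W) (hd : 2 ≤ Module.finrank ℝ V)
    (hl₁₂ : HasGrowthRate (fun A => Real.log (areaNorm A)) ν l₁₂)
    (hl : HasUniformGrowth (ν.map (compression W)) l) (hgap : l₁₂ < 2 * l) :
    ∃ n : ℕ, 1 ≤ n ∧ ∃ δ > 0, ∀ x y : Wᗮ, x ≠ 0 → y ≠ 0 →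
      ∫ A, logDistortion W x y A ∂(convPow ν n) ≤ -δ := by
  obtain ⟨b, hb, hbl⟩ := exists_between hgap
  obtain ⟨c, hbc, hcl⟩ := exists_between (show b / 2 < l by linarith)
  obtain ⟨n₀, hn₀, hlow⟩ := hl c hcl
  obtain ⟨N, hN⟩ := eventually_atTop.1 (hl₁₂.eventually (gt_mem_nhds hb))
  have hn : 1 ≤ (N + 1) * n₀ := Nat.mul_pos N.succ_pos hn₀
  have hn' : (0 : ℝ) < ((N + 1) * n₀ : ℕ) := by exact_mod_cast hn
  refine ⟨(N + 1) * n₀, hn, ((N + 1) * n₀ : ℕ) * (2 * c - b),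
    mul_pos hn' (by linarith), fun x y hx hy => ?_⟩
  have harea := hN ((N + 1) * n₀) (by nlinarith)
  rw [inv_mul_lt_iff₀ hn'] at harea
  have hmean {u : Wᗮ} (hu : u ≠ 0) := add_log_norm_le_meanLog_mul (h.map_compression hW) hlow
    (N + 1) hu
  have hmx := hmean hx
  have hmy := hmean hy
  rw [integral_logDistortion h hW hd _ hx hy]
  push_cast at harea hmx hmy ⊢
  linarith

lemma exists_isMeanContracting_compression (h : IsBilipschitzLaw ν m M)
    (hW : ∀ᵐ A ∂ν, A ∈ preserving W) (hd : 2 ≤ Module.finrank ℝ V)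
    (hl₁₂ : HasGrowthRate (fun A => Real.log (areaNorm A)) ν l₁₂)
    (hl : HasUniformGrowth (ν.map (compression W)) l) (hgap : l₁₂ < 2 * l) :
    ∃ α K ρ : ℝ, IsMeanContracting (ν.map (compression W)) α K ρ := by
  have := h.prob
  obtain ⟨n, hn₁, δ, hδ, hmean⟩ := exists_integral_logDistortion_le h hW hd hl₁₂ hl hgap
  have hn := h.convPow n
  obtain ⟨α, hα, hα₁, hαB, hαη⟩ :=
    exists_small_exponent (B := 4 * (|Real.log (m ^ n)| + |Real.log (M ^ n)|)) (half_pos hδ)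
  have hcontr : ∀ x y : Wᗮ, x ≠ 0 → y ≠ 0 →
      projDistMoment (ν.map (compression W)) α n x y ≤
        Real.exp (α * (-δ + δ / 2)) * projDist x y ^ α := by
    intro x y hx hy
    have := hn.prob
    refine (projDistMoment_compression_le h hW hd n hα.le hx hy).trans
      (mul_le_mul_of_nonneg_right ?_ (projDist_rpow_nonneg _ _ _))
    refine integral_exp_mul_le_exp (measurable_logDistortion x y).aestronglyMeasurable ?_ hα.le hαB
      (hmean x y hx hy) hαη
    filter_upwards [hn.ae_mem, ae_mem_convPow (isClosed_preserving W).measurableSet hW n]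
      with A hA hA' using abs_logDistortion_le hd hn.pos hn.pos'.le hA' hA hx hy
  have hθ₁ : Real.exp (α * (-δ + δ / 2)) < 1 := Real.exp_lt_one_iff.2 (by nlinarith)
  exact ⟨α, exists_isMeanContracting_of_block (h.map_compression hW) hn₁ hα hα₁ (Real.exp_pos _) hθ₁
    hcontr⟩

end QuotientContraction

section MarkovOperator

variable {V : Type*} [NormedAddCommGroup V] [InnerProductSpace ℝ V]
  {ν : Measure (V →L[ℝ] V)} {m M α C C' : ℝ} {ψ ψ' : V → ℝ} {x y : V}

/-- The Markov operator of the random walk `x ↦ A x`, where `A` has law `ν`. -/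
def markov (ν : Measure (V →L[ℝ] V)) (ψ : V → ℝ) (x : V) : ℝ := ∫ A, ψ (A x) ∂ν

lemma markov_convPow_zero (ψ : V → ℝ) (x : V) : markov (convPow ν 0) ψ x = ψ x := by
  rw [markov, convPow_zero, integral_dirac, one_apply_eq_self]

lemma abs_markov_le [IsProbabilityMeasure ν] {B : ℝ} (hψ : ∀ x, |ψ x| ≤ B) (x : V) :
    |markov ν ψ x| ≤ B := by
  simpa [markov] using norm_integral_le_of_norm_le_const (μ := ν) (f := fun A => ψ (A x))
    (Eventually.of_forall fun A => hψ (A x))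

variable [MeasurableSpace V]

/-- Measurable functions that are `α`-Hölder with constant `C` for the projective distance, away
from the origin. -/
structure IsProjHolder (α C : ℝ) (ψ : V → ℝ) : Prop where
  measurable : Measurable ψ
  abs_sub_le : ∀ x y, x ≠ 0 → y ≠ 0 → |ψ x - ψ y| ≤ C * projDist x y ^ α

namespace IsProjHolder

lemma zero (hC : 0 ≤ C) : IsProjHolder α C (0 : V → ℝ) where
  measurable := measurable_zero
  abs_sub_le x y _ _ := by
    simpa using mul_nonneg hC (projDist_rpow_nonneg x y α)

lemma add (h : IsProjHolder α C ψ) (h' : IsProjHolder α C' ψ') :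
    IsProjHolder α (C + C') (ψ + ψ') where
  measurable := h.measurable.add h'.measurable
  abs_sub_le x y hx hy := by
    rw [Pi.add_apply, Pi.add_apply, add_sub_add_comm, add_mul]
    exact (abs_add_le _ _).trans (add_le_add (h.abs_sub_le x y hx hy) (h'.abs_sub_le x y hx hy))

lemma neg (h : IsProjHolder α C ψ) : IsProjHolder α C (-ψ) where
  measurable := h.measurable.neg
  abs_sub_le x y hx hy := by
    rw [Pi.neg_apply, Pi.neg_apply, neg_sub_neg, abs_sub_comm]
    exact h.abs_sub_le x y hx hy

lemma sub (h : IsProjHolder α C ψ) (h' : IsProjHolder α C' ψ') :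
    IsProjHolder α (C + C') (ψ - ψ') :=
  sub_eq_add_neg ψ ψ' ▸ h.add h'.neg

lemma mono (h : IsProjHolder α C ψ) (hC : C ≤ C') : IsProjHolder α C' ψ where
  measurable := h.measurable
  abs_sub_le x y hx hy := (h.abs_sub_le x y hx hy).trans
    (mul_le_mul_of_nonneg_right hC (projDist_rpow_nonneg x y α))

lemma abs_le_abs_add (h : IsProjHolder α C ψ) (hα : 0 ≤ α) (hC : 0 ≤ C) (hx : x ≠ 0)
    (hy : y ≠ 0) : |ψ x| ≤ |ψ y| + C := by
  have hdiff := (h.abs_sub_le x y hx hy).trans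
    (mul_le_of_le_one_right hC (projDist_rpow_le_one x y hα))
  linarith [abs_sub_abs_le_abs_sub (ψ x) (ψ y)]

end IsProjHolder

variable [BorelSpace V]

lemma hasSum_markov [IsProbabilityMeasure ν] {f : ℕ → V → ℝ} {b : ℕ → ℝ}
    (hf : ∀ n, Measurable (f n)) (hb : ∀ n x, |f n x| ≤ b n) (hsum : Summable b) (x : V) :
    HasSum (fun n => markov ν (f n) x) (markov ν (fun x => ∑' n, f n x) x) :=
  hasSum_integral_of_dominated_convergence (fun n _ => b n)
    (fun n => ((hf n).comp (by fun_prop)).aestronglyMeasurable)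
    (fun n => Eventually.of_forall fun A => hb n (A x)) (Eventually.of_forall fun _ => hsum)
    (integrable_const _)
    (Eventually.of_forall fun A => (Summable.of_norm_bounded hsum fun n => hb n (A x)).hasSum)

lemma IsBilipschitzLaw.integrable_comp_apply (h : IsBilipschitzLaw ν m M)
    (hψ : IsProjHolder α C ψ) (hα : 0 ≤ α) (hC : 0 ≤ C) (hx : x ≠ 0) :
    Integrable (fun A : V →L[ℝ] V => ψ (A x)) ν :=
  h.integrable (hψ.measurable.comp (by fun_prop)) fun _ hA =>
    hψ.abs_le_abs_add hα hC (apply_ne_zero_of_mem_bilipschitz h.pos hA hx) hx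

lemma abs_markov_sub_le (h : IsBilipschitzLaw ν m M) (hψ : IsProjHolder α C ψ) (hα : 0 ≤ α)
    (hC : 0 ≤ C) (hx : x ≠ 0) (hy : y ≠ 0) :
    |markov ν ψ x - markov ν ψ y| ≤ C * ∫ A, projDist (A x) (A y) ^ α ∂ν := by
  have hintx := h.integrable_comp_apply hψ hα hC hx
  have hinty := h.integrable_comp_apply hψ hα hC hy
  rw [markov, markov, ← integral_sub hintx hinty, ← integral_const_mul]
  refine abs_integral_le_integral_abs.trans (integral_mono_ae (hintx.sub hinty).abs
    ((h.integrable_projDist_apply_rpow hα x y).const_mul C) ?_)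
  filter_upwards [h.ae_mem] with A hA
  exact hψ.abs_sub_le _ _ (apply_ne_zero_of_mem_bilipschitz h.pos hA hx)
    (apply_ne_zero_of_mem_bilipschitz h.pos hA hy)

variable [FiniteDimensional ℝ V]

lemma measurable_markov [SFinite ν] (hψ : Measurable ψ) : Measurable (markov ν ψ) := by
  have happly : Continuous fun p : V × (V →L[ℝ] V) => p.2 p.1 := by fun_prop
  exact ((hψ.comp happly.measurable).stronglyMeasurable.integral_prod_right' (ν := ν)).measurable

lemma IsProjHolder.markov (hψ : IsProjHolder α C ψ) (h : IsBilipschitzLaw ν m M) (hα : 0 ≤ α)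
    (hα₁ : α ≤ 1) (hC : 0 ≤ C) : IsProjHolder α (C * (M / m) ^ 2) (markov ν ψ) where
  measurable := have := h.prob; measurable_markov hψ.measurable
  abs_sub_le x y hx hy := by
    have := h.prob
    have hmoment := projDistMoment_le h hα hα₁ 1 hx hy
    rw [projDistMoment, convPow_one, pow_one] at hmoment
    rw [mul_assoc]
    exact (abs_markov_sub_le h hψ hα hC hx hy).trans (mul_le_mul_of_nonneg_left hmoment hC)

lemma markov_convPow_succ (h : IsBilipschitzLaw ν m M) (hψ : IsProjHolder α C ψ) (hα : 0 ≤ α)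
    (hC : 0 ≤ C) (n : ℕ) (hx : x ≠ 0) :
    markov (convPow ν (n + 1)) ψ x = markov ν (markov (convPow ν n) ψ) x := by
  have := h.prob
  rw [markov, integral_convPow_add (f := fun A : V →L[ℝ] V => ψ (A x))
    (hψ.measurable.comp (by fun_prop))
    ((h.convPow (n + 1)).integrable_comp_apply hψ hα hC hx), convPow_one]
  rfl

end MarkovOperator

section PoissonEquation

variable {V : Type*} [NormedAddCommGroup V] [InnerProductSpace ℝ V]
  {ν : Measure (V →L[ℝ] V)} {m M α C K ρ : ℝ} {ψ : V → ℝ} {e x y : V}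

open Classical in
/-- The summands of the Poisson solution normalized at `e`. They are set to `0` at the origin, which
is not a point of projective space. -/
def poissonTerm (ν : Measure (V →L[ℝ] V)) (ψ : V → ℝ) (e : V) (n : ℕ) (x : V) : ℝ :=
  if x = 0 then 0 else markov (convPow ν n) ψ x - markov (convPow ν n) ψ e

/-- The solution of the Poisson equation `u - markov ν u = ψ - poissonMean ν ψ e` that vanishes
at `e`. -/
def poissonSolution (ν : Measure (V →L[ℝ] V)) (ψ : V → ℝ) (e x : V) : ℝ :=
  ∑' n, poissonTerm ν ψ e n x

/-- The stationary mean of `ψ`, written as the constant that makes the Poisson equation solvable. -/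
def poissonMean (ν : Measure (V →L[ℝ] V)) (ψ : V → ℝ) (e : V) : ℝ :=
  ψ e + markov ν (poissonSolution ν ψ e) e

lemma poissonTerm_of_ne_zero (n : ℕ) (hx : x ≠ 0) :
    poissonTerm ν ψ e n x = markov (convPow ν n) ψ x - markov (convPow ν n) ψ e := if_neg hx

lemma poissonSolution_self : poissonSolution ν ψ e e = 0 := by
  simp [poissonSolution, poissonTerm]

lemma poissonSolution_zero : poissonSolution ν ψ e 0 = 0 := by
  simp [poissonSolution, poissonTerm]

lemma IsMeanContracting.summable_rate_pow (hν : IsMeanContracting ν α K ρ) (B : ℝ) :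
    Summable fun n : ℕ => B * ρ ^ n :=
  (summable_geometric_of_lt_one hν.rate_pos.le hν.rate_lt_one).mul_left B

variable [FiniteDimensional ℝ V] [MeasurableSpace V] [BorelSpace V]

lemma measurable_poissonTerm [IsProbabilityMeasure ν] (hψ : Measurable ψ) (n : ℕ) :
    Measurable (poissonTerm ν ψ e n) :=
  Measurable.ite (measurableSet_singleton 0) measurable_const
    ((measurable_markov hψ).sub_const _)

lemma IsMeanContracting.abs_markov_convPow_sub_le (hν : IsMeanContracting ν α K ρ)
    (h : IsBilipschitzLaw ν m M) (hψ : IsProjHolder α C ψ) (hC : 0 ≤ C) (n : ℕ) (hx : x ≠ 0)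
    (hy : y ≠ 0) :
    |markov (convPow ν n) ψ x - markov (convPow ν n) ψ y| ≤
      C * K * projDist x y ^ α * ρ ^ n :=
  calc |markov (convPow ν n) ψ x - markov (convPow ν n) ψ y|
      ≤ C * projDistMoment ν α n x y :=
        abs_markov_sub_le (h.convPow n) hψ hν.exponent_pos.le hC hx hy
    _ ≤ C * (K * ρ ^ n * projDist x y ^ α) :=
        mul_le_mul_of_nonneg_left (hν.projDistMoment_le n x y hx hy) hC
    _ = C * K * projDist x y ^ α * ρ ^ n := by ring

lemma IsMeanContracting.abs_poissonTerm_le (hν : IsMeanContracting ν α K ρ)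
    (h : IsBilipschitzLaw ν m M) (hψ : IsProjHolder α C ψ) (hC : 0 ≤ C) (he : e ≠ 0) (n : ℕ)
    (x : V) : |poissonTerm ν ψ e n x| ≤ C * K * ρ ^ n := by
  have := hν.const_pos
  have := hν.rate_pos
  by_cases hx : x = 0
  · rw [poissonTerm, if_pos hx, abs_zero]
    positivity
  · rw [poissonTerm_of_ne_zero n hx]
    refine (hν.abs_markov_convPow_sub_le h hψ hC n hx he).trans
      (mul_le_mul_of_nonneg_right ?_ (by positivity))
    exact mul_le_of_le_one_right (by positivity) (projDist_rpow_le_one _ _ hν.exponent_pos.le)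

lemma IsMeanContracting.hasSum_poissonTerm (hν : IsMeanContracting ν α K ρ)
    (h : IsBilipschitzLaw ν m M) (hψ : IsProjHolder α C ψ) (hC : 0 ≤ C) (he : e ≠ 0) (x : V) :
    HasSum (fun n => poissonTerm ν ψ e n x) (poissonSolution ν ψ e x) :=
  (Summable.of_norm_bounded (hν.summable_rate_pow (C * K))
    fun n => hν.abs_poissonTerm_le h hψ hC he n x).hasSum

lemma IsMeanContracting.isProjHolder_poissonSolution (hν : IsMeanContracting ν α K ρ)
    (h : IsBilipschitzLaw ν m M) (hψ : IsProjHolder α C ψ) (hC : 0 ≤ C) (he : e ≠ 0) :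
    IsProjHolder α (K / (1 - ρ) * C) (poissonSolution ν ψ e) where
  measurable := have := h.prob; Measurable.tsum fun n => measurable_poissonTerm hψ.measurable n
  abs_sub_le x y hx hy := by
    have hsum (z : V) := hν.hasSum_poissonTerm h hψ hC he z
    have hbound : HasSum (fun n => C * K * projDist x y ^ α * ρ ^ n)
        (K / (1 - ρ) * C * projDist x y ^ α) := by
      rw [show K / (1 - ρ) * C * projDist x y ^ α = C * K * projDist x y ^ α * (1 - ρ)⁻¹ by ring]
      exact (hasSum_geometric_of_lt_one hν.rate_pos.le hν.rate_lt_one).mul_left _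
    rw [← ((hsum x).sub (hsum y)).tsum_eq, ← Real.norm_eq_abs]
    refine tsum_of_norm_bounded hbound fun n => ?_
    rw [Real.norm_eq_abs, poissonTerm_of_ne_zero n hx, poissonTerm_of_ne_zero n hy,
      sub_sub_sub_cancel_right]
    exact hν.abs_markov_convPow_sub_le h hψ hC n hx hy

lemma IsMeanContracting.abs_poissonSolution_le (hν : IsMeanContracting ν α K ρ)
    (h : IsBilipschitzLaw ν m M) (hψ : IsProjHolder α C ψ) (hC : 0 ≤ C) (he : e ≠ 0) (x : V) :
    |poissonSolution ν ψ e x| ≤ K / (1 - ρ) * C := by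
  have hG : 0 ≤ K / (1 - ρ) * C :=
    mul_nonneg (div_nonneg hν.const_pos.le (sub_nonneg.2 hν.rate_lt_one.le)) hC
  by_cases hx : x = 0
  · simpa [hx, poissonSolution_zero] using hG
  · simpa [poissonSolution_self] using (hν.isProjHolder_poissonSolution h hψ hC he).abs_le_abs_add
      hν.exponent_pos.le hG hx he

lemma IsMeanContracting.markov_poissonTerm (hν : IsMeanContracting ν α K ρ)
    (h : IsBilipschitzLaw ν m M) (hψ : IsProjHolder α C ψ) (hC : 0 ≤ C) (n : ℕ) (hx : x ≠ 0) :
    markov ν (poissonTerm ν ψ e n) x =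
      markov (convPow ν (n + 1)) ψ x - markov (convPow ν n) ψ e := by
  have := h.prob
  have hα := hν.exponent_pos.le
  have hn := hψ.markov (h.convPow n) hα hν.exponent_le_one hC
  have hterm : ∀ᵐ A ∂ν,
      poissonTerm ν ψ e n (A x) = markov (convPow ν n) ψ (A x) - markov (convPow ν n) ψ e := by
    filter_upwards [h.ae_mem] with A hA
    exact poissonTerm_of_ne_zero n (apply_ne_zero_of_mem_bilipschitz h.pos hA hx)
  rw [markov_convPow_succ h hψ hα hC n hx, markov, integral_congr_ae hterm,
    integral_sub (h.integrable_comp_apply hn hα (by positivity) hx) (integrable_const _)]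
  simp [markov]

/-- Applying `1 - markov ν` to the Poisson series makes it telescope. -/
lemma IsMeanContracting.tendsto_markov_convPow (hν : IsMeanContracting ν α K ρ)
    (h : IsBilipschitzLaw ν m M) (hψ : IsProjHolder α C ψ) (hC : 0 ≤ C) (he : e ≠ 0)
    (hx : x ≠ 0) :
    Tendsto (fun n => markov (convPow ν n) ψ x) atTop
      (𝓝 (ψ x - (poissonSolution ν ψ e x - markov ν (poissonSolution ν ψ e) x))) := by
  have := h.prob
  have hmarkov := hasSum_markov (ν := ν) (fun n => measurable_poissonTerm hψ.measurable n)
    (fun n z => hν.abs_poissonTerm_le h hψ hC he n z) (hν.summable_rate_pow (C * K)) x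
  have htele (n : ℕ) : poissonTerm ν ψ e n x - markov ν (poissonTerm ν ψ e n) x =
      markov (convPow ν n) ψ x - markov (convPow ν (n + 1)) ψ x := by
    rw [hν.markov_poissonTerm h hψ hC n hx, poissonTerm_of_ne_zero n hx, sub_sub_sub_cancel_right]
  have hsum := ((hν.hasSum_poissonTerm h hψ hC he x).sub hmarkov).tendsto_sum_nat
  simp only [htele, Finset.sum_range_sub', markov_convPow_zero] at hsum
  have hlim := hsum.const_sub (ψ x)
  simp only [sub_sub_cancel] at hlim
  exact hlim

lemma IsMeanContracting.poissonSolution_sub_markov (hν : IsMeanContracting ν α K ρ)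
    (h : IsBilipschitzLaw ν m M) (hψ : IsProjHolder α C ψ) (hC : 0 ≤ C) (he : e ≠ 0)
    (hx : x ≠ 0) :
    poissonSolution ν ψ e x - markov ν (poissonSolution ν ψ e) x = ψ x - poissonMean ν ψ e := by
  have hzero : Tendsto (fun n => markov (convPow ν n) ψ x - markov (convPow ν n) ψ e) atTop
      (𝓝 0) := by
    refine squeeze_zero_norm (fun n => hν.abs_markov_convPow_sub_le h hψ hC n hx he) ?_
    simpa using (hν.summable_rate_pow (C * K * projDist x e ^ α)).tendsto_atTop_zero
  have heq := tendsto_nhds_unique hzero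
    ((hν.tendsto_markov_convPow h hψ hC he hx).sub (hν.tendsto_markov_convPow h hψ hC he he))
  rw [poissonSolution_self] at heq
  rw [poissonMean]
  linarith

end PoissonEquation

section LogGrowth

variable {V : Type*} [NormedAddCommGroup V] [InnerProductSpace ℝ V] {A : V →L[ℝ] V}
  {ν : Measure (V →L[ℝ] V)} {m M α : ℝ} {x y : V}

lemma projDist_comm (x y : V) : projDist x y = projDist y x := by
  unfold projDist area
  rw [real_inner_comm, mul_comm (‖x‖ ^ 2), mul_comm ‖x‖]

lemma projDist_smul_smul (x y : V) {s t : ℝ} (hs : s ≠ 0) (ht : t ≠ 0) :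
    projDist (s • x) (t • y) = projDist x y := by
  rw [projDist, area_smul_smul, norm_smul, norm_smul, mul_mul_mul_comm, ← norm_mul,
    Real.norm_eq_abs, mul_div_mul_left _ _ (abs_pos.2 (mul_ne_zero hs ht)).ne', projDist]

lemma norm_sub_le_two_mul_projDist (hx : ‖x‖ = 1) (hy : ‖y‖ = 1) (hxy : 0 ≤ inner ℝ x y) :
    ‖x - y‖ ≤ 2 * projDist x y := by
  have hinner : inner ℝ x y ≤ 1 := by simpa [hx, hy] using real_inner_le_norm x y
  refine le_of_sq_le_sq ?_ (mul_nonneg zero_le_two (projDist_nonneg x y))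
  rw [projDist, hx, hy, mul_one, div_one, mul_pow, area_sq, norm_sub_sq_real, hx, hy]
  nlinarith

/-- The logarithm of the factor by which `A` stretches the line spanned by `x`. -/
def logStretch (A : V →L[ℝ] V) (x : V) : ℝ := Real.log ‖A x‖ - Real.log ‖x‖

lemma logStretch_smul (hAx : A x ≠ 0) {s : ℝ} (hs : s ≠ 0) :
    logStretch A (s • x) = logStretch A x := by
  have hx : x ≠ 0 := fun h => hAx (by rw [h, map_zero])
  rw [logStretch, map_smul, norm_smul, norm_smul,
    Real.log_mul (norm_ne_zero_iff.2 hs) (norm_ne_zero_iff.2 hAx),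
    Real.log_mul (norm_ne_zero_iff.2 hs) (norm_ne_zero_iff.2 hx), add_sub_add_left_eq_sub,
    logStretch]

lemma logStretch_sub_le_of_norm_eq_one (hm : 0 < m) (hM : 0 ≤ M) (hA : A ∈ bilipschitz V m M)
    (hx : ‖x‖ = 1) (hy : ‖y‖ = 1) (hxy : 0 ≤ inner ℝ x y) :
    logStretch A x - logStretch A y ≤ 2 * (M / m) * projDist x y := by
  have hAx : m ≤ ‖A x‖ := by simpa [hx] using (hA x).1
  have hAy : m ≤ ‖A y‖ := by simpa [hy] using (hA y).1
  have hAx₀ := hm.trans_le hAx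
  have hAy₀ := hm.trans_le hAy
  have hdiff : ‖A x‖ - ‖A y‖ ≤ M * (2 * projDist x y) :=
    calc ‖A x‖ - ‖A y‖ ≤ ‖A (x - y)‖ := by rw [map_sub]; exact norm_sub_norm_le _ _
      _ ≤ M * ‖x - y‖ := (hA _).2
      _ ≤ M * (2 * projDist x y) :=
        mul_le_mul_of_nonneg_left (norm_sub_le_two_mul_projDist hx hy hxy) hM
  calc logStretch A x - logStretch A y = Real.log (‖A x‖ / ‖A y‖) := by
        rw [logStretch, logStretch, hx, hy, sub_sub_sub_cancel_right,
          Real.log_div hAx₀.ne' hAy₀.ne']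
    _ ≤ ‖A x‖ / ‖A y‖ - 1 := Real.log_le_sub_one_of_pos (div_pos hAx₀ hAy₀)
    _ = (‖A x‖ - ‖A y‖) / ‖A y‖ := by rw [sub_div, div_self hAy₀.ne']
    _ ≤ M * (2 * projDist x y) / ‖A y‖ := by gcongr
    _ ≤ M * (2 * projDist x y) / m := by
        have := projDist_nonneg x y
        gcongr
    _ = 2 * (M / m) * projDist x y := by ring

lemma logStretch_sub_le (hm : 0 < m) (hM : 0 ≤ M) (hA : A ∈ bilipschitz V m M) (hx : x ≠ 0)
    (hy : y ≠ 0) : logStretch A x - logStretch A y ≤ 2 * (M / m) * projDist x y := by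
  have hA₀ {z : V} (hz : z ≠ 0) := apply_ne_zero_of_mem_bilipschitz hm hA hz
  wlog hxy : 0 ≤ inner ℝ x y generalizing y
  · have hneg := this (y := (-1 : ℝ) • y) (by simpa using hy)
      (by rw [inner_smul_right]; linarith)
    have hdist := projDist_smul_smul x y one_ne_zero (neg_ne_zero.2 one_ne_zero)
    rw [one_smul] at hdist
    rwa [logStretch_smul (hA₀ hy) (by norm_num), hdist] at hneg
  have hx' : ‖x‖⁻¹ ≠ 0 := inv_ne_zero (norm_ne_zero_iff.2 hx)
  have hy' : ‖y‖⁻¹ ≠ 0 := inv_ne_zero (norm_ne_zero_iff.2 hy)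
  rw [← logStretch_smul (hA₀ hx) hx', ← logStretch_smul (hA₀ hy) hy',
    ← projDist_smul_smul x y hx' hy']
  refine logStretch_sub_le_of_norm_eq_one hm hM hA (norm_inv_norm_smul hx) (norm_inv_norm_smul hy)
    ?_
  rw [real_inner_smul_left, real_inner_smul_right]
  positivity

/-- The mean one-step growth of the logarithm of the norm along the line spanned by `x`. -/
def logGrowth (ν : Measure (V →L[ℝ] V)) (x : V) : ℝ :=
  markov ν (fun v => Real.log ‖v‖) x - Real.log ‖x‖

lemma IsBilipschitzLaw.integrable_logStretch (h : IsBilipschitzLaw ν m M) (hx : x ≠ 0) :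
    Integrable (fun A => logStretch A x) ν :=
  have := h.prob
  (h.integrable_log_norm_apply hx).sub (integrable_const _)

lemma IsBilipschitzLaw.logGrowth_eq_integral_logStretch (h : IsBilipschitzLaw ν m M)
    (hx : x ≠ 0) : logGrowth ν x = ∫ A, logStretch A x ∂ν := by
  have := h.prob
  simp only [logStretch]
  rw [integral_sub (h.integrable_log_norm_apply hx) (integrable_const _)]
  simp [logGrowth, markov]

lemma IsBilipschitzLaw.logGrowth_sub_le (h : IsBilipschitzLaw ν m M) (hx : x ≠ 0) (hy : y ≠ 0) :
    logGrowth ν x - logGrowth ν y ≤ 2 * (M / m) * projDist x y := by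
  have := h.prob
  rw [h.logGrowth_eq_integral_logStretch hx, h.logGrowth_eq_integral_logStretch hy,
    ← integral_sub (h.integrable_logStretch hx) (h.integrable_logStretch hy)]
  calc ∫ A, (logStretch A x - logStretch A y) ∂ν ≤ ∫ _, 2 * (M / m) * projDist x y ∂ν := by
        refine integral_mono_ae ((h.integrable_logStretch hx).sub (h.integrable_logStretch hy))
          (integrable_const _) ?_
        filter_upwards [h.ae_mem] with A hA
        exact logStretch_sub_le h.pos h.pos'.le hA hx hy
    _ = 2 * (M / m) * projDist x y := by simp

lemma IsBilipschitzLaw.isProjHolder_logGrowth [FiniteDimensional ℝ V] [MeasurableSpace V]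
    [BorelSpace V] (h : IsBilipschitzLaw ν m M) (hα₁ : α ≤ 1) :
    IsProjHolder α (2 * (M / m)) (logGrowth ν) where
  measurable := by
    have := h.prob
    have hlog : Measurable fun v : V => Real.log ‖v‖ := Real.measurable_log.comp measurable_norm
    exact (measurable_markov hlog).sub hlog
  abs_sub_le x y hx hy := by
    have := h.pos
    have := h.pos'
    have hdist : projDist x y ≤ projDist x y ^ α :=
      Real.self_le_rpow_of_le_one (projDist_nonneg x y) (projDist_le_one x y) hα₁
    have hyx := h.logGrowth_sub_le hy hx
    rw [projDist_comm y x] at hyx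
    exact (abs_sub_le_iff.2 ⟨h.logGrowth_sub_le hx hy, hyx⟩).trans
      (mul_le_mul_of_nonneg_left hdist (by positivity))

end LogGrowth

section Mixtures

variable {Ω Ω' : Type*} [MeasurableSpace Ω] [MeasurableSpace Ω'] {μ ν : Measure Ω} {t : ℝ}

/-- The mixture `(1 - t) μ + t ν`, meaningful for `t ∈ [0, 1]`. -/
def mixture (t : ℝ) (μ ν : Measure Ω) : Measure Ω :=
  Real.toNNReal (1 - t) • μ + Real.toNNReal t • ν

lemma mixture_zero (μ ν : Measure Ω) : mixture 0 μ ν = μ := by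
  simp [mixture]

lemma integral_mixture (ht : 0 ≤ t) (ht₁ : t ≤ 1) {f : Ω → ℝ} (hμ : Integrable f μ)
    (hν : Integrable f ν) :
    ∫ ω, f ω ∂(mixture t μ ν) = (1 - t) * ∫ ω, f ω ∂μ + t * ∫ ω, f ω ∂ν := by
  rw [mixture, integral_add_measure hμ.smul_measure_nnreal hν.smul_measure_nnreal,
    integral_smul_nnreal_measure, integral_smul_nnreal_measure]
  simp only [NNReal.smul_def, Real.coe_toNNReal _ ht, Real.coe_toNNReal _ (sub_nonneg.2 ht₁),
    smul_eq_mul]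

lemma ae_mixture {p : Ω → Prop} (hμ : ∀ᵐ ω ∂μ, p ω) (hν : ∀ᵐ ω ∂ν, p ω) :
    ∀ᵐ ω ∂(mixture t μ ν), p ω :=
  ae_add_measure_iff.2 ⟨Measure.ae_smul_measure hμ _, Measure.ae_smul_measure hν _⟩

lemma isProbabilityMeasure_mixture [IsProbabilityMeasure μ] [IsProbabilityMeasure ν] (ht : 0 ≤ t)
    (ht₁ : t ≤ 1) : IsProbabilityMeasure (mixture t μ ν) := by
  constructor
  simp only [mixture, Measure.add_apply, Measure.smul_apply, measure_univ]
  rw [ENNReal.smul_def, ENNReal.smul_def, smul_eq_mul, smul_eq_mul, mul_one, mul_one,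
    ← ENNReal.coe_add, ← Real.toNNReal_add (sub_nonneg.2 ht₁) ht]
  simp

lemma map_mixture {c : Ω → Ω'} (hc : Measurable c) :
    (mixture t μ ν).map c = mixture t (μ.map c) (ν.map c) := by
  rw [mixture, Measure.map_add _ _ hc, Measure.map_smul, Measure.map_smul, mixture]

variable {V : Type*} [NormedAddCommGroup V] [NormedSpace ℝ V] {ν₀ ν₁ : Measure (V →L[ℝ] V)}
  {m M : ℝ}

lemma IsBilipschitzLaw.mixture (h₀ : IsBilipschitzLaw ν₀ m M) (h₁ : IsBilipschitzLaw ν₁ m M)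
    (ht : 0 ≤ t) (ht₁ : t ≤ 1) : IsBilipschitzLaw (mixture t ν₀ ν₁) m M :=
  have := h₀.prob
  have := h₁.prob
  ⟨isProbabilityMeasure_mixture ht ht₁, h₀.pos, h₀.le_one, h₀.one_le,
    ae_mixture h₀.ae_mem h₁.ae_mem⟩

lemma IsGauge.exists_isGauge_mixture [MeasurableSpace V] [BorelSpace V] {α C c c' : ℝ} {S : Set V}
    {T : V → ℝ} (hT : IsGauge ν₀ α C c S T) (h₀ : IsBilipschitzLaw ν₀ m M)
    (h₁ : IsBilipschitzLaw ν₁ m M) (hc : c < c') :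
    ∃ ε : ℝ, 0 < ε ∧ ∀ t, 0 ≤ t → t ≤ 1 → t < ε →
      IsGauge (RandomMatrixProduct.mixture t ν₀ ν₁) α C c' S T := by
  have hexp : Real.exp (α * c) < Real.exp (α * c') :=
    Real.exp_lt_exp.2 (mul_lt_mul_of_pos_left hc hT.exponent_pos)
  have hCM : 0 ≤ C * M ^ α := mul_nonneg hT.const_nonneg (Real.rpow_nonneg h₀.pos'.le _)
  refine ⟨(Real.exp (α * c') - Real.exp (α * c)) / (C * M ^ α + 1),
    div_pos (sub_pos.2 hexp) (by positivity), fun t ht ht₁ htε => { hT with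
      integral_apply_le := fun v hv => ?_ }⟩
  have h₁T : ∫ A, T (A v) ∂ν₁ ≤ C * M ^ α * T v := by
    have := h₁.prob
    calc ∫ A, T (A v) ∂ν₁ ≤ ∫ _ : V →L[ℝ] V, C * M ^ α * T v ∂ν₁ := by
          refine integral_mono_ae (hT.integrable_apply h₁ v) (integrable_const _) ?_
          filter_upwards [h₁.ae_mem] with A hA
          exact (hT.apply_le h₁.pos'.le hA v).trans
            (mul_le_mul_of_nonneg_left (hT.rpow_norm_le v) hCM)
      _ = C * M ^ α * T v := by simp
  have htexp : t * (C * M ^ α + 1) < Real.exp (α * c') - Real.exp (α * c) :=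
    (lt_div_iff₀ (by positivity)).1 htε
  rw [integral_mixture ht ht₁ (hT.integrable_apply h₀ v) (hT.integrable_apply h₁ v)]
  calc (1 - t) * ∫ A, T (A v) ∂ν₀ + t * ∫ A, T (A v) ∂ν₁
      ≤ (1 - t) * (Real.exp (α * c) * T v) + t * (C * M ^ α * T v) :=
        add_le_add (mul_le_mul_of_nonneg_left (hT.integral_apply_le v hv) (sub_nonneg.2 ht₁))
          (mul_le_mul_of_nonneg_left h₁T ht)
    _ = ((1 - t) * Real.exp (α * c) + t * (C * M ^ α)) * T v := by ring
    _ ≤ Real.exp (α * c') * T v := by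
        refine mul_le_mul_of_nonneg_right ?_ (hT.nonneg v)
        have := mul_nonneg ht (Real.exp_pos (α * c)).le
        linarith

end Mixtures

section Correctors

lemma rpow_norm_mul_exp {E : Type*} [NormedAddCommGroup E] {x : E} (hx : x ≠ 0) (α b : ℝ) :
    ‖x‖ ^ α * Real.exp (α * b) = Real.exp (α * (Real.log ‖x‖ + b)) := by
  rw [mul_add, Real.exp_add, Real.rpow_def_of_pos (norm_pos_iff.2 hx), mul_comm α (Real.log _)]

variable {V : Type*} [NormedAddCommGroup V] [NormedSpace ℝ V] [MeasurableSpace V]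
  {ν : Measure (V →L[ℝ] V)} {m M l B α : ℝ} {u : V → ℝ} {x : V}

/-- A bounded function `u` for which `log ‖x‖ + u x` grows on average by exactly `l` at each step
of law `ν`, from every starting point. -/
structure IsCorrector (ν : Measure (V →L[ℝ] V)) (l B : ℝ) (u : V → ℝ) : Prop where
  measurable : Measurable u
  abs_apply_le : ∀ x, |u x| ≤ B
  integral_eq : ∀ x, x ≠ 0 → ∫ A, (Real.log ‖A x‖ + u (A x)) ∂ν = l + (Real.log ‖x‖ + u x)

namespace IsCorrector

lemma abs_corrected_log_sub_le (hu : IsCorrector ν l B u) (hm : 0 < m) {A : V →L[ℝ] V}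
    (hA : A ∈ bilipschitz V m M) (hx : x ≠ 0) :
    |Real.log ‖A x‖ + u (A x) - (Real.log ‖x‖ + u x)| ≤
      |Real.log m| + |Real.log M| + 2 * B := by
  obtain ⟨hlow, hup⟩ := log_norm_apply_mem_Icc hm hA hx
  obtain ⟨hx₁, hx₂⟩ := abs_le.1 (hu.abs_apply_le x)
  obtain ⟨hAx₁, hAx₂⟩ := abs_le.1 (hu.abs_apply_le (A x))
  rw [abs_le]
  constructor
  · linarith [neg_abs_le (Real.log m), abs_nonneg (Real.log M)]
  · linarith [le_abs_self (Real.log M), abs_nonneg (Real.log m)]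

variable [BorelSpace V]

lemma measurable_corrected_log (hu : IsCorrector ν l B u) (x : V) :
    Measurable fun A : V →L[ℝ] V => Real.log ‖A x‖ + u (A x) :=
  (measurable_log_norm_apply x).add
    (hu.measurable.comp (by fun_prop : Continuous fun A : V →L[ℝ] V => A x).measurable)

lemma integrable_corrected_log (hu : IsCorrector ν l B u) {ν' : Measure (V →L[ℝ] V)}
    (h : IsBilipschitzLaw ν' m M) (hx : x ≠ 0) :
    Integrable (fun A : V →L[ℝ] V => Real.log ‖A x‖ + u (A x)) ν' :=
  h.integrable (hu.measurable_corrected_log x) fun _ hA =>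
    (abs_add_le _ _).trans (add_le_add (abs_log_norm_apply_le h.pos hA hx) (hu.abs_apply_le _))

lemma exp_gauge_integral_le (hu : IsCorrector ν l B u) (h : IsBilipschitzLaw ν m M) {η : ℝ}
    (hα : 0 ≤ α) (hαB : α * (|Real.log m| + |Real.log M| + 2 * B) ≤ 1)
    (hη : α * (|Real.log m| + |Real.log M| + 2 * B) ^ 2 ≤ η) (hx : x ≠ 0) :
    ∫ A, ‖A x‖ ^ α * Real.exp (α * u (A x)) ∂ν ≤
      Real.exp (α * (l + η)) * (‖x‖ ^ α * Real.exp (α * u x)) := by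
  have := h.prob
  have hbound : ∀ᵐ A ∂ν, |Real.log ‖A x‖ + u (A x) - (Real.log ‖x‖ + u x)| ≤
      |Real.log m| + |Real.log M| + 2 * B :=
    h.ae_mem.mono fun A hA => hu.abs_corrected_log_sub_le h.pos hA hx
  have hmean : ∫ A, (Real.log ‖A x‖ + u (A x) - (Real.log ‖x‖ + u x)) ∂ν ≤ l := by
    rw [integral_sub (hu.integrable_corrected_log h hx) (integrable_const _),
      hu.integral_eq x hx]
    simp
  have hfactor : ∀ᵐ A ∂ν, ‖A x‖ ^ α * Real.exp (α * u (A x)) =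
      ‖x‖ ^ α * Real.exp (α * u x) *
        Real.exp (α * (Real.log ‖A x‖ + u (A x) - (Real.log ‖x‖ + u x))) := by
    filter_upwards [h.ae_mem] with A hA
    rw [rpow_norm_mul_exp (apply_ne_zero_of_mem_bilipschitz h.pos hA hx),
      rpow_norm_mul_exp hx,
      ← Real.exp_add]
    ring_nf
  rw [integral_congr_ae hfactor, integral_const_mul, mul_comm]
  exact mul_le_mul_of_nonneg_right (integral_exp_mul_le_exp
    ((hu.measurable_corrected_log x).sub_const _).aestronglyMeasurable hbound hα hαB hmean hη)
    (by positivity)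

lemma isGauge (hu : IsCorrector ν l B u) (h : IsBilipschitzLaw ν m M) {η : ℝ} (hα : 0 < α)
    (hαB : α * (|Real.log m| + |Real.log M| + 2 * B) ≤ 1)
    (hη : α * (|Real.log m| + |Real.log M| + 2 * B) ^ 2 ≤ η) :
    IsGauge ν α (Real.exp (α * (2 * B))) (l + η) Set.univ
      fun x => Real.exp (α * B) * (‖x‖ ^ α * Real.exp (α * u x)) where
  exponent_pos := hα
  const_nonneg := (Real.exp_pos _).le
  measurable := ((measurable_norm.pow_const α).mul
    (Real.measurable_exp.comp (hu.measurable.const_mul α))).const_mul _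
  rpow_norm_le x := by
    have hone : 1 ≤ Real.exp (α * B) * Real.exp (α * u x) := by
      rw [← Real.exp_add, ← mul_add]
      exact Real.one_le_exp (mul_nonneg hα.le (by linarith [(abs_le.1 (hu.abs_apply_le x)).1]))
    rw [mul_left_comm]
    exact le_mul_of_one_le_right (by positivity) hone
  le_mul_rpow_norm x := by
    rw [mul_left_comm, mul_comm, ← Real.exp_add, ← mul_add]
    refine mul_le_mul_of_nonneg_right (Real.exp_le_exp.2 ?_) (by positivity)
    exact mul_le_mul_of_nonneg_left (by linarith [(abs_le.1 (hu.abs_apply_le x)).2]) hα.le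
  integral_apply_le x _ := by
    rcases eq_or_ne x 0 with rfl | hx
    · simp [Real.zero_rpow hα.ne']
    · rw [integral_const_mul, mul_left_comm]
      exact mul_le_mul_of_nonneg_left (hu.exp_gauge_integral_le h hα.le hαB hη hx)
        (Real.exp_pos _).le

variable [FiniteDimensional ℝ V]

lemma convPow (hu : IsCorrector ν l B u) (h : IsBilipschitzLaw ν m M) (n : ℕ) :
    IsCorrector (convPow ν n) (n * l) B u where
  measurable := hu.measurable
  abs_apply_le := hu.abs_apply_le
  integral_eq := by
    have := h.prob
    induction n with
    | zero => intro x _; simp [convPow_zero]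
    | succ n ih =>
      intro x hx
      have hstep : ∀ᵐ A ∂ν, ∫ A', (Real.log ‖(A' * A) x‖ + u ((A' * A) x)) ∂(
          RandomMatrixProduct.convPow ν n) = n * l + (Real.log ‖A x‖ + u (A x)) := by
        filter_upwards [h.ae_mem] with A hA
        exact ih (A x) (apply_ne_zero_of_mem_bilipschitz h.pos hA hx)
      rw [integral_convPow_add (f := fun A : V →L[ℝ] V => Real.log ‖A x‖ + u (A x))
        (hu.measurable_corrected_log x) (hu.integrable_corrected_log (h.convPow (n + 1)) hx),
        convPow_one, integral_congr_ae hstep,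
        integral_add (integrable_const _) (hu.integrable_corrected_log h hx),
        hu.integral_eq x hx]
      simp
      ring

lemma abs_meanLog_sub_le (hu : IsCorrector ν l B u) (h : IsBilipschitzLaw ν m M) (n : ℕ)
    (hx : x ≠ 0) : |meanLog ν n x - (n * l + Real.log ‖x‖)| ≤ 2 * B := by
  have hn := h.convPow n
  have := hn.prob
  have hmeas : Measurable fun A : V →L[ℝ] V => u (A x) :=
    hu.measurable.comp (by fun_prop : Continuous fun A : V →L[ℝ] V => A x).measurable
  have heq := (hu.convPow h n).integral_eq x hx
  rw [integral_add (hn.integrable_log_norm_apply hx)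
    (hn.integrable hmeas fun A _ => hu.abs_apply_le (A x))] at heq
  have hint : |∫ A, u (A x) ∂(RandomMatrixProduct.convPow ν n)| ≤ B := by
    simpa using norm_integral_le_of_norm_le_const (μ := RandomMatrixProduct.convPow ν n)
      (f := fun A => u (A x))
      (Eventually.of_forall fun A => hu.abs_apply_le (A x))
  obtain ⟨hint₁, hint₂⟩ := abs_le.1 hint
  obtain ⟨hx₁, hx₂⟩ := abs_le.1 (hu.abs_apply_le x)
  rw [meanLog, abs_le]
  constructor <;> linarith

end IsCorrector

end Correctors

section GeometricBounds

variable {c : ℕ → ℝ} {B Λ t : ℝ}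

lemma abs_pow_mul_le_of_mul_le_half {b : ℝ} {k : ℕ} (hb : |b| ≤ B * Λ ^ k) (hB : 0 ≤ B)
    (hΛ : 0 ≤ Λ) (ht : 0 ≤ t) (htΛ : t * Λ ≤ 1 / 2) : |t ^ k * b| ≤ B * (1 / 2) ^ k := by
  rw [abs_mul, abs_of_nonneg (pow_nonneg ht k)]
  calc t ^ k * |b| ≤ t ^ k * (B * Λ ^ k) := mul_le_mul_of_nonneg_left hb (pow_nonneg ht k)
    _ = B * (t * Λ) ^ k := by rw [mul_pow]; ring
    _ ≤ B * (1 / 2) ^ k :=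
        mul_le_mul_of_nonneg_left (pow_le_pow_left₀ (mul_nonneg ht hΛ) htΛ k) hB

lemma summable_abs_mul_pow (hc : ∀ k, |c k| ≤ B * Λ ^ k) (hB : 0 ≤ B) (hΛ : 0 ≤ Λ) (ht : 0 ≤ t)
    (htΛ : t * Λ ≤ 1 / 2) : Summable fun k => |c k| * t ^ k := by
  refine (summable_geometric_two.mul_left B).of_nonneg_of_le (fun k => by positivity) fun k => ?_
  have hle := abs_pow_mul_le_of_mul_le_half (hc k) hB hΛ ht htΛ
  rwa [abs_mul, abs_of_nonneg (pow_nonneg ht k), mul_comm] at hle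

end GeometricBounds

section PerturbationSeries

variable {V : Type*} [NormedAddCommGroup V] [InnerProductSpace ℝ V]

/-- The right-hand sides `ψ k` of the hierarchy of Poisson equations for the coefficients of
`t ^ k` obtained by expanding the corrector equation of `mixture t ν₀ ν₁` in powers of `t`. -/
def perturbation (ν₀ ν₁ : Measure (V →L[ℝ] V)) (e : V) : ℕ → V → ℝ
  | 0 => logGrowth ν₀
  | k + 1 => Pi.single (M := fun _ : ℕ => V → ℝ) 0 (logGrowth ν₁ - logGrowth ν₀) k +
      (markov ν₁ (poissonSolution ν₀ (perturbation ν₀ ν₁ e k) e) -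
        markov ν₀ (poissonSolution ν₀ (perturbation ν₀ ν₁ e k) e))

/-- The coefficient of `t ^ k` in the corrector of `mixture t ν₀ ν₁`. -/
def correctorCoeff (ν₀ ν₁ : Measure (V →L[ℝ] V)) (e : V) (k : ℕ) : V → ℝ :=
  poissonSolution ν₀ (perturbation ν₀ ν₁ e k) e

/-- The coefficient of `t ^ k` in the growth rate of `mixture t ν₀ ν₁`. -/
def growthCoeff (ν₀ ν₁ : Measure (V →L[ℝ] V)) (e : V) (k : ℕ) : ℝ :=
  poissonMean ν₀ (perturbation ν₀ ν₁ e k) e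

/-- The corrector of `mixture t ν₀ ν₁` as a power series in `t`. -/
def correctorSeries (ν₀ ν₁ : Measure (V →L[ℝ] V)) (e : V) (t : ℝ) (x : V) : ℝ :=
  ∑' k, t ^ k * correctorCoeff ν₀ ν₁ e k x

variable [MeasurableSpace V] {ν₀ ν₁ : Measure (V →L[ℝ] V)} {m M α C K ρ B Λ t : ℝ} {ψ : V → ℝ}
  {e x : V}

/-- Geometric bounds `B * Λ ^ k` for the coefficients of the perturbation series. -/
structure IsPerturbationBound (ν₀ ν₁ : Measure (V →L[ℝ] V)) (e : V) (B Λ : ℝ) : Prop where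
  nonneg : 0 ≤ B
  one_le : 1 ≤ Λ
  measurable : ∀ k, Measurable (correctorCoeff ν₀ ν₁ e k)
  abs_correctorCoeff_le : ∀ k x, |correctorCoeff ν₀ ν₁ e k x| ≤ B * Λ ^ k
  abs_growthCoeff_le : ∀ k, |growthCoeff ν₀ ν₁ e k| ≤ B * Λ ^ k
  sub_markov_eq : ∀ k x, x ≠ 0 → correctorCoeff ν₀ ν₁ e k x -
    markov ν₀ (correctorCoeff ν₀ ν₁ e k) x = perturbation ν₀ ν₁ e k x - growthCoeff ν₀ ν₁ e k

namespace IsPerturbationBound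

lemma abs_term_le (hb : IsPerturbationBound ν₀ ν₁ e B Λ) (ht : 0 ≤ t) (htΛ : t * Λ ≤ 1 / 2)
    (k : ℕ) (x : V) : |t ^ k * correctorCoeff ν₀ ν₁ e k x| ≤ B * (1 / 2) ^ k :=
  abs_pow_mul_le_of_mul_le_half (hb.abs_correctorCoeff_le k x) hb.nonneg
    (zero_le_one.trans hb.one_le) ht htΛ

lemma hasSum_correctorSeries (hb : IsPerturbationBound ν₀ ν₁ e B Λ) (ht : 0 ≤ t)
    (htΛ : t * Λ ≤ 1 / 2) (x : V) :
    HasSum (fun k => t ^ k * correctorCoeff ν₀ ν₁ e k x) (correctorSeries ν₀ ν₁ e t x) :=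
  (Summable.of_norm_bounded (summable_geometric_two.mul_left B)
    fun k => hb.abs_term_le ht htΛ k x).hasSum

lemma abs_correctorSeries_le (hb : IsPerturbationBound ν₀ ν₁ e B Λ) (ht : 0 ≤ t)
    (htΛ : t * Λ ≤ 1 / 2) (x : V) : |correctorSeries ν₀ ν₁ e t x| ≤ B * 2 := by
  rw [← Real.norm_eq_abs]
  exact tsum_of_norm_bounded (hasSum_geometric_two.mul_left B) fun k => hb.abs_term_le ht htΛ k x

lemma measurable_correctorSeries (hb : IsPerturbationBound ν₀ ν₁ e B Λ) (t : ℝ) :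
    Measurable (correctorSeries ν₀ ν₁ e t) :=
  Measurable.tsum fun k => (hb.measurable k).const_mul (t ^ k)

lemma summable_growthCoeff (hb : IsPerturbationBound ν₀ ν₁ e B Λ) (ht : 0 ≤ t)
    (htΛ : t * Λ ≤ 1 / 2) : Summable fun k => |growthCoeff ν₀ ν₁ e k| * t ^ k :=
  summable_abs_mul_pow hb.abs_growthCoeff_le hb.nonneg (zero_le_one.trans hb.one_le) ht htΛ

lemma hasSum_growthCoeff (hb : IsPerturbationBound ν₀ ν₁ e B Λ) (ht : 0 ≤ t)
    (htΛ : t * Λ ≤ 1 / 2) : HasSum (fun k => growthCoeff ν₀ ν₁ e k * t ^ k)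
      (∑' k, growthCoeff ν₀ ν₁ e k * t ^ k) := by
  refine (Summable.of_norm ((hb.summable_growthCoeff ht htΛ).congr fun k => ?_)).hasSum
  rw [Real.norm_eq_abs, abs_mul, abs_of_nonneg (pow_nonneg ht k)]

variable [BorelSpace V]

lemma hasSum_markov_correctorSeries (hb : IsPerturbationBound ν₀ ν₁ e B Λ) (ht : 0 ≤ t)
    (htΛ : t * Λ ≤ 1 / 2) (ν : Measure (V →L[ℝ] V)) [IsProbabilityMeasure ν] (x : V) :
    HasSum (fun k => t ^ k * markov ν (correctorCoeff ν₀ ν₁ e k) x)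
      (markov ν (correctorSeries ν₀ ν₁ e t) x) := by
  have hsum := hasSum_markov (ν := ν) (fun k => (hb.measurable k).const_mul (t ^ k))
    (fun k y => hb.abs_term_le ht htΛ k y) (summable_geometric_two.mul_left B) x
  simp only [markov, integral_const_mul] at hsum
  exact hsum

lemma hasSum_perturbation_of_poisson (hb : IsPerturbationBound ν₀ ν₁ e B Λ)
    [IsProbabilityMeasure ν₀] (ht : 0 ≤ t) (htΛ : t * Λ ≤ 1 / 2) (hx : x ≠ 0) :
    HasSum (fun k => t ^ k * perturbation ν₀ ν₁ e k x)
      (correctorSeries ν₀ ν₁ e t x - markov ν₀ (correctorSeries ν₀ ν₁ e t) x +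
        ∑' k, growthCoeff ν₀ ν₁ e k * t ^ k) := by
  refine (((hb.hasSum_correctorSeries ht htΛ x).sub
    (hb.hasSum_markov_correctorSeries ht htΛ ν₀ x)).add (hb.hasSum_growthCoeff ht htΛ)).congr_fun
    fun k => ?_
  linear_combination -t ^ k * hb.sub_markov_eq k x hx

lemma hasSum_perturbation_of_recursion (hb : IsPerturbationBound ν₀ ν₁ e B Λ)
    [IsProbabilityMeasure ν₀] [IsProbabilityMeasure ν₁] (ht : 0 ≤ t) (htΛ : t * Λ ≤ 1 / 2)
    (x : V) :
    HasSum (fun k => t ^ k * perturbation ν₀ ν₁ e k x)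
      (t * (logGrowth ν₁ x - logGrowth ν₀ x + (markov ν₁ (correctorSeries ν₀ ν₁ e t) x -
        markov ν₀ (correctorSeries ν₀ ν₁ e t) x)) + logGrowth ν₀ x) := by
  have hsource : HasSum (fun k => t ^ k *
      Pi.single (M := fun _ : ℕ => V → ℝ) 0 (logGrowth ν₁ - logGrowth ν₀) k x)
      (logGrowth ν₁ x - logGrowth ν₀ x) := by
    simpa using hasSum_single (f := fun k => t ^ k *
      Pi.single (M := fun _ : ℕ => V → ℝ) 0 (logGrowth ν₁ - logGrowth ν₀) k x) 0
      fun k hk => by simp [Pi.single_eq_of_ne hk]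
  have hshift := (hsource.add ((hb.hasSum_markov_correctorSeries ht htΛ ν₁ x).sub
    (hb.hasSum_markov_correctorSeries ht htΛ ν₀ x))).mul_left t
  have hsucc : HasSum (fun k => t ^ (k + 1) * perturbation ν₀ ν₁ e (k + 1) x)
      (t * (logGrowth ν₁ x - logGrowth ν₀ x + (markov ν₁ (correctorSeries ν₀ ν₁ e t) x -
        markov ν₀ (correctorSeries ν₀ ν₁ e t) x))) := by
    refine hshift.congr_fun fun k => ?_
    simp only [perturbation, correctorCoeff, Pi.add_apply, Pi.sub_apply]
    ring
  simpa [perturbation] using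
    (hasSum_nat_add_iff (f := fun k => t ^ k * perturbation ν₀ ν₁ e k x) 1).1 hsucc

lemma integral_log_norm_add_correctorSeries (hb : IsPerturbationBound ν₀ ν₁ e B Λ) (ht : 0 ≤ t)
    (htΛ : t * Λ ≤ 1 / 2) {ν : Measure (V →L[ℝ] V)} (h : IsBilipschitzLaw ν m M) (hx : x ≠ 0) :
    Integrable (fun A : V →L[ℝ] V => Real.log ‖A x‖ + correctorSeries ν₀ ν₁ e t (A x)) ν ∧
      ∫ A, (Real.log ‖A x‖ + correctorSeries ν₀ ν₁ e t (A x)) ∂ν =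
        logGrowth ν x + Real.log ‖x‖ + markov ν (correctorSeries ν₀ ν₁ e t) x := by
  have hlog := h.integrable_log_norm_apply hx
  have hu : Integrable (fun A : V →L[ℝ] V => correctorSeries ν₀ ν₁ e t (A x)) ν :=
    h.integrable ((hb.measurable_correctorSeries t).comp (by fun_prop)) fun A _ =>
      hb.abs_correctorSeries_le ht htΛ (A x)
  refine ⟨hlog.add hu, ?_⟩
  rw [integral_add hlog hu, logGrowth, markov, markov, sub_add_cancel]

lemma isCorrector (hb : IsPerturbationBound ν₀ ν₁ e B Λ) (h₀ : IsBilipschitzLaw ν₀ m M)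
    (h₁ : IsBilipschitzLaw ν₁ m M) (ht : 0 ≤ t) (ht₁ : t ≤ 1) (htΛ : t * Λ ≤ 1 / 2) :
    IsCorrector (mixture t ν₀ ν₁) (∑' k, growthCoeff ν₀ ν₁ e k * t ^ k) (B * 2)
      (correctorSeries ν₀ ν₁ e t) where
  measurable := hb.measurable_correctorSeries t
  abs_apply_le := hb.abs_correctorSeries_le ht htΛ
  integral_eq x hx := by
    have := h₀.prob
    have := h₁.prob
    obtain ⟨hint₀, heq₀⟩ := hb.integral_log_norm_add_correctorSeries ht htΛ h₀ hx
    obtain ⟨hint₁, heq₁⟩ := hb.integral_log_norm_add_correctorSeries ht htΛ h₁ hx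
    have hexpand := (hb.hasSum_perturbation_of_poisson ht htΛ hx).unique
      (hb.hasSum_perturbation_of_recursion ht htΛ x)
    rw [integral_mixture ht ht₁ hint₀ hint₁, heq₀, heq₁]
    linear_combination -hexpand

end IsPerturbationBound

variable [FiniteDimensional ℝ V] [BorelSpace V]

lemma IsMeanContracting.isProjHolder_markov_sub_markov (hν : IsMeanContracting ν₀ α K ρ)
    (h₀ : IsBilipschitzLaw ν₀ m M) (h₁ : IsBilipschitzLaw ν₁ m M) (hψ : IsProjHolder α C ψ)
    (hC : 0 ≤ C) (he : e ≠ 0) :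
    IsProjHolder α (2 * (M / m) ^ 2 * (K / (1 - ρ)) * C)
      (markov ν₁ (poissonSolution ν₀ ψ e) - markov ν₀ (poissonSolution ν₀ ψ e)) := by
  have hR := hν.isProjHolder_poissonSolution h₀ hψ hC he
  have hG : 0 ≤ K / (1 - ρ) * C :=
    mul_nonneg (div_nonneg hν.const_pos.le (sub_nonneg.2 hν.rate_lt_one.le)) hC
  refine ((hR.markov h₁ hν.exponent_pos.le hν.exponent_le_one hG).sub
    (hR.markov h₀ hν.exponent_pos.le hν.exponent_le_one hG)).mono (le_of_eq ?_)
  ring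

lemma IsMeanContracting.abs_markov_sub_markov_le (hν : IsMeanContracting ν₀ α K ρ)
    (h₀ : IsBilipschitzLaw ν₀ m M) [IsProbabilityMeasure ν₁] (hψ : IsProjHolder α C ψ)
    (hC : 0 ≤ C) (he : e ≠ 0) (x : V) :
    |(markov ν₁ (poissonSolution ν₀ ψ e) - markov ν₀ (poissonSolution ν₀ ψ e)) x| ≤
      2 * (M / m) ^ 2 * (K / (1 - ρ)) * C := by
  have := h₀.prob
  have hR := hν.abs_poissonSolution_le h₀ hψ hC he
  have hG : 0 ≤ K / (1 - ρ) * C := (abs_nonneg _).trans (hR 0)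
  have hκ : 1 ≤ (M / m) ^ 2 :=
    one_le_pow₀ ((one_le_div h₀.pos).2 (h₀.le_one.trans h₀.one_le))
  rw [Pi.sub_apply]
  linarith [abs_sub (markov ν₁ (poissonSolution ν₀ ψ e) x) (markov ν₀ (poissonSolution ν₀ ψ e) x),
    abs_markov_le (ν := ν₁) hR x, abs_markov_le (ν := ν₀) hR x, mul_le_mul_of_nonneg_right hκ hG]

lemma exists_isProjHolder_single (h₀ : IsBilipschitzLaw ν₀ m M) (h₁ : IsBilipschitzLaw ν₁ m M)
    (hα₁ : α ≤ 1) (e : V) :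
    ∃ D, 0 ≤ D ∧ IsProjHolder α D (logGrowth ν₀) ∧ |logGrowth ν₀ e| ≤ D ∧ ∀ k : ℕ,
      IsProjHolder α D (Pi.single (M := fun _ : ℕ => V → ℝ) 0 (logGrowth ν₁ - logGrowth ν₀) k) ∧
      |Pi.single (M := fun _ : ℕ => V → ℝ) 0 (logGrowth ν₁ - logGrowth ν₀) k e| ≤ D := by
  have hL : 0 ≤ 2 * (M / m) := by
    have := h₀.pos
    have := h₀.pos'
    positivity
  have hφ₀ := h₀.isProjHolder_logGrowth hα₁
  have hδ := (h₁.isProjHolder_logGrowth hα₁).sub hφ₀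
  have he₀ := abs_nonneg (logGrowth ν₀ e)
  have heδ := abs_nonneg ((logGrowth ν₁ - logGrowth ν₀) e)
  refine ⟨2 * (M / m) + 2 * (M / m) + |logGrowth ν₀ e| + |(logGrowth ν₁ - logGrowth ν₀) e|,
    by positivity, hφ₀.mono (by linarith), by linarith, fun k => ?_⟩
  rcases Nat.eq_zero_or_pos k with rfl | hk
  · rw [Pi.single_eq_same]
    exact ⟨hδ.mono (by linarith), by linarith⟩
  · rw [Pi.single_eq_of_ne hk.ne']
    exact ⟨IsProjHolder.zero (by positivity), by simpa using by positivity⟩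

lemma IsMeanContracting.exists_perturbation_bound (hν : IsMeanContracting ν₀ α K ρ)
    (h₀ : IsBilipschitzLaw ν₀ m M) (h₁ : IsBilipschitzLaw ν₁ m M) (he : e ≠ 0) :
    ∃ D Λ, 0 ≤ D ∧ 1 ≤ Λ ∧ ∀ k, IsProjHolder α (D * Λ ^ k) (perturbation ν₀ ν₁ e k) ∧
      |perturbation ν₀ ν₁ e k e| ≤ D * Λ ^ k := by
  have := h₁.prob
  obtain ⟨D, hD, hφ₀, hφ₀e, hδ⟩ := exists_isProjHolder_single h₀ h₁ hν.exponent_le_one e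
  set L := 2 * (M / m) ^ 2 * (K / (1 - ρ))
  have hL : 0 ≤ L :=
    mul_nonneg (by positivity) (div_nonneg hν.const_pos.le (sub_nonneg.2 hν.rate_lt_one.le))
  have hΛ : 1 ≤ 1 + L := le_add_of_nonneg_right hL
  refine ⟨D, 1 + L, hD, hΛ, fun k => ?_⟩
  induction k with
  | zero => simpa [perturbation] using ⟨hφ₀, hφ₀e⟩
  | succ k ih =>
    have hpow : 0 ≤ D * (1 + L) ^ k := by positivity
    have hgrow : D + L * (D * (1 + L) ^ k) ≤ D * (1 + L) ^ (k + 1) := by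
      rw [pow_succ]
      linarith [le_mul_of_one_le_right hD (one_le_pow₀ (n := k) hΛ)]
    exact ⟨((hδ k).1.add (hν.isProjHolder_markov_sub_markov h₀ h₁ ih.1 hpow he)).mono hgrow,
      (abs_add_le _ _).trans ((add_le_add (hδ k).2
        (hν.abs_markov_sub_markov_le h₀ ih.1 hpow he e)).trans hgrow)⟩

lemma IsMeanContracting.exists_isPerturbationBound (hν : IsMeanContracting ν₀ α K ρ)
    (h₀ : IsBilipschitzLaw ν₀ m M) (h₁ : IsBilipschitzLaw ν₁ m M) (he : e ≠ 0) :
    ∃ B Λ, IsPerturbationBound ν₀ ν₁ e B Λ := by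
  have := h₀.prob
  obtain ⟨D, Λ, hD, hΛ, hψ⟩ := hν.exists_perturbation_bound h₀ h₁ he
  have hG : 0 ≤ K / (1 - ρ) := div_nonneg hν.const_pos.le (sub_nonneg.2 hν.rate_lt_one.le)
  have hpow (k : ℕ) : 0 ≤ D * Λ ^ k := mul_nonneg hD (pow_nonneg (zero_le_one.trans hΛ) k)
  have hR (k : ℕ) (x : V) := hν.abs_poissonSolution_le h₀ (hψ k).1 (hpow k) he x
  refine ⟨(1 + K / (1 - ρ)) * D, Λ, by positivity, hΛ,
    fun k => (hν.isProjHolder_poissonSolution h₀ (hψ k).1 (hpow k) he).measurable,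
    fun k x => (hR k x).trans ?_, fun k => ?_,
    fun k x hx => hν.poissonSolution_sub_markov h₀ (hψ k).1 (hpow k) he hx⟩
  · linarith [hpow k]
  · refine (abs_add_le _ _).trans ?_
    linarith [(hψ k).2, abs_markov_le (ν := ν₀) (hR k) e]

lemma IsMeanContracting.exists_isCorrector_mixture (hν : IsMeanContracting ν₀ α K ρ)
    (h₀ : IsBilipschitzLaw ν₀ m M) (h₁ : IsBilipschitzLaw ν₁ m M) (he : e ≠ 0) :
    ∃ ε, 0 < ε ∧ ε ≤ 1 ∧ ∃ a : ℕ → ℝ, (Summable fun k => |a k| * ε ^ k) ∧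
      ∀ t, 0 ≤ t → t < ε → ∃ u B, IsCorrector (mixture t ν₀ ν₁) (∑' k, a k * t ^ k) B u := by
  obtain ⟨B, Λ, hb⟩ := hν.exists_isPerturbationBound h₀ h₁ he
  have hΛ : 0 < Λ := zero_lt_one.trans_le hb.one_le
  have hε : 1 / (2 * Λ) * Λ = 1 / 2 := by field_simp
  have hε₁ : 1 / (2 * Λ) ≤ 1 := (div_le_one (by positivity)).2 (by linarith [hb.one_le])
  refine ⟨1 / (2 * Λ), by positivity, hε₁, growthCoeff ν₀ ν₁ e,
    hb.summable_growthCoeff (by positivity) hε.le, fun t ht htε => ?_⟩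
  exact ⟨_, _, hb.isCorrector h₀ h₁ ht (htε.le.trans hε₁)
    ((mul_le_mul_of_nonneg_right htε.le hΛ.le).trans hε.le)⟩

end PerturbationSeries

section GrowthRateCriteria

lemma continuousAt_tsum_mul_pow {a : ℕ → ℝ} {ε : ℝ} (hε : 0 < ε)
    (ha : Summable fun k : ℕ => |a k| * ε ^ k) :
    ContinuousAt (fun t : ℝ => ∑' k, a k * t ^ k) 0 := by
  refine (continuousOn_tsum (s := Metric.closedBall 0 ε) (fun k => by fun_prop) ha
    fun k t ht => ?_).continuousAt (Metric.closedBall_mem_nhds 0 hε)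
  rw [norm_mul, norm_pow]
  exact mul_le_mul_of_nonneg_left
    (pow_le_pow_left₀ (norm_nonneg t) (mem_closedBall_zero_iff.1 ht) k) (norm_nonneg _)

lemma tendsto_inv_mul_of_linear_bounds {f : ℕ → ℝ} {l D : ℝ} (hlow : ∀ n : ℕ, n * l - D ≤ f n)
    (hup : ∀ η > 0, ∃ C, ∀ n : ℕ, f n ≤ (l + η) * n + C) :
    Tendsto (fun n : ℕ => (n : ℝ)⁻¹ * f n) atTop (𝓝 l) := by
  have haffine (b C : ℝ) : Tendsto (fun n : ℕ => b + (n : ℝ)⁻¹ * C) atTop (𝓝 b) := by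
    simpa using (tendsto_inv_atTop_nhds_zero_nat.mul_const C).const_add b
  refine tendsto_order.2 ⟨fun b hb => ?_, fun b hb => ?_⟩
  · filter_upwards [(haffine l (-D)).eventually_const_lt hb, eventually_gt_atTop 0] with n hn hn₀
    have hn₀' : (0 : ℝ) < n := Nat.cast_pos.2 hn₀
    calc b < l + (n : ℝ)⁻¹ * (-D) := hn
      _ = (n : ℝ)⁻¹ * (n * l - D) := by field_simp; ring
      _ ≤ (n : ℝ)⁻¹ * f n := mul_le_mul_of_nonneg_left (hlow n) (inv_nonneg.2 hn₀'.le)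
  · obtain ⟨C, hC⟩ := hup ((b - l) / 2) (half_pos (sub_pos.2 hb))
    have hmid : l + (b - l) / 2 < b := by linarith
    filter_upwards [(haffine _ C).eventually_lt_const hmid, eventually_gt_atTop 0] with n hn hn₀
    have hn₀' : (0 : ℝ) < n := Nat.cast_pos.2 hn₀
    calc (n : ℝ)⁻¹ * f n ≤ (n : ℝ)⁻¹ * ((l + (b - l) / 2) * n + C) :=
          mul_le_mul_of_nonneg_left (hC n) (inv_nonneg.2 hn₀'.le)
      _ = l + (b - l) / 2 + (n : ℝ)⁻¹ * C := by field_simp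
      _ < b := hn

end GrowthRateCriteria

section Assembly

variable {V : Type*} [NormedAddCommGroup V] [InnerProductSpace ℝ V]
  {ν ν₀ ν₁ : Measure (V →L[ℝ] V)} {m M l l' B : ℝ} {u : V → ℝ} {e : V} {W : Submodule ℝ V}

lemma IsSlow.exists_isSlow_mixture [MeasurableSpace V] [BorelSpace V] {c c' : ℝ}
    (hslow : IsSlow ν₀ W c) (h₀ : IsBilipschitzLaw ν₀ m M)
    (h₁ : IsBilipschitzLaw ν₁ m M) (hc : c < c') :
    ∃ ε > 0, ∀ t, 0 ≤ t → t ≤ 1 → t < ε → IsSlow (mixture t ν₀ ν₁) W c' := by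
  obtain ⟨α, C, T, hα₁, hT, hadd⟩ := hslow
  obtain ⟨ε, hε, hgauge⟩ := hT.exists_isGauge_mixture h₀ h₁ hc
  exact ⟨ε, hε, fun t ht ht₁ htε => ⟨α, C, T, hα₁, hgauge t ht ht₁ htε, hadd⟩⟩

variable [FiniteDimensional ℝ V]

lemma meanLog_map_compression_le [Nontrivial V] (h : IsBilipschitzLaw ν m M)
    (hW : ∀ᵐ A ∂ν, A ∈ preserving W) (n : ℕ) {e : Wᗮ} (he : ‖e‖ = 1) :
    meanLog (ν.map (compression W)) n e ≤ ∫ A, Real.log ‖A‖ ∂(convPow ν n) := by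
  have := h.prob
  have hn := h.convPow n
  have he₀ : e ≠ 0 := norm_ne_zero_iff.1 (by simp [he])
  have hmeas := (continuous_compression W).measurable.aemeasurable (μ := convPow ν n)
  have hint := ((h.map_compression hW).convPow n).integrable_log_norm_apply he₀
  rw [meanLog]
  rw [← map_compression_convPow hW] at hint ⊢
  rw [integral_map hmeas (measurable_log_norm_apply e).aestronglyMeasurable]
  refine integral_mono_ae ((integrable_map_measure hint.1 hmeas).1 hint) hn.integrable_log_norm ?_
  have hbilip := ((h.map_compression hW).convPow n).ae_mem
  rw [← map_compression_convPow hW] at hbilip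
  filter_upwards [ae_of_ae_map hmeas hbilip] with A hA
  refine Real.log_le_log
    (norm_pos_iff.2 (apply_ne_zero_of_mem_bilipschitz hn.pos hA he₀)) ?_
  exact (norm_compression_apply_le W A e).trans (A.unit_le_opNorm e he.le)

variable [MeasurableSpace V] [BorelSpace V]

lemma IsCorrector.le_of_hasUniformGrowth (hu : IsCorrector ν l' B u) (h : IsBilipschitzLaw ν m M)
    (hl : HasUniformGrowth ν l) (he : e ≠ 0) : l ≤ l' := by
  refine le_of_forall_lt fun c hc => ?_
  obtain ⟨c', hcc', hc'⟩ := exists_between hc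
  refine hcc'.trans_le (not_lt.1 fun hlt => ?_)
  obtain ⟨n, hn, hgrow⟩ := hl c' hc'
  have hgap : 0 < n * (c' - l') := mul_pos (Nat.cast_pos.2 hn) (sub_pos.2 hlt)
  obtain ⟨k, hk⟩ := exists_nat_gt (2 * B / (n * (c' - l')))
  rw [div_lt_iff₀ hgap] at hk
  have hlow := add_log_norm_le_meanLog_mul h hgrow k he
  have hup := (abs_le.1 (hu.abs_meanLog_sub_le h (k * n) he)).2
  push_cast at hup
  linarith

lemma IsSlow.exists_integral_log_norm_le [Nontrivial V] {c L η : ℝ} {u : Wᗮ → ℝ}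
    (h : IsBilipschitzLaw ν m M) (hW : ∀ᵐ A ∂ν, A ∈ preserving W) (hslow : IsSlow ν W c)
    (hcL : c < L) (hu : IsCorrector (ν.map (compression W)) L B u) (hη : 0 < η) :
    ∃ C, ∀ n : ℕ, ∫ A, Real.log ‖A‖ ∂(convPow ν n) ≤ (L + η) * n + C := by
  obtain ⟨α, C, T, hα₁, hT, hadd⟩ := hslow
  have hB : 0 ≤ B := (abs_nonneg _).trans (hu.abs_apply_le 0)
  set b := |Real.log m| + |Real.log M| + 2 * B
  have hb : 0 ≤ b := by positivity
  obtain ⟨s, hs, hs₁, hsb, hsη⟩ := exists_small_exponent (B := b) (half_pos hη)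
  have hαs : α * s ≤ s := mul_le_of_le_one_left hs.le hα₁
  have hgauge := hu.isGauge (h.map_compression hW) (mul_pos hT.exponent_pos hs)
    ((mul_le_mul_of_nonneg_right hαs hb).trans hsb)
    ((mul_le_mul_of_nonneg_right hαs (sq_nonneg b)).trans hsη)
  obtain ⟨K, -, hK⟩ := exists_isGauge_combinedGauge (c := L + η) h hW (hαs.trans hs₁)
    (hT.rpow h hs hs₁) (rpow_add_le_of_subadditive hT.nonneg hadd hs.le hs₁) hgauge
    (by linarith) (by linarith)
  simp only [Set.mem_univ, Set.ofPred_true] at hK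
  exact hK.exists_integral_log_norm_le h

lemma IsSlow.hasGrowthRate_log_norm [Nontrivial V] {c L : ℝ} {u : Wᗮ → ℝ}
    (h : IsBilipschitzLaw ν m M) (hW : ∀ᵐ A ∂ν, A ∈ preserving W) (hslow : IsSlow ν W c)
    (hcL : c < L) (hu : IsCorrector (ν.map (compression W)) L B u) {e : Wᗮ} (he : ‖e‖ = 1) :
    HasGrowthRate (fun A : V →L[ℝ] V => Real.log ‖A‖) ν L := by
  refine tendsto_inv_mul_of_linear_bounds (D := 2 * B) (fun n => ?_)
    fun η hη => hslow.exists_integral_log_norm_le h hW hcL hu hη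
  have he₀ : e ≠ 0 := norm_ne_zero_iff.1 (by simp [he])
  have hlow := (abs_le.1 (hu.abs_meanLog_sub_le (h.map_compression hW) n he₀)).1
  rw [he, Real.log_one] at hlow
  linarith [meanLog_map_compression_le h hW n he]

/-- The hypothesis `hsupp` says that the support of `ν₁` is contained in that of `ν₀`. -/
theorem exists_hasGrowthRate_mixture_eq_tsum [Nontrivial V] {l₁₂ : ℝ}
    (h₀ : IsBilipschitzLaw ν₀ m M) (h₁ : IsBilipschitzLaw ν₁ m M)
    (hsupp : ∀ F : Set (V →L[ℝ] V), IsClosed F → (∀ᵐ A ∂ν₀, A ∈ F) → ∀ᵐ A ∂ν₁, A ∈ F)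
    (hd : 2 ≤ Module.finrank ℝ V) (hl : HasGrowthRate (fun A => Real.log ‖A‖) ν₀ l)
    (hl₁₂ : HasGrowthRate (fun A => Real.log (areaNorm A)) ν₀ l₁₂) (hgap : l₁₂ < 2 * l) :
    ∃ ε, 0 < ε ∧ ε ≤ 1 ∧ ∃ a : ℕ → ℝ, (Summable fun k => |a k| * ε ^ k) ∧
      ∀ t, 0 ≤ t → t < ε →
        HasGrowthRate (fun A => Real.log ‖A‖) (mixture t ν₀ ν₁) (∑' k, a k * t ^ k) := by
  obtain ⟨W, hW₀, ⟨c, hc, hslow⟩, hWtop, hgrowth⟩ :=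
    exists_isSlow_hasUniformGrowth_compression h₀ hl
  have hW₁ := hsupp _ (isClosed_preserving W) hW₀
  obtain ⟨α, K, ρ, hcontr⟩ := exists_isMeanContracting_compression h₀ hW₀ hd hl₁₂ hgrowth hgap
  obtain ⟨e, he⟩ : ∃ e : Wᗮ, ‖e‖ = 1 := by
    have := Submodule.nontrivial_iff_ne_bot.2 (mt Submodule.orthogonal_eq_bot_iff.1 hWtop)
    exact exists_norm_eq Wᗮ zero_le_one
  have he₀ : e ≠ 0 := norm_ne_zero_iff.1 (by simp [he])
  obtain ⟨ε, hε, hε₁, a, ha, hcorr⟩ := hcontr.exists_isCorrector_mixture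
    (h₀.map_compression hW₀) (h₁.map_compression hW₁) he₀
  have hla : l ≤ ∑' k, a k * (0 : ℝ) ^ k := by
    obtain ⟨u, B, hu⟩ := hcorr 0 le_rfl hε
    rw [mixture_zero] at hu
    exact hu.le_of_hasUniformGrowth (h₀.map_compression hW₀) hgrowth he₀
  obtain ⟨c', hcc', hc'⟩ := exists_between hc
  obtain ⟨ε₁, hε₁₀, hrate⟩ := Metric.eventually_nhds_iff.1
    ((continuousAt_tsum_mul_pow hε ha).eventually_const_lt (hc'.trans_le hla))
  obtain ⟨ε₂, hε₂₀, hslow'⟩ := hslow.exists_isSlow_mixture h₀ h₁ hcc'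
  refine ⟨min ε (min ε₁ ε₂), by positivity, (min_le_left _ _).trans hε₁, a,
    ha.of_nonneg_of_le (fun k => by positivity) fun k => ?_, fun t ht htε => ?_⟩
  · gcongr
    exact min_le_left _ _
  obtain ⟨htε₀, htε₁, htε₂⟩ : t < ε ∧ t < ε₁ ∧ t < ε₂ := by simpa only [lt_min_iff] using htε
  have ht₁ : t ≤ 1 := htε₀.le.trans hε₁
  obtain ⟨u, B, hu⟩ := hcorr t ht htε₀
  rw [← map_mixture (continuous_compression W).measurable] at hu
  exact (hslow' t ht ht₁ htε₂).hasGrowthRate_log_norm (h₀.mixture h₁ ht ht₁)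
    (ae_mixture hW₀ hW₁) (hrate (by rwa [Real.dist_0_eq_abs, abs_of_nonneg ht])) hu he

end Assembly

section GeneralLinearGroup

lemma continuous_glCLM : Continuous (glCLM : GLd d → Ed d →L[ℝ] Ed d) :=
  (LinearMap.continuous_of_finiteDimensional
    (Matrix.toEuclideanCLM (n := Fin d) (𝕜 := ℝ)).toAlgEquiv.toLinearMap).comp Units.continuous_val

lemma glCLM_mul (g h : GLd d) : glCLM (g * h) = glCLM g * glCLM h :=
  map_mul Matrix.toEuclideanCLM (g : Matrix (Fin d) (Fin d) ℝ) h

lemma glCLM_one : glCLM (1 : GLd d) = 1 :=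
  map_one Matrix.toEuclideanCLM

instance secondCountableTopology_GLd : SecondCountableTopology (GLd d) := by
  have : SecondCountableTopology (Matrix (Fin d) (Fin d) ℝ) :=
    inferInstanceAs (SecondCountableTopology (Fin d → Fin d → ℝ))
  have : SecondCountableTopology (Matrix (Fin d) (Fin d) ℝ)ᵐᵒᵖ :=
    (MulOpposite.opHomeomorph
      (M := Matrix (Fin d) (Fin d) ℝ)).symm.isInducing.secondCountableTopology
  exact Units.isEmbedding_embedProduct.isInducing.secondCountableTopology

variable {μ μ₀ μ₁ : Measure (GLd d)} {S : Set (GLd d)} {l : ℝ}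

lemma mconvN_eq_convPow (μ : Measure (GLd d)) [SFinite μ] (n : ℕ) : mconvN μ n = convPow μ n := by
  induction n with
  | zero => rfl
  | succ n ih =>
    rcases eq_or_ne n 0 with rfl | hn
    · exact (convPow_one μ).symm
    · rw [mconvN, if_neg hn, ih, convPow_succ]; rfl

lemma integral_glCLM_mconvN (μ : Measure (GLd d)) [IsProbabilityMeasure μ]
    {f : (Ed d →L[ℝ] Ed d) → ℝ} (hf : Measurable f) (n : ℕ) :
    ∫ g, f (glCLM g) ∂(mconvN μ n) = ∫ A, f A ∂(convPow (μ.map glCLM) n) := by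
  rw [mconvN_eq_convPow, ← map_convPow (K := ⊤) continuous_glCLM.measurable MeasurableSet.univ
      (Eventually.of_forall fun _ => Submonoid.mem_top _) glCLM_one
      (fun g _ h _ => glCLM_mul g h) n,
    integral_map continuous_glCLM.measurable.aemeasurable hf.aestronglyMeasurable]

lemma HasGrowthRate.L1_eq [IsProbabilityMeasure μ]
    (h : HasGrowthRate (fun A => Real.log ‖A‖) (μ.map glCLM) l) : L1 μ = l := by
  refine Tendsto.limUnder_eq (h.congr fun n => ?_)
  exact congrArg ((n : ℝ)⁻¹ * ·) (integral_glCLM_mconvN μ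
    (Real.measurable_log.comp measurable_norm) n).symm

lemma HasGrowthRate.L12_eq [IsProbabilityMeasure μ]
    (h : HasGrowthRate (fun A => Real.log (areaNorm A)) (μ.map glCLM) l) : L12 μ = l := by
  refine Tendsto.limUnder_eq (h.congr fun n => ?_)
  exact congrArg ((n : ℝ)⁻¹ * ·) (integral_glCLM_mconvN μ
    (Real.measurable_log.comp measurable_areaNorm) n).symm

lemma ae_map_glCLM_mem_iff {F : Set (Ed d →L[ℝ] Ed d)} (hF : IsClosed F) :
    (∀ᵐ A ∂(μ.map glCLM), A ∈ F) ↔ ∀ᵐ g ∂μ, glCLM g ∈ F :=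
  ae_map_iff continuous_glCLM.measurable.aemeasurable hF.measurableSet

lemma exists_isBilipschitzLaw_map_glCLM (hS : IsCompact S) :
    ∃ m M : ℝ, ∀ μ : Measure (GLd d), IsProbabilityMeasure μ → μ Sᶜ = 0 →
      IsBilipschitzLaw (μ.map glCLM) m M := by
  obtain ⟨M₁, hM₁⟩ := (hS.image (continuous_glCLM (d := d)).norm).bddAbove
  obtain ⟨M₂, hM₂⟩ := (hS.image (continuous_glCLM.comp continuous_inv).norm).bddAbove
  set M := max 1 (max M₁ M₂)
  have hM : 1 ≤ M := le_max_left _ _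
  have hM₀ : 0 < M := zero_lt_one.trans_le hM
  refine ⟨M⁻¹, M, fun μ hμ hμS => ⟨Measure.isProbabilityMeasure_map
    continuous_glCLM.measurable.aemeasurable, inv_pos.2 hM₀, inv_le_one_of_one_le₀ hM, hM,
    (ae_map_glCLM_mem_iff isClosed_bilipschitz).2 ?_⟩⟩
  filter_upwards [mem_ae_iff.2 hμS] with g hg v
  have hg₁ : ‖glCLM g‖ ≤ M :=
    (hM₁ ⟨g, hg, rfl⟩).trans ((le_max_left _ _).trans (le_max_right _ _))
  have hg₂ : ‖glCLM g⁻¹‖ ≤ M :=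
    (hM₂ ⟨g, hg, rfl⟩).trans ((le_max_right _ _).trans (le_max_right _ _))
  refine ⟨(inv_mul_le_iff₀ hM₀).2 ?_, (glCLM g).le_of_opNorm_le hg₁ v⟩
  simpa only [glCLM_leftInv] using (glCLM g⁻¹).le_of_opNorm_le hg₂ (glCLM g v)

lemma ae_map_glCLM_mem_of_isSupport (hS : IsSupport μ₀ S) (hμ₁ : μ₁ Sᶜ = 0)
    {F : Set (Ed d →L[ℝ] Ed d)} (hF : IsClosed F) (h : ∀ᵐ A ∂(μ₀.map glCLM), A ∈ F) :
    ∀ᵐ A ∂(μ₁.map glCLM), A ∈ F := by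
  rw [ae_map_glCLM_mem_iff hF] at h ⊢
  filter_upwards [mem_ae_iff.2 hμ₁] with g hg
  by_contra hgF
  exact (hS.2 g hg _ (hF.isOpen_compl.preimage continuous_glCLM) hgF).ne' h

end GeneralLinearGroup

end RandomMatrixProduct

open RandomMatrixProduct

theorem analyticity_bernoulli_full_support
    (d : ℕ) (hd : 2 ≤ d) (S : Set (GLd d)) (hS : IsCompact S)
    (μ₀ μ₁ : Measure (GLd d)) [IsProbabilityMeasure μ₀] [IsProbabilityMeasure μ₁]
    (hsupp : IsSupport μ₀ S) (hμ₁S : μ₁ Sᶜ = 0)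
    (hgap : L2 μ₀ < L1 μ₀) :
    ∃ ε : ℝ, 0 < ε ∧ ε ≤ 1 ∧ ∃ a : ℕ → ℝ,
      (Summable fun k : ℕ => |a k| * ε ^ k) ∧
      ∀ t : ℝ, 0 ≤ t → t < ε →
        L1 (Real.toNNReal (1 - t) • μ₀ + Real.toNNReal t • μ₁ : Measure (GLd d)) = ∑' k : ℕ, a k * t ^ k := by
  obtain ⟨m, M, hlaw⟩ := exists_isBilipschitzLaw_map_glCLM hS
  have h₀ := hlaw μ₀ inferInstance hsupp.1
  have h₁ := hlaw μ₁ inferInstance hμ₁S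
  have hfin : 2 ≤ Module.finrank ℝ (Ed d) := by rwa [finrank_euclideanSpace_fin]
  have : Nontrivial (Ed d) := Module.nontrivial_of_finrank_pos (R := ℝ) (zero_lt_two.trans_le hfin)
  obtain ⟨l, hl⟩ := exists_hasGrowthRate_log_norm h₀
  obtain ⟨l₁₂, hl₁₂⟩ := exists_hasGrowthRate_log_areaNorm hfin h₀
  rw [L2, hl.L1_eq, hl₁₂.L12_eq, sub_lt_iff_lt_add, ← two_mul] at hgap
  obtain ⟨ε, hε, hε₁, a, ha, hrate⟩ := exists_hasGrowthRate_mixture_eq_tsum h₀ h₁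
    (fun _ => ae_map_glCLM_mem_of_isSupport hsupp hμ₁S) hfin hl hl₁₂ hgap
  refine ⟨ε, hε, hε₁, a, ha, fun t ht htε => ?_⟩
  have := isProbabilityMeasure_mixture (μ := μ₀) (ν := μ₁) ht (htε.le.trans hε₁)
  have hmix := hrate t ht htε
  rw [← map_mixture continuous_glCLM.measurable] at hmix
  exact hmix.L1_eq

end
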